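/- arXiv:1304.6917 — 2 statements merged into one kernel-verified Lean document; each statement's English description precedes it below -/
import Mathlib

section
/- Let k, r, t be positive integers with k ≥ 2, max{2, (k−1)/2} ≤ t ≤ k, 1 ≤ r ≤ k and r + t ≥ k, set s = rt, and define κ = r(t+1) − (1/2)(t+r−k)(t+r−k−1 + (2r−2)/(t−1)). Then limsup_{X→∞} (log J_{s+r,k}(X))/(log X) ≤ 2(s+r) − κ. -/
/-- Number of integral solutions of the Vinogradov system
of degree k in 2s variables, all lying in [1, X]. -/
noncomputable def Jcount (s k : ℕ) (X : ℝ) : ℕ :=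
  Set.ncard {xy : (Fin s → ℤ) × (Fin s → ℤ) |
    (∀ i, 1 ≤ xy.1 i ∧ (xy.1 i : ℝ) ≤ X) ∧
    (∀ i, 1 ≤ xy.2 i ∧ (xy.2 i : ℝ) ≤ X) ∧
    ∀ j ∈ Finset.Icc 1 k, ∑ i, ((xy.1 i) ^ j - (xy.2 i) ^ j) = 0}

/-- The exponent kappa = r(t+1) - (1/2)(t+r-k)(t+r-k-1+(2r-2)/(t-1)). -/
noncomputable def kappa (k r t : ℕ) : ℝ :=
  (r : ℝ) * ((t : ℝ) + 1) -
    (1/2) * ((t : ℝ) + r - k) * ((t : ℝ) + r - k - 1 + (2*(r:ℝ) - 2)/((t:ℝ) - 1))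

namespace Vinogradov

open Polynomial Finset

section TaylorNormalForm

variable {R : Type*} [CommRing R]

/-- The matrix of Taylor coefficients of orders `1, …, l` at `ξ` of a polynomial curve in `l`
coordinates. -/
noncomputable def taylorMatrix {l : ℕ} (Ψ : Fin l → R[X]) (ξ : R) : Matrix (Fin l) (Fin l) R :=
  Matrix.of fun i j => (taylor ξ (Ψ i)).coeff (j + 1)

lemma exists_taylor_normal_form {l : ℕ} (Ψ : Fin l → R[X]) (ξ : R)
    (h : IsUnit (taylorMatrix Ψ ξ).det) :
    ∃ (B : Matrix (Fin l) (Fin l) R) (c : Fin l → R) (q : Fin l → R[X]),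
      ∀ i, taylor ξ (∑ m, C (B i m) * Ψ m) = C (c i) + X ^ ((i : ℕ) + 1) + X ^ (l + 1) * q i := by
  set W := taylorMatrix Ψ ξ with hW
  have key : ∀ i, ∃ q : R[X], taylor ξ (∑ m, C (W⁻¹ i m) * Ψ m) =
      C ((taylor ξ (∑ m, C (W⁻¹ i m) * Ψ m)).coeff 0) + X ^ ((i : ℕ) + 1) + X ^ (l + 1) * q := by
    intro i
    set g := taylor ξ (∑ m, C (W⁻¹ i m) * Ψ m) with hg
    have hcoeff : ∀ j : Fin l, g.coeff (j + 1) = if i = j then 1 else 0 := by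
      intro j
      have h1 : (W⁻¹ * W) i j = (1 : Matrix (Fin l) (Fin l) R) i j := by
        rw [Matrix.nonsing_inv_mul _ h]
      rw [Matrix.mul_apply, Matrix.one_apply] at h1
      rw [← h1, hg, map_sum, finsetSum_coeff]
      refine Finset.sum_congr rfl fun m _ => ?_
      rw [taylor_mul, taylor_C, coeff_C_mul, hW]
      rfl
    have hdvd : X ^ (l + 1) ∣ g - (C (g.coeff 0) + X ^ ((i : ℕ) + 1)) := by
      rw [X_pow_dvd_iff]
      intro d hd
      rcases d with _ | d
      · simp
      · have := hcoeff ⟨d, by omega⟩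
        simp only [Fin.ext_iff] at this
        rw [coeff_sub, coeff_add, this, coeff_C, coeff_X_pow]
        simp [eq_comm]
    obtain ⟨q, hq⟩ := hdvd
    exact ⟨q, by rw [← hq]; ring⟩
  choose q hq using key
  exact ⟨W⁻¹, _, q, hq⟩

lemma eval_of_taylor_normal_form {l : ℕ} {Ψ : Fin l → R[X]} {ξ : R}
    {B : Matrix (Fin l) (Fin l) R} {c : Fin l → R} {q : Fin l → R[X]}
    (h : ∀ i, taylor ξ (∑ m, C (B i m) * Ψ m) = C (c i) + X ^ ((i : ℕ) + 1) + X ^ (l + 1) * q i)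
    (i : Fin l) (y : R) :
    ∑ m, B i m * (Ψ m).eval (ξ + y) = c i + y ^ ((i : ℕ) + 1) + y ^ (l + 1) * (q i).eval y := by
  have := congrArg (eval y) (h i)
  rw [taylor_eval] at this
  simpa [eval_finsetSum, add_comm] using this

end TaylorNormalForm

section MonomialMatrix

variable {F : Type*} [Field F]

lemma det_taylorMatrix_monomial (k : ℕ) (r : F) :
    (taylorMatrix (fun i : Fin k => (X : F[X]) ^ ((i : ℕ) + 1)) r).det = 1 := by
  rw [Matrix.det_of_isLowerTriangular]
  · refine Finset.prod_eq_one fun i _ => ?_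
    simp [taylorMatrix, coeff_X_add_C_pow]
  · intro i j hij
    have hij' : (i : ℕ) < j := hij
    simp [taylorMatrix, coeff_X_add_C_pow, Nat.choose_eq_zero_of_lt (Nat.succ_lt_succ hij')]

/-- The curve `(y ^ (d + 1), …, y ^ (d + l))` is nondegenerate at every nonzero point as soon as the
exponents are nonzero in the field. -/
lemma det_taylorMatrix_tail_ne_zero (d l : ℕ) (r : F) (hr : r ≠ 0)
    (hchar : ∀ m : ℕ, 0 < m → m ≤ d + l → (m : F) ≠ 0) :
    (taylorMatrix (fun i : Fin l => (X : F[X]) ^ (d + (i : ℕ) + 1)) r).det ≠ 0 := by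
  intro hdet
  obtain ⟨v, hv, hv0⟩ := Matrix.exists_vecMul_eq_zero_iff.mpr hdet
  apply hv
  set P : F[X] := ∑ i : Fin l, C (v i) * X ^ (d + (i : ℕ) + 1) with hP
  have hc : ∀ j : Fin l, (taylor r P).coeff (j + 1) = 0 := by
    intro j
    have := congrFun hv0 j
    rw [Matrix.vecMul, dotProduct] at this
    rw [hP, map_sum, finsetSum_coeff]
    rw [show (0 : Fin l → F) j = 0 from rfl] at this
    rw [← this]
    refine Finset.sum_congr rfl fun m _ => ?_
    rw [taylor_mul, taylor_C, coeff_C_mul]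
    rfl
  have hdvd : X ^ (l + 1) ∣ taylor r P - C ((taylor r P).coeff 0) := by
    rw [X_pow_dvd_iff]
    intro e he
    rcases e with _ | e
    · simp
    · rw [coeff_sub, hc ⟨e, by omega⟩]; simp
  obtain ⟨q, hq⟩ := hdvd
  have hPq : P - C ((taylor r P).coeff 0) = (X - C r) ^ (l + 1) * taylor (-r) q := by
    have := congrArg (taylor (-r)) hq
    rw [map_sub, taylor_taylor, taylor_C, taylor_mul, taylor_pow, taylor_X] at this
    simpa [sub_eq_add_neg] using this
  have hderiv : (X - C r) ^ l ∣ derivative P := by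
    have h1 : derivative P = derivative ((X - C r) ^ (l + 1) * taylor (-r) q) := by
      rw [← hPq]; simp
    rw [h1, derivative_mul, derivative_X_sub_C_pow]
    refine dvd_add ?_ ?_
    · simp only [Nat.add_sub_cancel]
      exact Dvd.dvd.mul_right (Dvd.dvd.mul_left dvd_rfl _) _
    · exact Dvd.dvd.mul_right (pow_dvd_pow _ (Nat.le_succ l)) _
  set Q : F[X] := ∑ i : Fin l, C (v i * ((d + (i : ℕ) + 1 : ℕ) : F)) * X ^ (i : ℕ) with hQ
  have hPQ : derivative P = X ^ d * Q := by
    rw [hP, hQ, derivative_sum, Finset.mul_sum]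
    refine Finset.sum_congr rfl fun i _ => ?_
    rw [derivative_C_mul_X_pow, show d + (i : ℕ) + 1 - 1 = d + i by omega, pow_add]
    ring
  have hcop : IsCoprime ((X - C r) ^ l) ((X : F[X]) ^ d) := by
    apply IsCoprime.pow
    have := isCoprime_X_sub_C_of_isUnit_sub (R := F) (a := r) (b := 0) (by simpa using hr)
    simpa using this
  have hdQ : (X - C r) ^ l ∣ Q := by
    rw [hPQ] at hderiv
    exact hcop.dvd_of_dvd_mul_left hderiv
  have hQdeg : Q.degree < l := by
    rw [hQ]
    refine (degree_sum_fin_lt (fun i : Fin l => v i * ((d + (i : ℕ) + 1 : ℕ) : F)))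
  have hQ0 : Q = 0 := by
    by_contra hne
    have := degree_le_of_dvd hdQ hne
    rw [degree_pow, degree_X_sub_C] at this
    simp at this
    exact absurd (lt_of_le_of_lt this hQdeg) (lt_irrefl _)
  ext i
  have h2 : Q.coeff i = v i * ((d + (i : ℕ) + 1 : ℕ) : F) := by
    rw [hQ, finsetSum_coeff, Finset.sum_eq_single i]
    · rw [coeff_C_mul, coeff_X_pow, if_pos rfl, mul_one]
    · intro b _ hb
      rw [coeff_C_mul, coeff_X_pow, if_neg (fun h => hb (Fin.ext h.symm)), mul_zero]
    · simp
  rw [hQ0, coeff_zero] at h2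
  have h3 := hchar (d + i + 1) (by omega) (by omega)
  simpa [h3] using (mul_eq_zero.mp h2.symm).resolve_right h3

end MonomialMatrix

section PadicCurves

variable {p : ℕ} [hp : Fact p.Prime]

/-- A polynomial curve over `ℤ_[p]` congruent to the moment curve `(x, x ^ 2, …, x ^ k)` modulo
`p`. -/
def IsMomentLike (p : ℕ) [Fact p.Prime] {k : ℕ} (φ : Fin k → ℤ_[p][X]) : Prop :=
  ∀ j, ∃ h : ℤ_[p][X], φ j = X ^ ((j : ℕ) + 1) + C (p : ℤ_[p]) * h

lemma isUnit_iff_toZMod_ne_zero (x : ℤ_[p]) : IsUnit x ↔ PadicInt.toZMod x ≠ 0 := by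
  rw [← not_iff_not, not_not, ← RingHom.mem_ker, PadicInt.ker_toZMod, IsLocalRing.mem_maximalIdeal,
    mem_nonunits_iff]

lemma map_toZMod_taylorMatrix {l : ℕ} (Ψ : Fin l → ℤ_[p][X]) (ξ : ℤ_[p]) :
    PadicInt.toZMod (taylorMatrix Ψ ξ).det =
      (taylorMatrix (fun i => (Ψ i).map PadicInt.toZMod) (PadicInt.toZMod ξ)).det := by
  rw [RingHom.map_det]
  congr 1
  ext i j
  simp only [taylorMatrix, RingHom.mapMatrix_apply, Matrix.map_apply, Matrix.of_apply]
  rw [← map_taylor, coeff_map]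

lemma IsMomentLike.map_toZMod {k : ℕ} {φ : Fin k → ℤ_[p][X]} (hφ : IsMomentLike p φ) (j : Fin k) :
    (φ j).map PadicInt.toZMod = X ^ ((j : ℕ) + 1) := by
  obtain ⟨h, hh⟩ := hφ j
  simp [hh]

lemma IsMomentLike.isUnit_det {k : ℕ} {φ : Fin k → ℤ_[p][X]} (hφ : IsMomentLike p φ) (ξ : ℤ_[p]) :
    IsUnit (taylorMatrix φ ξ).det := by
  rw [isUnit_iff_toZMod_ne_zero, map_toZMod_taylorMatrix]
  simp only [hφ.map_toZMod]
  rw [det_taylorMatrix_monomial]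
  exact one_ne_zero

/-- Rescaling a nondegenerate curve near a point produces a curve close to the moment curve. -/
lemma exists_rescaled_curve {l : ℕ} (Ψ : Fin l → ℤ_[p][X]) (ξ : ℤ_[p])
    (h : IsUnit (taylorMatrix Ψ ξ).det) {a : ℕ} (ha : 1 ≤ a) :
    ∃ (B : Matrix (Fin l) (Fin l) ℤ_[p]) (c : Fin l → ℤ_[p]) (φ : Fin l → ℤ_[p][X]),
      IsMomentLike p φ ∧ ∀ i z, ∑ m, B i m * (Ψ m).eval (ξ + (p : ℤ_[p]) ^ a * z) =
        c i + (p : ℤ_[p]) ^ (a * ((i : ℕ) + 1)) * (φ i).eval z := by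
  obtain ⟨B, c, q, hB⟩ := exists_taylor_normal_form Ψ ξ h
  refine ⟨B, c, fun i => X ^ ((i : ℕ) + 1) + C (p : ℤ_[p]) *
    (C ((p : ℤ_[p]) ^ (a * (l - i) - 1)) * X ^ (l + 1) * (q i).comp (C ((p : ℤ_[p]) ^ a) * X)),
    fun i => ⟨_, rfl⟩, fun i z => ?_⟩
  rw [eval_of_taylor_normal_form hB]
  have hil := i.2
  have h1 : a * (l + 1) = a * ((i : ℕ) + 1) + 1 + (a * (l - i) - 1) := by
    have h2 : 1 ≤ a * (l - i) := Nat.mul_pos ha (by omega)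
    have h3 : a * (l + 1) = a * (i + 1) + a * (l - i) := by
      rw [← mul_add]; congr 1; omega
    omega
  simp only [eval_add, eval_mul, eval_pow, eval_X, eval_C, eval_comp, mul_pow, ← pow_mul]
  rw [h1, pow_add, pow_add]
  ring

/-- Normalisation of a moment-like curve of degree `k` at `η`; its last `l` coordinates form a
nondegenerate curve at every point not congruent to `η`. -/
lemma IsMomentLike.exists_centred {k : ℕ} {φ : Fin k → ℤ_[p][X]} (hφ : IsMomentLike p φ)
    (hkp : k < p) (η : ℤ_[p]) :
    ∃ (A : Matrix (Fin k) (Fin k) ℤ_[p]) (c : Fin k → ℤ_[p]) (χ : Fin k → ℤ_[p][X]),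
      (∀ i y, ∑ m, A i m * (φ m).eval (η + y) = c i + (χ i).eval y) ∧
      (∀ (i : Fin k) y, y ^ ((i : ℕ) + 1) ∣ (χ i).eval y) ∧
      ∀ (d l : ℕ) (hdl : d + l = k) (y : ℤ_[p]), IsUnit y →
        IsUnit (taylorMatrix (fun i : Fin l => χ ⟨d + i, by omega⟩) y).det := by
  obtain ⟨A, c, q, hA⟩ := exists_taylor_normal_form φ η (hφ.isUnit_det η)
  refine ⟨A, c, fun i => X ^ ((i : ℕ) + 1) + X ^ (k + 1) * q i, fun i y => ?_, fun i y => ?_,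
    fun d l hdl y hy => ?_⟩
  · rw [eval_of_taylor_normal_form hA]; simp [add_assoc]
  · simp only [eval_add, eval_mul, eval_pow, eval_X]
    exact dvd_add dvd_rfl (Dvd.dvd.mul_right (pow_dvd_pow _ (by omega)) _)
  · have hq : ∀ i, (q i).map (PadicInt.toZMod (p := p)) = 0 := by
      intro i
      have h1 := congrArg (Polynomial.map (PadicInt.toZMod (p := p))) (hA i)
      rw [map_taylor, Polynomial.map_sum] at h1
      simp only [Polynomial.map_mul, map_C, hφ.map_toZMod, Polynomial.map_add, Polynomial.map_pow,
        map_X] at h1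
      ext e
      have h2 := congrArg (fun f => coeff f (e + (k + 1))) h1
      rw [coeff_eq_zero_of_natDegree_lt, coeff_add, coeff_add, coeff_C, coeff_X_pow,
        coeff_X_pow_mul, if_neg (by omega), if_neg (by have := i.2; omega)] at h2
      · simpa using h2.symm
      · rw [natDegree_taylor]
        refine lt_of_le_of_lt (natDegree_sum_le_of_forall_le _ _ (n := k) fun m _ => ?_) (by omega)
        exact (natDegree_C_mul_X_pow_le _ _).trans m.2
    rw [isUnit_iff_toZMod_ne_zero, map_toZMod_taylorMatrix]
    simp only [Polynomial.map_mul, Polynomial.map_add, Polynomial.map_pow, map_X, hq, mul_zero,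
      add_zero]
    refine det_taylorMatrix_tail_ne_zero d l _ ((isUnit_iff_toZMod_ne_zero y).mp hy) ?_
    intro m hm hm'
    rw [Ne, ZMod.natCast_eq_zero_iff]
    intro hdiv
    have := Nat.le_of_dvd hm hdiv
    omega

end PadicCurves

section ExponentialSums

variable {p : ℕ} [hp : Fact p.Prime]

section Classes

/-- The residue class of `I` modulo `p ^ a` in `ℤ_[p]`. -/
def InClass (p : ℕ) [Fact p.Prime] (a I : ℕ) (x : ℤ_[p]) : Prop := (p : ℤ_[p]) ^ a ∣ x - I

lemma inClass_natCast {a I m : ℕ} : InClass p a I (m : ℤ_[p]) ↔ m ≡ I [MOD p ^ a] := by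
  rw [InClass, Nat.ModEq.comm, Nat.modEq_iff_dvd]
  have := PadicInt.pow_p_dvd_int_iff (p := p) a ((m : ℤ) - I)
  push_cast at this ⊢
  exact this

lemma inClass_iff_appr {a I : ℕ} (hI : I < p ^ a) (x : ℤ_[p]) :
    InClass p a I x ↔ I = x.appr a := by
  have hx : (p : ℤ_[p]) ^ a ∣ x - x.appr a :=
    Ideal.mem_span_singleton.mp (PadicInt.appr_spec a x)
  constructor
  · intro h
    have h1 : (p : ℤ_[p]) ^ a ∣ ((I : ℕ) : ℤ_[p]) - (x.appr a : ℕ) := by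
      have := dvd_sub hx h
      simpa using this
    have h2 : I ≡ x.appr a [MOD p ^ a] := inClass_natCast.mp h1
    exact Nat.ModEq.eq_of_lt_of_lt h2 hI (PadicInt.appr_lt x a)
  · rintro rfl
    exact hx

open Classical in
/-- The indices whose point lies in a given residue class. -/
noncomputable def cell (p : ℕ) [Fact p.Prime] (S : Finset ℕ) (x : ℕ → ℤ_[p]) (a I : ℕ) :
    Finset ℕ :=
  S.filter fun i => InClass p a I (x i)

lemma mem_cell {S : Finset ℕ} {x : ℕ → ℤ_[p]} {a I i : ℕ} :
    i ∈ cell p S x a I ↔ i ∈ S ∧ InClass p a I (x i) := by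
  classical
  simp [cell]

lemma sum_cell {E : Type*} [AddCommMonoid E] (S : Finset ℕ) (x : ℕ → ℤ_[p]) (a : ℕ) (g : ℕ → E) :
    ∑ I ∈ range (p ^ a), ∑ i ∈ cell p S x a I, g i = ∑ i ∈ S, g i := by
  classical
  rw [← Finset.sum_fiberwise_of_maps_to (s := S) (t := range (p ^ a))
    (g := fun i => (x i).appr a) (fun i _ => Finset.mem_range.mpr (PadicInt.appr_lt _ _))]
  refine Finset.sum_congr rfl fun I hI => Finset.sum_congr ?_ fun _ _ => rfl
  ext i
  rw [mem_cell, Finset.mem_filter, inClass_iff_appr (Finset.mem_range.mp hI), eq_comm]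

lemma sum_range_pow_add {E : Type*} [AddCommMonoid E] (p a m : ℕ) (g : ℕ → E) :
    ∑ K ∈ range (p ^ (a + m)), g K =
      ∑ I ∈ range (p ^ a), ∑ J ∈ range (p ^ m), g (I + p ^ a * J) := by
  rw [pow_add, Finset.sum_comm]
  generalize p ^ a = A
  induction p ^ m with
  | zero => simp
  | succ n ih =>
    rw [Finset.sum_range_succ, ← ih, mul_add, mul_one, Finset.sum_range_add]
    simp [add_comm]

lemma cell_cell {S : Finset ℕ} {x z : ℕ → ℤ_[p]} {a m I J : ℕ}
    (hz : ∀ i ∈ cell p S x a I, x i = I + (p : ℤ_[p]) ^ a * z i) :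
    cell p (cell p S x a I) z m J = cell p S x (a + m) (I + p ^ a * J) := by
  have hp0 : (p : ℤ_[p]) ^ a ≠ 0 := pow_ne_zero _ (by exact_mod_cast hp.1.ne_zero)
  ext i
  rw [mem_cell, mem_cell (a := a + m)]
  constructor
  · rintro ⟨hi, h⟩
    refine ⟨(mem_cell.mp hi).1, ?_⟩
    obtain ⟨w, hw⟩ := h
    refine ⟨w, ?_⟩
    rw [hz i hi, pow_add, mul_assoc, ← hw]
    push_cast
    ring
  · rintro ⟨hi, h⟩
    have hc : i ∈ cell p S x a I := by
      refine mem_cell.mpr ⟨hi, ?_⟩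
      have h1 : (p : ℤ_[p]) ^ a ∣ x i - ((I + p ^ a * J : ℕ) : ℤ_[p]) :=
        (pow_dvd_pow _ (Nat.le_add_right a m)).trans h
      have h2 := dvd_add h1 (Dvd.intro (J : ℤ_[p]) rfl)
      push_cast at h2
      rw [InClass]
      convert h2 using 1
      ring
    refine ⟨hc, ?_⟩
    obtain ⟨w, hw⟩ := h
    refine ⟨w, mul_left_cancel₀ hp0 ?_⟩
    rw [← mul_assoc, ← pow_add, ← hw, hz i hc]
    push_cast
    ring

lemma exists_cell_coordinate (S : Finset ℕ) (x : ℕ → ℤ_[p]) (a I : ℕ) :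
    ∃ z : ℕ → ℤ_[p], ∀ i ∈ cell p S x a I, x i = I + (p : ℤ_[p]) ^ a * z i := by
  have : ∀ i, ∃ w, i ∈ cell p S x a I → x i = I + (p : ℤ_[p]) ^ a * w := by
    intro i
    by_cases hi : i ∈ cell p S x a I
    · obtain ⟨w, hw⟩ := (mem_cell.mp hi).2
      exact ⟨w, fun _ => by rw [← hw]; ring⟩
    · exact ⟨0, fun h => absurd h hi⟩
  choose z hz using this
  exact ⟨z, hz⟩

end Classes

section Phases

instance (M : ℕ) : NeZero (p ^ M) := ⟨pow_ne_zero _ hp.1.ne_zero⟩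

/-- The character `y ↦ exp (2 π i y / p ^ M)` of `ℤ_[p]`. -/
noncomputable def chi (p : ℕ) [Fact p.Prime] (M : ℕ) : AddChar ℤ_[p] ℂ :=
  (ZMod.stdAddChar (N := p ^ M)).compAddMonoidHom
    (PadicInt.toZModPow (p := p) M).toAddMonoidHom

lemma chi_apply (M : ℕ) (y : ℤ_[p]) :
    chi p M y = ZMod.stdAddChar (PadicInt.toZModPow (p := p) M y) := rfl

lemma norm_chi (M : ℕ) (y : ℤ_[p]) : ‖chi p M y‖ = 1 := by
  rw [chi_apply, ZMod.stdAddChar_apply]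
  exact Circle.norm_coe _

lemma chi_eq_one_of_dvd {M : ℕ} {y : ℤ_[p]} (h : (p : ℤ_[p]) ^ M ∣ y) : chi p M y = 1 := by
  have : PadicInt.toZModPow (p := p) M y = 0 := by
    rw [← RingHom.mem_ker, PadicInt.ker_toZModPow, Ideal.mem_span_singleton]
    exact h
  rw [chi_apply, this, AddChar.map_zero_eq_one]

lemma chi_natCast (M n : ℕ) :
    chi p M (n : ℤ_[p]) = Complex.exp (2 * Real.pi * Complex.I * n / (p : ℂ) ^ M) := by
  rw [chi_apply, map_natCast]
  have := ZMod.stdAddChar_coe (N := p ^ M) (n : ℤ)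
  push_cast at this
  exact this

lemma chi_pow_mul {M N : ℕ} (y : ℤ_[p]) : chi p (N + M) ((p : ℤ_[p]) ^ N * y) = chi p M y := by
  obtain ⟨w, hw⟩ := Ideal.mem_span_singleton.mp (PadicInt.appr_spec M y)
  have hy : y = (y.appr M : ℕ) + (p : ℤ_[p]) ^ M * w := by rw [← hw]; ring
  have h1 : chi p M y = chi p M ((y.appr M : ℕ) : ℤ_[p]) := by
    conv_lhs => rw [hy]
    rw [AddChar.map_add_eq_mul, chi_eq_one_of_dvd (Dvd.intro _ rfl), mul_one]
  have h2 : chi p (N + M) ((p : ℤ_[p]) ^ N * y) =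
      chi p (N + M) ((p ^ N * y.appr M : ℕ) : ℤ_[p]) := by
    conv_lhs => rw [hy]
    rw [mul_add, AddChar.map_add_eq_mul]
    refine (congrArg (_ * ·) (chi_eq_one_of_dvd ?_)).trans ?_
    · rw [pow_add]
      exact mul_dvd_mul_left _ (Dvd.intro _ rfl)
    · push_cast
      exact mul_one _
  have hp0 : (p : ℂ) ≠ 0 := by exact_mod_cast hp.1.ne_zero
  rw [h1, h2, chi_natCast, chi_natCast]
  congr 1
  push_cast
  rw [pow_add]
  field_simp

/-- The group of frequencies modulo `p ^ M` in `k` coordinates. -/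
abbrev Freq (p k M : ℕ) : Type := Fin k → ZMod (p ^ M)

/-- The character of `Freq p k M` attached to the point `x` of the curve `φ`. -/
noncomputable def phase {k : ℕ} (φ : Fin k → ℤ_[p][X]) (M : ℕ) (x : ℤ_[p]) (c : Freq p k M) : ℂ :=
  ZMod.stdAddChar (∑ j, c j * PadicInt.toZModPow M ((φ j).eval x))

/-- The exponential sum over the points `x i`, `i ∈ S`, of the curve `φ`. -/
noncomputable def expSum {k : ℕ} (φ : Fin k → ℤ_[p][X]) (M : ℕ) (x : ℕ → ℤ_[p]) (w : ℕ → ℂ)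
    (S : Finset ℕ) (c : Freq p k M) : ℂ :=
  ∑ i ∈ S, w i * phase φ M (x i) c

variable {k : ℕ} (φ : Fin k → ℤ_[p][X]) (M : ℕ)

lemma phase_add (x : ℤ_[p]) (c d : Freq p k M) :
    phase φ M x (c + d) = phase φ M x c * phase φ M x d := by
  simp only [phase, Pi.add_apply, add_mul, Finset.sum_add_distrib, AddChar.map_add_eq_mul]

lemma norm_phase (x : ℤ_[p]) (c : Freq p k M) : ‖phase φ M x c‖ = 1 := by
  rw [phase, ZMod.stdAddChar_apply]
  exact Circle.norm_coe _

/-- Reduction of a `p`-adic frequency vector. -/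
noncomputable def reduce (d : Fin k → ℤ_[p]) : Freq p k M := fun j => PadicInt.toZModPow M (d j)

lemma phase_reduce (x : ℤ_[p]) (d : Fin k → ℤ_[p]) :
    phase φ M x (reduce M d) = chi p M (∑ j, d j * (φ j).eval x) := by
  simp [phase, reduce, chi_apply, map_sum, map_mul]

lemma exists_reduce_eq (c : Freq p k M) : ∃ d : Fin k → ℤ_[p], reduce M d = c := by
  refine ⟨fun j => ((c j).val : ℕ), funext fun j => ?_⟩
  simp [reduce]

end Phases

section Transfer

lemma sum_le_sum_of_translates {V V' : Type*} [Fintype V] [AddCommGroup V] [Fintype V']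
    [Nonempty V'] (ρ : V' → V) (G H : V → ℝ)
    (h : ∀ v, ∑ t, G (v + ρ t) ≤ ∑ t, H (v + ρ t)) : ∑ v, G v ≤ ∑ v, H v := by
  have key : ∀ G : V → ℝ, ∑ v, ∑ t, G (v + ρ t) = Fintype.card V' * ∑ v, G v := by
    intro G
    rw [Finset.sum_comm]
    have : ∀ t, ∑ v, G (v + ρ t) = ∑ v, G v := fun t =>
      Fintype.sum_equiv (Equiv.addRight (ρ t)) _ _ fun _ => rfl
    simp [this]
  have h1 := Finset.sum_le_sum fun v (_ : v ∈ Finset.univ) => h v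
  rw [key, key] at h1
  exact le_of_mul_le_mul_left h1 (by exact_mod_cast Fintype.card_pos)

/-- The decoupling inequality with constant `D` for curves of degree `l`, at scale `p ^ n` and with
exponent `l * (l + 1)`. -/
def DecBound (p : ℕ) [Fact p.Prime] (l n : ℕ) (D : ℝ) : Prop :=
  ∀ φ : Fin l → ℤ_[p][X], IsMomentLike p φ → ∀ (S : Finset ℕ) (x : ℕ → ℤ_[p]) (w : ℕ → ℂ),
    ∑ c, ‖expSum φ (l * n) x w S c‖ ^ (l * (l + 1)) ≤
      D * (p : ℝ) ^ ((n : ℝ) * ((l : ℝ) * (l + 1) / 2 - 1)) *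
        ∑ J ∈ range (p ^ n), ∑ c, ‖expSum φ (l * n) x w (cell p S x n J) c‖ ^ (l * (l + 1))

/-- Decoupling along a family of translations on which the exponential sum behaves like one attached
to a curve of degree `l`. -/
lemma DecBound.transfer {k l M m : ℕ} {D : ℝ} (hD : DecBound p l m D) (φ : Fin k → ℤ_[p][X])
    {ψ : Fin l → ℤ_[p][X]} (hψ : IsMomentLike p ψ) (S : Finset ℕ) (x z : ℕ → ℤ_[p]) (w : ℕ → ℂ)
    (ρ : Freq p l (l * m) → Freq p k M) (κ : Freq p l (l * m) → ℂ) (hκ : ∀ t, ‖κ t‖ = 1)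
    (hρ : ∀ i ∈ S, ∀ t, phase φ M (x i) (ρ t) = κ t * phase ψ (l * m) (z i) t)
    (B : Freq p k M → ℝ) (hB0 : ∀ v, 0 ≤ B v) (hB : ∀ v t, B (v + ρ t) = B v) :
    ∑ v, ‖expSum φ M x w S v‖ ^ (l * (l + 1)) * B v ≤
      D * (p : ℝ) ^ ((m : ℝ) * ((l : ℝ) * (l + 1) / 2 - 1)) *
        ∑ J ∈ range (p ^ m),
          ∑ v, ‖expSum φ M x w (cell p S z m J) v‖ ^ (l * (l + 1)) * B v := by
  rw [Finset.sum_comm (s := range (p ^ m)), Finset.mul_sum]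
  refine sum_le_sum_of_translates ρ _ _ fun v => ?_
  have hexp : ∀ T ⊆ S, ∀ t, ‖expSum φ M x w T (v + ρ t)‖ =
      ‖expSum ψ (l * m) z (fun i => w i * phase φ M (x i) v) T t‖ := by
    intro T hT t
    have : expSum φ M x w T (v + ρ t) =
        κ t * expSum ψ (l * m) z (fun i => w i * phase φ M (x i) v) T t := by
      rw [expSum, expSum, Finset.mul_sum]
      refine Finset.sum_congr rfl fun i hi => ?_
      rw [phase_add, hρ i (hT hi)]
      ring
    rw [this, norm_mul, hκ, one_mul]
  have h := mul_le_mul_of_nonneg_right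
    (hD ψ hψ S z (fun i => w i * phase φ M (x i) v)) (hB0 v)
  have hcell : ∀ J, cell p S z m J ⊆ S := fun J i hi => (mem_cell.mp hi).1
  calc ∑ t, ‖expSum φ M x w S (v + ρ t)‖ ^ (l * (l + 1)) * B (v + ρ t)
      = (∑ t, ‖expSum ψ (l * m) z (fun i => w i * phase φ M (x i) v) S t‖ ^ (l * (l + 1)))
          * B v := by
        rw [Finset.sum_mul]
        exact Finset.sum_congr rfl fun t _ => by rw [hexp S subset_rfl, hB]
    _ ≤ _ := h
    _ = _ := by
        simp only [hB, hexp _ (hcell _)]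
        rw [← Finset.mul_sum, Finset.sum_comm (s := range (p ^ m))]
        simp only [Finset.sum_mul, mul_assoc]

/-- Decoupling of a single cell, obtained by affine rescaling. -/
lemma DecBound.rescale {k a m : ℕ} {D : ℝ} (ha : 1 ≤ a) (hD : DecBound p k m D)
    {φ : Fin k → ℤ_[p][X]} (hφ : IsMomentLike p φ) (S : Finset ℕ) (x : ℕ → ℤ_[p]) (w : ℕ → ℂ)
    (I : ℕ) :
    ∑ v, ‖expSum φ (k * (a + m)) x w (cell p S x a I) v‖ ^ (k * (k + 1)) ≤
      D * (p : ℝ) ^ ((m : ℝ) * ((k : ℝ) * (k + 1) / 2 - 1)) *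
        ∑ J ∈ range (p ^ m),
          ∑ v, ‖expSum φ (k * (a + m)) x w (cell p S x (a + m) (I + p ^ a * J)) v‖ ^
            (k * (k + 1)) := by
  obtain ⟨z, hz⟩ := exists_cell_coordinate S x a I
  obtain ⟨A, c, ψ, hψ, hA⟩ := exists_rescaled_curve φ (I : ℤ_[p]) (hφ.isUnit_det _) ha
  choose lift hlift using exists_reduce_eq (p := p) (k := k) (k * m)
  let e : Freq p k (k * m) → Fin k → ℤ_[p] := fun t j =>
    (p : ℤ_[p]) ^ (a * (k - 1 - j)) * lift t j
  have hmain := hD.transfer (M := k * (a + m)) φ hψ (cell p S x a I) x z w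
    (fun t => reduce _ fun m' => ∑ j, e t j * A j m')
    (fun t => chi p (k * (a + m)) (∑ j, e t j * c j)) (fun t => norm_chi _ _) ?_
    (fun _ => 1) (fun _ => zero_le_one) (fun _ _ => rfl)
  · simpa only [mul_one, cell_cell hz] using hmain
  · intro i hi t
    rw [phase_reduce, ← hlift t, phase_reduce, hlift t]
    have h1 : ∑ j, (∑ j', e t j' * A j' j) * (φ j).eval (x i) =
        ∑ j, e t j * c j + (p : ℤ_[p]) ^ (k * a) * ∑ j, lift t j * (ψ j).eval (z i) := by
      simp only [Finset.sum_mul]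
      rw [Finset.sum_comm, Finset.mul_sum, ← Finset.sum_add_distrib]
      refine Finset.sum_congr rfl fun j _ => ?_
      simp only [mul_assoc]
      rw [← Finset.mul_sum, hz i hi, hA]
      have hj : k * a = a * (k - 1 - j) + a * ((j : ℕ) + 1) := by
        rw [← mul_add, mul_comm]
        congr 1
        have := j.2
        omega
      simp only [e]
      rw [hj, pow_add]
      ring
    rw [h1, AddChar.map_add_eq_mul, mul_add, chi_pow_mul]

/-- Decoupling in degree `l < k` of the contribution of a cell, in the presence of a second cell
whose exponential sum has constant modulus along a large group of translations. -/
lemma DecBound.lower {k l n a m b : ℕ} {D : ℝ} (hkp : k < p) (ha : 1 ≤ a) (hl : 1 ≤ l)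
    (hlk : l ≤ k) (hb : b ≤ n) (hscale : l * (a + m) ≤ b * (k - l + 1)) (hD : DecBound p l m D)
    {φ : Fin k → ℤ_[p][X]} (hφ : IsMomentLike p φ) (S : Finset ℕ) (x : ℕ → ℤ_[p]) (w : ℕ → ℂ)
    {I I' : ℕ} (hI : ¬ I ≡ I' [MOD p]) (e : ℕ) :
    ∑ v, ‖expSum φ (k * n) x w (cell p S x a I) v‖ ^ (l * (l + 1)) *
        ‖expSum φ (k * n) x w (cell p S x b I') v‖ ^ e ≤
      D * (p : ℝ) ^ ((m : ℝ) * ((l : ℝ) * (l + 1) / 2 - 1)) *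
        ∑ J ∈ range (p ^ m),
          ∑ v, ‖expSum φ (k * n) x w (cell p S x (a + m) (I + p ^ a * J)) v‖ ^ (l * (l + 1)) *
            ‖expSum φ (k * n) x w (cell p S x b I') v‖ ^ e := by
  obtain ⟨d, rfl⟩ : ∃ d, k = d + l := ⟨k - l, by omega⟩
  obtain ⟨z, hz⟩ := exists_cell_coordinate S x a I
  obtain ⟨z', hz'⟩ := exists_cell_coordinate S x b I'
  obtain ⟨A, c, χ, hA, hχ, hdet⟩ := hφ.exists_centred hkp (I' : ℤ_[p])
  have hunit : IsUnit ((I : ℤ_[p]) - I') := by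
    rw [isUnit_iff_toZMod_ne_zero]
    intro h0
    rw [map_sub, map_natCast, map_natCast, sub_eq_zero] at h0
    exact hI ((ZMod.natCast_eq_natCast_iff _ _ _).mp h0)
  obtain ⟨B, c', ψ, hψ, hB⟩ := exists_rescaled_curve _ _ (hdet d l rfl _ hunit) ha
  choose lift hlift using exists_reduce_eq (p := p) (k := l) (l * m)
  have hle : l * (a + m) ≤ (d + l) * n := by
    refine hscale.trans ?_
    rw [mul_comm]
    exact Nat.mul_le_mul (by omega) hb
  set N := (d + l) * n - l * (a + m) with hN
  let g : Freq p l (l * m) → Fin l → ℤ_[p] := fun t j =>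
    (p : ℤ_[p]) ^ (N + a * (l - 1 - j)) * lift t j
  let g' : Freq p l (l * m) → Fin l → ℤ_[p] := fun t i => ∑ j, g t j * B j i
  let ι : Fin l → Fin (d + l) := fun i => ⟨d + i, by omega⟩
  let ρ : Freq p l (l * m) → Freq p (d + l) ((d + l) * n) := fun t =>
    reduce _ fun m' => ∑ i, g' t i * A (ι i) m'
  have hpair : ∀ t y, phase φ ((d + l) * n) ((I' : ℤ_[p]) + y) (ρ t) =
      chi p ((d + l) * n) (∑ i, g' t i * (c (ι i) + (χ (ι i)).eval y)) := by
    intro t y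
    rw [phase_reduce]
    congr 1
    simp only [Finset.sum_mul]
    rw [Finset.sum_comm]
    refine Finset.sum_congr rfl fun i _ => ?_
    simp only [mul_assoc]
    rw [← Finset.mul_sum, hA]
  have hmain := hD.transfer (M := (d + l) * n) φ hψ (cell p S x a I) x z w ρ
    (fun t => chi p ((d + l) * n) (∑ i, g' t i * c (ι i) + ∑ j, g t j * c' j))
    (fun t => norm_chi _ _) ?_
    (fun v => ‖expSum φ ((d + l) * n) x w (cell p S x b I') v‖ ^ e)
    (fun _ => by positivity) ?_
  · simpa only [cell_cell hz] using hmain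
  · intro i hi t
    rw [show x i = (I' : ℤ_[p]) + (((I : ℤ_[p]) - I') + (p : ℤ_[p]) ^ a * z i) by
      rw [hz i hi]; ring, hpair, ← hlift t, phase_reduce, hlift t]
    have h1 : ∑ i', g' t i' * (c (ι i') + (χ (ι i')).eval
        (((I : ℤ_[p]) - I') + (p : ℤ_[p]) ^ a * z i)) =
        (∑ i, g' t i * c (ι i) + ∑ j, g t j * c' j) +
          (p : ℤ_[p]) ^ (N + l * a) * ∑ j, lift t j * (ψ j).eval (z i) := by
      simp only [mul_add, Finset.sum_add_distrib]
      rw [add_assoc]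
      congr 1
      simp only [g', Finset.sum_mul]
      rw [Finset.sum_comm, Finset.mul_sum, ← Finset.sum_add_distrib]
      refine Finset.sum_congr rfl fun j _ => ?_
      simp only [mul_assoc]
      rw [← Finset.mul_sum, hB]
      have hj : N + l * a = N + a * (l - 1 - j) + a * ((j : ℕ) + 1) := by
        rw [add_assoc, ← mul_add, mul_comm l]
        congr 2
        have := j.2
        omega
      simp only [g]
      rw [hj, pow_add _ (N + a * (l - 1 - j))]
      ring
    have hM : (d + l) * n = N + l * a + l * m := by
      rw [hN, mul_add] at *
      omega
    rw [h1, AddChar.map_add_eq_mul]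
    congr 1
    rw [hM, chi_pow_mul]
  · intro v t
    have hconst : ∀ i ∈ cell p S x b I', phase φ ((d + l) * n) (x i) (ρ t) =
        chi p ((d + l) * n) (∑ i, g' t i * c (ι i)) := by
      intro i hi
      rw [hz' i hi, hpair]
      simp only [mul_add, Finset.sum_add_distrib]
      rw [AddChar.map_add_eq_mul]
      refine (congrArg (_ * ·) (chi_eq_one_of_dvd ?_)).trans (mul_one _)
      refine Finset.dvd_sum fun i' _ => ?_
      have h2 : (p : ℤ_[p]) ^ N ∣ g' t i' := by
        refine Finset.dvd_sum fun j _ => Dvd.dvd.mul_right (Dvd.dvd.mul_right ?_ _) _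
        exact pow_dvd_pow _ (Nat.le_add_right _ _)
      have h3 : (p : ℤ_[p]) ^ (l * (a + m)) ∣ (χ (ι i')).eval ((p : ℤ_[p]) ^ b * z' i) := by
        refine dvd_trans ?_ (hχ (ι i') _)
        rw [mul_pow, ← pow_mul]
        refine Dvd.dvd.mul_right (pow_dvd_pow _ (hscale.trans ?_)) _
        refine Nat.mul_le_mul_left _ ?_
        simp only [ι]
        omega
      rw [show (d + l) * n = N + l * (a + m) by omega, pow_add]
      exact mul_dvd_mul h2 h3
    have : expSum φ ((d + l) * n) x w (cell p S x b I') (v + ρ t) =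
        chi p ((d + l) * n) (∑ i, g' t i * c (ι i)) *
          expSum φ ((d + l) * n) x w (cell p S x b I') v := by
      rw [expSum, expSum, Finset.mul_sum]
      refine Finset.sum_congr rfl fun i hi => ?_
      rw [phase_add, hconst i hi]
      ring
    simp only [this, norm_mul, norm_chi, one_mul]

end Transfer

end ExponentialSums

section Inequalities

/-- Hölder's inequality in multiplicatively convex form. -/
lemma sum_rpow_mul_rpow_le {ι : Type*} (s : Finset ι) (f g : ι → ℝ) (hf : ∀ i ∈ s, 0 ≤ f i)
    (hg : ∀ i ∈ s, 0 ≤ g i) {θ : ℝ} (h0 : 0 < θ) (h1 : θ < 1) :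
    ∑ i ∈ s, f i ^ θ * g i ^ (1 - θ) ≤ (∑ i ∈ s, f i) ^ θ * (∑ i ∈ s, g i) ^ (1 - θ) := by
  have h1' : 0 < 1 - θ := by linarith
  have hc : (1 / θ).HolderConjugate (1 / (1 - θ)) := by
    refine Real.holderConjugate_iff.mpr ⟨by rw [lt_div_iff₀ h0]; linarith, ?_⟩
    simp
  have := Real.inner_le_Lp_mul_Lq_of_nonneg s (f := fun i => f i ^ θ) (g := fun i => g i ^ (1 - θ))
    hc (fun i hi => Real.rpow_nonneg (hf i hi) _) (fun i hi => Real.rpow_nonneg (hg i hi) _)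
  refine this.trans (le_of_eq ?_)
  congr 1
  · rw [one_div_one_div]
    congr 1
    refine Finset.sum_congr rfl fun i hi => ?_
    rw [← Real.rpow_mul (hf i hi), mul_one_div_cancel h0.ne', Real.rpow_one]
  · rw [one_div_one_div]
    congr 1
    refine Finset.sum_congr rfl fun i hi => ?_
    rw [← Real.rpow_mul (hg i hi), mul_one_div_cancel h1'.ne', Real.rpow_one]

lemma pow_eq_rpow_mul_rpow {x : ℝ} (hx : 0 ≤ x) {e e' e'' : ℕ} {θ : ℝ} (h0 : 0 < θ) (h1 : θ < 1)
    (he : (e : ℝ) = θ * e' + (1 - θ) * e'') :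
    x ^ e = (x ^ e') ^ θ * (x ^ e'') ^ (1 - θ) := by
  have h1' : 0 < 1 - θ := by linarith
  rw [← Real.rpow_natCast x e, ← Real.rpow_natCast x e', ← Real.rpow_natCast x e'',
    ← Real.rpow_mul hx, ← Real.rpow_mul hx, ← Real.rpow_add_of_nonneg hx (by positivity)
    (by positivity), he]
  ring_nf

lemma pow_sum_le {ι : Type*} (s : Finset ι) (f : ι → ℝ) (hf : ∀ i ∈ s, 0 ≤ f i) {e : ℕ}
    (he : 1 ≤ e) : (∑ i ∈ s, f i) ^ e ≤ (s.card : ℝ) ^ (e - 1) * ∑ i ∈ s, f i ^ e := by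
  obtain ⟨d, rfl⟩ : ∃ d, e = d + 1 := ⟨e - 1, by omega⟩
  rcases s.eq_empty_or_nonempty with rfl | hs
  · simp
  · have hc : (0 : ℝ) < (s.card : ℝ) ^ d := by
      have := hs.card_pos
      positivity
    have := pow_sum_div_card_le_sum_pow hf d
    rw [div_le_iff₀ hc] at this
    simpa [mul_comm] using this

/-- A sum of complex numbers is dominated by its largest term, unless two terms are comparable. -/
lemma norm_sum_pow_le {p : ℕ} (hp : 1 ≤ p) (z : ℕ → ℂ) (e₁ e₂ : ℕ) :
    ‖∑ i ∈ range p, z i‖ ^ (e₁ + e₂) ≤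
      2 ^ (e₁ + e₂) * ∑ i ∈ range p, ‖z i‖ ^ (e₁ + e₂) +
        (p : ℝ) ^ (2 * (e₁ + e₂)) *
          ∑ i ∈ range p, ∑ j ∈ range p, if i = j then 0 else ‖z i‖ ^ e₁ * ‖z j‖ ^ e₂ := by
  have hp' : (1 : ℝ) ≤ p := by exact_mod_cast hp
  obtain ⟨m, hm, hmax⟩ := Finset.exists_max_image (range p) (fun i => ‖z i‖)
    ⟨0, Finset.mem_range.mpr hp⟩
  have hpairs : 0 ≤ ∑ i ∈ range p, ∑ j ∈ range p, if i = j then 0 else ‖z i‖ ^ e₁ * ‖z j‖ ^ e₂ :=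
    Finset.sum_nonneg fun i _ => Finset.sum_nonneg fun j _ => by split_ifs <;> positivity
  by_cases hcase : ∀ j ∈ range p, j ≠ m → p * ‖z j‖ ≤ ‖z m‖
  · have h1 : ‖∑ i ∈ range p, z i‖ ≤ 2 * ‖z m‖ := by
      rw [← Finset.add_sum_erase _ _ hm]
      refine (norm_add_le _ _).trans ?_
      have h2 : ‖∑ j ∈ (range p).erase m, z j‖ ≤ ∑ j ∈ (range p).erase m, ‖z m‖ / p := by
        refine (norm_sum_le _ _).trans (Finset.sum_le_sum fun j hj => ?_)
        rw [le_div_iff₀ (by linarith), mul_comm]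
        exact hcase j (Finset.mem_of_mem_erase hj) (Finset.ne_of_mem_erase hj)
      have h3 : ∑ j ∈ (range p).erase m, ‖z m‖ / p ≤ ‖z m‖ := by
        rw [Finset.sum_const, nsmul_eq_mul, Finset.card_erase_of_mem hm, Finset.card_range,
          ← mul_div_assoc, div_le_iff₀ (by linarith), mul_comm]
        refine mul_le_mul_of_nonneg_left ?_ (norm_nonneg _)
        exact_mod_cast Nat.sub_le p 1
      linarith
    calc ‖∑ i ∈ range p, z i‖ ^ (e₁ + e₂) ≤ (2 * ‖z m‖) ^ (e₁ + e₂) := by gcongr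
      _ = 2 ^ (e₁ + e₂) * ‖z m‖ ^ (e₁ + e₂) := mul_pow _ _ _
      _ ≤ 2 ^ (e₁ + e₂) * ∑ i ∈ range p, ‖z i‖ ^ (e₁ + e₂) := by
          gcongr
          exact Finset.single_le_sum (f := fun i => ‖z i‖ ^ (e₁ + e₂))
            (fun i _ => by positivity) hm
      _ ≤ _ := le_add_of_nonneg_right (by positivity)
  · push Not at hcase
    obtain ⟨j, hj, hjm, hlt⟩ := hcase
    have h1 : ‖∑ i ∈ range p, z i‖ ≤ p * ‖z m‖ := by
      refine (norm_sum_le _ _).trans ((Finset.sum_le_sum hmax).trans ?_)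
      simp
    have hpow : (p : ℝ) ^ e₂ ≤ (p : ℝ) ^ (e₁ + e₂) := pow_le_pow_right₀ hp' (by omega)
    calc ‖∑ i ∈ range p, z i‖ ^ (e₁ + e₂) ≤ (p * ‖z m‖) ^ (e₁ + e₂) := by gcongr
      _ = (p : ℝ) ^ (e₁ + e₂) * (‖z m‖ ^ e₁ * ‖z m‖ ^ e₂) := by rw [mul_pow, pow_add ‖z m‖]
      _ ≤ (p : ℝ) ^ (e₁ + e₂) * (‖z m‖ ^ e₁ * (p * ‖z j‖) ^ e₂) := by gcongr
      _ = (p : ℝ) ^ (e₁ + e₂) * (p : ℝ) ^ e₂ * (‖z m‖ ^ e₁ * ‖z j‖ ^ e₂) := by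
          rw [mul_pow]; ring
      _ ≤ (p : ℝ) ^ (e₁ + e₂) * (p : ℝ) ^ (e₁ + e₂) * (‖z m‖ ^ e₁ * ‖z j‖ ^ e₂) := by gcongr
      _ = (p : ℝ) ^ (2 * (e₁ + e₂)) * (if m = j then 0 else ‖z m‖ ^ e₁ * ‖z j‖ ^ e₂) := by
          rw [if_neg (Ne.symm hjm), two_mul, pow_add (p : ℝ) (e₁ + e₂) (e₁ + e₂)]
      _ ≤ (p : ℝ) ^ (2 * (e₁ + e₂)) *
          ∑ i ∈ range p, ∑ j ∈ range p, if i = j then 0 else ‖z i‖ ^ e₁ * ‖z j‖ ^ e₂ := by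
          gcongr
          refine le_trans ?_ (Finset.single_le_sum
            (f := fun i => ∑ j ∈ range p, if i = j then 0 else ‖z i‖ ^ e₁ * ‖z j‖ ^ e₂)
            (fun i _ => Finset.sum_nonneg fun j _ => by split_ifs <;> positivity) hm)
          exact Finset.single_le_sum
            (f := fun j => if m = j then 0 else ‖z m‖ ^ e₁ * ‖z j‖ ^ e₂)
            (fun j _ => by split_ifs <;> positivity) hj
      _ ≤ _ := le_add_of_nonneg_left (by positivity)

end Inequalities

section Systems

variable {p : ℕ} [hp : Fact p.Prime]

/-- The data of an exponential sum along a curve resembling the moment curve, at scale `p ^ n`. -/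
structure System (p : ℕ) [Fact p.Prime] (k n : ℕ) where
  /-- the curve -/
  φ : Fin k → ℤ_[p][X]
  momentLike : IsMomentLike p φ
  /-- the index set -/
  S : Finset ℕ
  /-- the points -/
  x : ℕ → ℤ_[p]
  /-- the weights -/
  w : ℕ → ℂ

/-- Pairs of residue classes which are distinct modulo `p`. -/
def pairs (p a b : ℕ) : Finset (ℕ × ℕ) :=
  (range (p ^ a) ×ˢ range (p ^ b)).filter fun t => ¬ t.1 ≡ t.2 [MOD p]

lemma sum_pairs {E : Type*} [AddCommMonoid E] (p a b : ℕ) (h : ℕ → ℕ → E) :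
    ∑ t ∈ pairs p a b, h t.1 t.2 =
      ∑ I ∈ range (p ^ a), ∑ I' ∈ range (p ^ b), if I ≡ I' [MOD p] then 0 else h I I' := by
  rw [pairs, Finset.sum_filter, Finset.sum_product]
  refine Finset.sum_congr rfl fun I _ => Finset.sum_congr rfl fun I' _ => ?_
  simp only [ite_not]

lemma sum_pairs_add {E : Type*} [AddCommMonoid E] {p a : ℕ} (ha : 1 ≤ a) (m b : ℕ)
    (h : ℕ → ℕ → E) :
    ∑ t ∈ pairs p (a + m) b, h t.1 t.2 =
      ∑ t ∈ pairs p a b, ∑ J ∈ range (p ^ m), h (t.1 + p ^ a * J) t.2 := by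
  rw [sum_pairs, sum_range_pow_add, sum_pairs p a b fun I I' =>
    ∑ J ∈ range (p ^ m), h (I + p ^ a * J) I']
  refine Finset.sum_congr rfl fun I _ => ?_
  rw [Finset.sum_comm]
  refine Finset.sum_congr rfl fun I' _ => ?_
  have hmod : ∀ J, I + p ^ a * J ≡ I' [MOD p] ↔ I ≡ I' [MOD p] := by
    intro J
    have : I + p ^ a * J ≡ I [MOD p] :=
      Nat.ModEq.symm ((Nat.modEq_iff_dvd' (by omega)).mpr
        (by simpa using (dvd_pow_self p (by omega)).mul_right J))
    exact ⟨fun h => this.symm.trans h, fun h => this.trans h⟩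
  simp only [hmod]
  split_ifs <;> simp

lemma sum_pairs_swap {E : Type*} [AddCommMonoid E] (p a b : ℕ) (h : ℕ → ℕ → E) :
    ∑ t ∈ pairs p a b, h t.1 t.2 = ∑ t ∈ pairs p b a, h t.2 t.1 := by
  rw [sum_pairs, Finset.sum_comm, sum_pairs p b a fun I I' => h I' I]
  simp only [Nat.ModEq.comm]

namespace System

variable {k n : ℕ} (F : System p k n)

/-- The modulus of the part of the exponential sum coming from one cell. -/
noncomputable def g (a I : ℕ) (v : Freq p k (k * n)) : ℝ :=
  ‖expSum F.φ (k * n) F.x F.w (cell p F.S F.x a I) v‖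

lemma g_nonneg (a I : ℕ) (v : Freq p k (k * n)) : 0 ≤ F.g a I v := norm_nonneg _

/-- The right-hand side of the decoupling inequality. -/
noncomputable def total : ℝ :=
  (p : ℝ) ^ ((n : ℝ) * ((k : ℝ) * (k + 1) / 2 - 1)) *
    ∑ J ∈ range (p ^ n), ∑ v, F.g n J v ^ (k * (k + 1))

lemma total_nonneg : 0 ≤ F.total :=
  mul_nonneg (by positivity)
    (Finset.sum_nonneg fun _ _ => Finset.sum_nonneg fun _ _ => pow_nonneg (F.g_nonneg _ _ _) _)

/-- The bilinear moment over pairs of separated cells. -/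
noncomputable def pairSum (e₁ e₂ a b : ℕ) : ℝ :=
  ∑ t ∈ pairs p a b, ∑ v, F.g a t.1 v ^ e₁ * F.g b t.2 v ^ e₂

lemma pairSum_nonneg (e₁ e₂ a b : ℕ) : 0 ≤ F.pairSum e₁ e₂ a b :=
  Finset.sum_nonneg fun _ _ => Finset.sum_nonneg fun _ _ =>
    mul_nonneg (pow_nonneg (F.g_nonneg _ _ _) _) (pow_nonneg (F.g_nonneg _ _ _) _)

/-- The normalised bilinear moment. -/
noncomputable def mixed (e₁ e₂ a b : ℕ) : ℝ :=
  (p : ℝ) ^ ((a : ℝ) * ((e₁ : ℝ) / 2 - 1) + (b : ℝ) * ((e₂ : ℝ) / 2 - 1)) * F.pairSum e₁ e₂ a b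

lemma mixed_nonneg (e₁ e₂ a b : ℕ) : 0 ≤ F.mixed e₁ e₂ a b :=
  mul_nonneg (by positivity) (F.pairSum_nonneg _ _ _ _)

lemma mixed_swap (e₁ e₂ a b : ℕ) : F.mixed e₁ e₂ a b = F.mixed e₂ e₁ b a := by
  rw [mixed, mixed, pairSum, pairSum,
    sum_pairs_swap p a b fun I I' => ∑ v, F.g a I v ^ e₁ * F.g b I' v ^ e₂, add_comm]
  simp only [mul_comm]

lemma pos_p : (0 : ℝ) < p := by exact_mod_cast hp.1.pos

lemma one_le_p : (1 : ℝ) ≤ p := by exact_mod_cast hp.1.one_lt.le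

/-- Hölder's inequality for normalised bilinear moments. -/
lemma mixed_le_rpow_mul_rpow {e₁ e₂ e₁' e₂' e₁'' e₂'' : ℕ} {θ : ℝ} (h0 : 0 < θ) (h1 : θ < 1)
    (he₁ : (e₁ : ℝ) = θ * e₁' + (1 - θ) * e₁'') (he₂ : (e₂ : ℝ) = θ * e₂' + (1 - θ) * e₂'')
    (a b : ℕ) :
    F.mixed e₁ e₂ a b ≤ F.mixed e₁' e₂' a b ^ θ * F.mixed e₁'' e₂'' a b ^ (1 - θ) := by
  have hp0 : (0 : ℝ) < p := pos_p
  have hsum : F.pairSum e₁ e₂ a b ≤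
      F.pairSum e₁' e₂' a b ^ θ * F.pairSum e₁'' e₂'' a b ^ (1 - θ) := by
    simp only [pairSum, ← Finset.sum_product']
    refine le_trans (le_of_eq ?_) (sum_rpow_mul_rpow_le (pairs p a b ×ˢ univ) _ _ ?_ ?_ h0 h1)
    · refine Finset.sum_congr rfl fun t _ => ?_
      rw [Real.mul_rpow (pow_nonneg (F.g_nonneg _ _ _) _) (pow_nonneg (F.g_nonneg _ _ _) _),
        Real.mul_rpow (pow_nonneg (F.g_nonneg _ _ _) _) (pow_nonneg (F.g_nonneg _ _ _) _),
        pow_eq_rpow_mul_rpow (F.g_nonneg _ _ _) h0 h1 he₁,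
        pow_eq_rpow_mul_rpow (F.g_nonneg _ _ _) h0 h1 he₂]
      ring
    · exact fun t _ => mul_nonneg (pow_nonneg (F.g_nonneg _ _ _) _)
        (pow_nonneg (F.g_nonneg _ _ _) _)
    · exact fun t _ => mul_nonneg (pow_nonneg (F.g_nonneg _ _ _) _)
        (pow_nonneg (F.g_nonneg _ _ _) _)
  rw [mixed, mixed, mixed, Real.mul_rpow (by positivity) (F.pairSum_nonneg _ _ _ _),
    Real.mul_rpow (by positivity) (F.pairSum_nonneg _ _ _ _), ← Real.rpow_mul hp0.le,
    ← Real.rpow_mul hp0.le]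
  rw [mul_mul_mul_comm, ← Real.rpow_add hp0]
  refine mul_le_mul (le_of_eq ?_) hsum (F.pairSum_nonneg _ _ _ _) (by positivity)
  congr 1
  rw [he₁, he₂]
  ring

/-- The decoupling bound for a single family of cells. -/
lemma sum_g_pow_le {b : ℕ} {D : ℝ} (hb : 1 ≤ b) (hbn : b ≤ n) (hD : DecBound p k (n - b) D) :
    ∑ I ∈ range (p ^ b), ∑ v, F.g b I v ^ (k * (k + 1)) ≤
      D * (p : ℝ) ^ (-((b : ℝ) * ((k : ℝ) * (k + 1) / 2 - 1))) * F.total := by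
  have hp0 : (0 : ℝ) < p := pos_p
  obtain ⟨m, rfl⟩ : ∃ m, n = b + m := ⟨n - b, by omega⟩
  rw [Nat.add_sub_cancel_left] at hD
  have hcell : ∑ I ∈ range (p ^ b), ∑ v, F.g b I v ^ (k * (k + 1)) ≤
      D * (p : ℝ) ^ ((m : ℝ) * ((k : ℝ) * (k + 1) / 2 - 1)) *
        ∑ J ∈ range (p ^ (b + m)), ∑ v, F.g (b + m) J v ^ (k * (k + 1)) := by
    rw [sum_range_pow_add, Finset.mul_sum]
    exact Finset.sum_le_sum fun I _ => hD.rescale hb F.momentLike F.S F.x F.w I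
  refine hcell.trans (le_of_eq ?_)
  rw [total, ← mul_assoc, mul_assoc D _ ((p : ℝ) ^ _), ← Real.rpow_add hp0]
  congr 3
  push_cast
  ring

/-- The bilinear moment with trivial first factor. -/
lemma mixed_zero_le {a b : ℕ} {D : ℝ} (hb : 1 ≤ b) (hbn : b ≤ n) (hD : DecBound p k (n - b) D) :
    F.mixed 0 (k * (k + 1)) a b ≤ D * F.total := by
  have hp0 : (0 : ℝ) < p := pos_p
  have hpair : F.pairSum 0 (k * (k + 1)) a b ≤
      (p : ℝ) ^ (a : ℝ) * ∑ I ∈ range (p ^ b), ∑ v, F.g b I v ^ (k * (k + 1)) := by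
    rw [pairSum, pairs, Finset.sum_filter, Finset.sum_product]
    have : ∀ I ∈ range (p ^ a), (∑ I' ∈ range (p ^ b), if ¬ I ≡ I' [MOD p] then
        ∑ v, F.g a I v ^ 0 * F.g b I' v ^ (k * (k + 1)) else 0) ≤
        ∑ I ∈ range (p ^ b), ∑ v, F.g b I v ^ (k * (k + 1)) := by
      refine fun I _ => Finset.sum_le_sum fun I' _ => ?_
      have : 0 ≤ ∑ v, F.g b I' v ^ (k * (k + 1)) :=
        Finset.sum_nonneg fun _ _ => pow_nonneg (F.g_nonneg _ _ _) _
      split_ifs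
      · exact this
      · simp
    refine (Finset.sum_le_sum this).trans (le_of_eq ?_)
    simp
  have hcell := F.sum_g_pow_le hb hbn hD
  rw [mixed]
  calc _ ≤ (p : ℝ) ^ ((a : ℝ) * (((0 : ℕ) : ℝ) / 2 - 1) +
          (b : ℝ) * (((k * (k + 1) : ℕ) : ℝ) / 2 - 1)) * ((p : ℝ) ^ (a : ℝ) *
          (D * (p : ℝ) ^ (-((b : ℝ) * ((k : ℝ) * (k + 1) / 2 - 1))) * F.total)) := by
        gcongr
        exact hpair.trans (by gcongr)
    _ = D * ((p : ℝ) ^ ((a : ℝ) * (((0 : ℕ) : ℝ) / 2 - 1) +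
          (b : ℝ) * (((k * (k + 1) : ℕ) : ℝ) / 2 - 1)) * (p : ℝ) ^ (a : ℝ) *
          (p : ℝ) ^ (-((b : ℝ) * ((k : ℝ) * (k + 1) / 2 - 1)))) * F.total := by ring
    _ = D * F.total := by
        rw [← Real.rpow_add hp0, ← Real.rpow_add hp0]
        have : (a : ℝ) * (((0 : ℕ) : ℝ) / 2 - 1) + (b : ℝ) * (((k * (k + 1) : ℕ) : ℝ) / 2 - 1) +
            a + -((b : ℝ) * ((k : ℝ) * (k + 1) / 2 - 1)) = 0 := by
          push_cast
          ring
        rw [this, Real.rpow_zero, mul_one]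

/-- Refining the first family of cells by decoupling in lower degree. -/
lemma mixed_le_of_decBound {l a m b : ℕ} {D : ℝ} (hkp : k < p) (ha : 1 ≤ a) (hl : 1 ≤ l)
    (hlk : l ≤ k) (hb : b ≤ n) (hscale : l * (a + m) ≤ b * (k - l + 1)) (hD : DecBound p l m D)
    (e : ℕ) : F.mixed (l * (l + 1)) e a b ≤ D * F.mixed (l * (l + 1)) e (a + m) b := by
  have hp0 : (0 : ℝ) < p := pos_p
  have hpair : F.pairSum (l * (l + 1)) e a b ≤
      D * (p : ℝ) ^ ((m : ℝ) * ((l : ℝ) * (l + 1) / 2 - 1)) *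
        F.pairSum (l * (l + 1)) e (a + m) b := by
    rw [pairSum, pairSum, sum_pairs_add ha m b fun I I' =>
      ∑ v, F.g (a + m) I v ^ (l * (l + 1)) * F.g b I' v ^ e, Finset.mul_sum]
    refine Finset.sum_le_sum fun t ht => ?_
    rw [pairs, Finset.mem_filter] at ht
    exact hD.lower hkp ha hl hlk hb hscale F.momentLike F.S F.x F.w ht.2 e
  rw [mixed, mixed]
  refine (mul_le_mul_of_nonneg_left hpair (by positivity)).trans (le_of_eq ?_)
  rw [show ∀ A B C G : ℝ, A * (B * C * G) = B * (A * C) * G from fun A B C G => by ring,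
    ← Real.rpow_add hp0, mul_assoc]
  congr 3
  push_cast
  ring

lemma expSum_cell_eq_sum (b m I : ℕ) (v : Freq p k (k * n)) :
    expSum F.φ (k * n) F.x F.w (cell p F.S F.x b I) v =
      ∑ J ∈ range (p ^ m), expSum F.φ (k * n) F.x F.w (cell p F.S F.x (b + m) (I + p ^ b * J)) v := by
  obtain ⟨z, hz⟩ := exists_cell_coordinate F.S F.x b I
  simp only [expSum, ← cell_cell hz]
  exact (sum_cell _ _ _ _).symm

/-- Refining the second family of cells trivially. -/
lemma pairSum_le_trivial {e₁ e₂ a b m : ℕ} (hb : 1 ≤ b) (he : 1 ≤ e₂) :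
    F.pairSum e₁ e₂ a b ≤ (p : ℝ) ^ (m * e₂) * F.pairSum e₁ e₂ a (b + m) := by
  have hp0 : (0 : ℝ) < p := pos_p
  rw [pairSum, pairSum, sum_pairs_swap p a b fun I I' => ∑ v, F.g a I v ^ e₁ * F.g b I' v ^ e₂,
    sum_pairs_swap p a (b + m) fun I I' => ∑ v, F.g a I v ^ e₁ * F.g (b + m) I' v ^ e₂,
    sum_pairs_add hb m a fun I' I => ∑ v, F.g a I v ^ e₁ * F.g (b + m) I' v ^ e₂, Finset.mul_sum]
  refine Finset.sum_le_sum fun t _ => ?_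
  rw [Finset.sum_comm, Finset.mul_sum]
  refine Finset.sum_le_sum fun v _ => ?_
  rw [← Finset.mul_sum, mul_left_comm]
  refine mul_le_mul_of_nonneg_left ?_ (pow_nonneg (F.g_nonneg _ _ _) _)
  have h1 : F.g b t.1 v ≤ ∑ J ∈ range (p ^ m), F.g (b + m) (t.1 + p ^ b * J) v := by
    rw [g, F.expSum_cell_eq_sum b m]
    exact norm_sum_le _ _
  refine (pow_le_pow_left₀ (F.g_nonneg _ _ _) h1 _).trans
    ((pow_sum_le _ _ (fun _ _ => F.g_nonneg _ _ _) he).trans ?_)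
  refine mul_le_mul_of_nonneg_right ?_
    (Finset.sum_nonneg fun _ _ => pow_nonneg (F.g_nonneg _ _ _) _)
  rw [Finset.card_range, pow_mul]
  push_cast
  exact pow_le_pow_right₀ (one_le_pow₀ one_le_p) (by omega)

end System

end Systems

section DecouplingConstants

variable {p : ℕ} [hp : Fact p.Prime]

section Basic

lemma decBound_of_system {k n : ℕ} {D : ℝ}
    (h : ∀ F : System p k n, ∑ v, ‖expSum F.φ (k * n) F.x F.w F.S v‖ ^ (k * (k + 1)) ≤
      D * F.total) : DecBound p k n D := by
  intro φ hφ S x w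
  rw [mul_assoc]
  exact h ⟨φ, hφ, S, x, w⟩

lemma DecBound.mono {k n : ℕ} {D D' : ℝ} (h : DecBound p k n D) (hD : D ≤ D') :
    DecBound p k n D' := by
  intro φ hφ S x w
  refine (h φ hφ S x w).trans ?_
  gcongr

/-- The decoupling bound given by the power mean inequality. -/
lemma decBound_trivial {k : ℕ} (hk : 1 ≤ k) (n : ℕ) :
    DecBound p k n ((p : ℝ) ^ (n * (k * (k + 1)))) := by
  refine decBound_of_system fun F => ?_
  have hp1 : (1 : ℝ) ≤ p := System.one_le_p
  have hk' : (1 : ℝ) ≤ k := by exact_mod_cast hk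
  have hone : (1 : ℝ) ≤ (p : ℝ) ^ ((n : ℝ) * ((k : ℝ) * (k + 1) / 2 - 1)) :=
    Real.one_le_rpow hp1 (mul_nonneg (by positivity) (by nlinarith))
  have hsum : 0 ≤ ∑ J ∈ range (p ^ n), ∑ v, F.g n J v ^ (k * (k + 1)) :=
    Finset.sum_nonneg fun _ _ => Finset.sum_nonneg fun _ _ => pow_nonneg (F.g_nonneg _ _ _) _
  calc ∑ v, ‖expSum F.φ (k * n) F.x F.w F.S v‖ ^ (k * (k + 1))
      ≤ ∑ v, (p : ℝ) ^ (n * (k * (k + 1))) * ∑ J ∈ range (p ^ n), F.g n J v ^ (k * (k + 1)) := by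
        refine Finset.sum_le_sum fun v _ => ?_
        have h1 : ‖expSum F.φ (k * n) F.x F.w F.S v‖ ≤ ∑ J ∈ range (p ^ n), F.g n J v := by
          rw [expSum, ← sum_cell F.S F.x n]
          exact norm_sum_le _ _
        refine (pow_le_pow_left₀ (norm_nonneg _) h1 _).trans
          ((pow_sum_le _ _ (fun _ _ => F.g_nonneg _ _ _) (by nlinarith)).trans ?_)
        refine mul_le_mul_of_nonneg_right ?_
          (Finset.sum_nonneg fun _ _ => pow_nonneg (F.g_nonneg _ _ _) _)
        rw [Finset.card_range, pow_mul]
        push_cast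
        exact pow_le_pow_right₀ (one_le_pow₀ hp1) (by omega)
    _ = (p : ℝ) ^ (n * (k * (k + 1))) *
          ∑ J ∈ range (p ^ n), ∑ v, F.g n J v ^ (k * (k + 1)) := by
        rw [← Finset.mul_sum, Finset.sum_comm]
    _ ≤ _ := by
        rw [System.total]
        exact mul_le_mul_of_nonneg_left (le_mul_of_one_le_left hsum hone) (by positivity)

lemma sum_norm_sq_of_orthogonal {ι V : Type*} [Fintype V] (s : Finset ι) (z : ι → V → ℂ)
    (h : ∀ i ∈ s, ∀ j ∈ s, i ≠ j → ∑ v, z i v * starRingEnd ℂ (z j v) = 0) :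
    ∑ v, ‖∑ i ∈ s, z i v‖ ^ 2 = ∑ i ∈ s, ∑ v, ‖z i v‖ ^ 2 := by
  have key : ((∑ v, ‖∑ i ∈ s, z i v‖ ^ 2 : ℝ) : ℂ) = ((∑ i ∈ s, ∑ v, ‖z i v‖ ^ 2 : ℝ) : ℂ) := by
    push_cast
    simp only [← Complex.mul_conj', map_sum, Finset.sum_mul_sum]
    rw [Finset.sum_comm]
    refine Finset.sum_congr rfl fun i hi => ?_
    rw [Finset.sum_comm]
    exact Finset.sum_eq_single_of_mem i hi fun j hj hne => h i hi j hj hne.symm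
  exact_mod_cast key

lemma stdAddChar_sum {ι : Type*} {N : ℕ} [NeZero N] (s : Finset ι) (f : ι → ZMod N) :
    (ZMod.stdAddChar (∑ i ∈ s, f i) : ℂ) = ∏ i ∈ s, ZMod.stdAddChar (f i) :=
  map_prod (ZMod.stdAddChar (N := N)).toMonoidHom (fun i => Multiplicative.ofAdd (f i)) s

lemma sum_stdAddChar_pairing {k N : ℕ} [NeZero N] (d : Fin k → ZMod N) :
    ∑ c : Fin k → ZMod N, ZMod.stdAddChar (∑ j, c j * d j) =
      if d = 0 then (Fintype.card (Fin k → ZMod N) : ℂ) else 0 := by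
  have h1 : ∑ c : Fin k → ZMod N, ZMod.stdAddChar (∑ j, c j * d j) =
      ∏ j, ∑ y : ZMod N, ZMod.stdAddChar (y * d j) := by
    rw [Finset.prod_univ_sum, Fintype.piFinset_univ]
    exact Finset.sum_congr rfl fun c _ => stdAddChar_sum _ _
  rw [h1]
  simp only [AddChar.sum_mulShift _ (ZMod.isPrimitive_stdAddChar N)]
  split_ifs with hd
  · simp [hd]
  · obtain ⟨j, hj⟩ := Function.ne_iff.mp hd
    exact Finset.prod_eq_zero (Finset.mem_univ j) (by rw [if_neg (by simpa using hj), Nat.cast_zero])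

lemma sum_phase_mul_conj_eq_zero {k : ℕ} (φ : Fin k → ℤ_[p][X]) (M : ℕ) {x y : ℤ_[p]} (j : Fin k)
    (hj : ¬ (p : ℤ_[p]) ^ M ∣ (φ j).eval x - (φ j).eval y) :
    ∑ c, phase φ M x c * starRingEnd ℂ (phase φ M y c) = 0 := by
  have h1 : ∀ c : Freq p k M, phase φ M x c * starRingEnd ℂ (phase φ M y c) =
      ZMod.stdAddChar (∑ j, c j * PadicInt.toZModPow M ((φ j).eval x - (φ j).eval y)) := by
    intro c
    rw [phase, phase, ← AddChar.map_neg_eq_conj, ← AddChar.map_add_eq_mul]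
    simp only [map_sub, mul_sub, Finset.sum_sub_distrib]
    rw [sub_eq_add_neg]
  simp only [h1]
  rw [sum_stdAddChar_pairing fun j => PadicInt.toZModPow M ((φ j).eval x - (φ j).eval y), if_neg]
  intro h0
  have h2 := congrFun h0 j
  rw [Pi.zero_apply, ← RingHom.mem_ker, PadicInt.ker_toZModPow, Ideal.mem_span_singleton] at h2
  exact hj h2

lemma dvd_of_dvd_eval_sub {f : ℤ_[p][X]} (hf : ∃ h : ℤ_[p][X], f = X + C (p : ℤ_[p]) * h)
    {x y d : ℤ_[p]} (hd : d ∣ f.eval x - f.eval y) : d ∣ x - y := by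
  obtain ⟨h, rfl⟩ := hf
  obtain ⟨u, hu⟩ := sub_dvd_eval_sub x y h
  have : (X + C (p : ℤ_[p]) * h).eval x - (X + C (p : ℤ_[p]) * h).eval y =
      (x - y) * (1 + p * u) := by
    simp only [eval_add, eval_X, eval_mul, eval_C]
    linear_combination (p : ℤ_[p]) * hu
  rw [this] at hd
  have hunit : IsUnit (1 + (p : ℤ_[p]) * u) := by
    rw [isUnit_iff_toZMod_ne_zero]
    simp
  exact (hunit.dvd_mul_right).mp hd

/-- In degree one, decoupling is orthogonality. -/
lemma decBound_one (n : ℕ) : DecBound p 1 n 1 := by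
  intro φ hφ S x w
  have hdec : ∀ c, expSum φ (1 * n) x w S c =
      ∑ J ∈ range (p ^ n), expSum φ (1 * n) x w (cell p S x n J) c := fun c =>
    (sum_cell S x n _).symm
  norm_num only [hdec]
  rw [mul_zero, Real.rpow_zero, one_mul (1 : ℝ), one_mul (∑ J ∈ range (p ^ n), _)]
  refine (sum_norm_sq_of_orthogonal _ _ fun I hI J hJ hne => ?_).le
  simp only [expSum, map_sum, Finset.sum_mul_sum]
  rw [Finset.sum_comm]
  refine Finset.sum_eq_zero fun i hi => ?_
  rw [Finset.sum_comm]
  refine Finset.sum_eq_zero fun j hj => ?_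
  have h1 : ∀ c : Freq p 1 (1 * n), w i * phase φ (1 * n) (x i) c *
      starRingEnd ℂ (w j * phase φ (1 * n) (x j) c) = w i * starRingEnd ℂ (w j) *
        (phase φ (1 * n) (x i) c * starRingEnd ℂ (phase φ (1 * n) (x j) c)) := by
    intro c
    rw [map_mul]
    ring
  simp only [h1]
  rw [← Finset.mul_sum, sum_phase_mul_conj_eq_zero φ _ 0, mul_zero]
  rw [one_mul]
  intro hd
  have hd' := dvd_of_dvd_eval_sub (by simpa using hφ 0) hd
  rw [Finset.mem_range] at hI hJ
  have hi' := (mem_cell.mp hi).2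
  have hj' := (inClass_iff_appr hJ _).mp (mem_cell.mp hj).2
  have hij : InClass p n I (x j) := by
    have := dvd_sub hi' hd'
    rwa [show x i - I - (x i - x j) = x j - I by ring] at this
  exact hne (((inClass_iff_appr hI _).mp hij).trans hj'.symm)

end Basic

end DecouplingConstants

section Bilinear

variable {p : ℕ} [hp : Fact p.Prime]

/-- The exponential sum is controlled by the cells modulo `p`, up to a bilinear contribution. -/
lemma System.sum_norm_pow_le {k n : ℕ} (F : System p k n) {e₁ e₂ : ℕ} (he : e₁ + e₂ = k * (k + 1))
    {D : ℝ} (hn : 1 ≤ n) (hD : DecBound p k (n - 1) D) :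
    ∑ v, ‖expSum F.φ (k * n) F.x F.w F.S v‖ ^ (k * (k + 1)) ≤
      2 ^ (k * (k + 1)) * (D * (p : ℝ) ^ (-((k : ℝ) * (k + 1) / 2 - 1)) * F.total) +
        (p : ℝ) ^ (2 * (k * (k + 1))) * F.pairSum e₁ e₂ 1 1 := by
  have hsplit : ∀ v, expSum F.φ (k * n) F.x F.w F.S v =
      ∑ I ∈ range p, expSum F.φ (k * n) F.x F.w (cell p F.S F.x 1 I) v := fun v => by
    have := sum_cell F.S F.x 1 fun i => F.w i * phase F.φ (k * n) (F.x i) v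
    rw [pow_one] at this
    exact this.symm
  have hnarrow := F.sum_g_pow_le le_rfl hn hD
  rw [pow_one, Nat.cast_one, one_mul] at hnarrow
  have hpair : F.pairSum e₁ e₂ 1 1 = ∑ v, ∑ I ∈ range p, ∑ J ∈ range p,
      if I = J then 0 else F.g 1 I v ^ e₁ * F.g 1 J v ^ e₂ := by
    rw [System.pairSum, sum_pairs p 1 1 fun I J => ∑ v, F.g 1 I v ^ e₁ * F.g 1 J v ^ e₂, pow_one,
      Finset.sum_comm]
    rw [Finset.sum_comm (s := range p), Finset.sum_comm (s := univ)]
    refine Finset.sum_congr rfl fun I hI => ?_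
    rw [Finset.sum_comm (s := univ)]
    refine Finset.sum_congr rfl fun J hJ => ?_
    have : I ≡ J [MOD p] ↔ I = J :=
      ⟨fun h => h.eq_of_lt_of_lt (Finset.mem_range.mp hI) (Finset.mem_range.mp hJ),
        fun h => h ▸ Nat.ModEq.refl _⟩
    simp only [this]
    split_ifs <;> simp
  calc ∑ v, ‖expSum F.φ (k * n) F.x F.w F.S v‖ ^ (k * (k + 1))
      ≤ ∑ v, (2 ^ (k * (k + 1)) * ∑ I ∈ range p, F.g 1 I v ^ (k * (k + 1)) +
          (p : ℝ) ^ (2 * (k * (k + 1))) * ∑ I ∈ range p, ∑ J ∈ range p,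
            if I = J then 0 else F.g 1 I v ^ e₁ * F.g 1 J v ^ e₂) := by
        refine Finset.sum_le_sum fun v _ => ?_
        rw [hsplit, ← he]
        exact norm_sum_pow_le hp.1.one_lt.le _ e₁ e₂
    _ = 2 ^ (k * (k + 1)) * ∑ I ∈ range p, ∑ v, F.g 1 I v ^ (k * (k + 1)) +
          (p : ℝ) ^ (2 * (k * (k + 1))) * F.pairSum e₁ e₂ 1 1 := by
        rw [Finset.sum_add_distrib, ← Finset.mul_sum, ← Finset.mul_sum, hpair, Finset.sum_comm]
    _ ≤ _ := by gcongr

/-- Decoupling holds in degree `k` with constants `O(p ^ (η n))`. -/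
def Decoupled (p : ℕ) [Fact p.Prime] (k : ℕ) (η : ℝ) : Prop :=
  ∃ C : ℝ, 0 ≤ C ∧ ∀ n : ℕ, DecBound p k n (C * (p : ℝ) ^ (η * n))

lemma Decoupled.mono {k : ℕ} {η η' : ℝ} (h : Decoupled p k η) (hη : η ≤ η') :
    Decoupled p k η' := by
  obtain ⟨C, hC, h⟩ := h
  refine ⟨C, hC, fun n => (h n).mono ?_⟩
  have := System.one_le_p (p := p)
  gcongr

/-- Bilinear moments at scale `p ^ b` gain a factor `p ^ (κ l * η * b)` over decoupling. -/
def IsGain (p : ℕ) [Fact p.Prime] (k : ℕ) (κ : ℕ → ℝ) : Prop :=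
  ∃ Q R : ℕ, 1 ≤ Q ∧ 1 ≤ R ∧ ∀ η : ℝ, 0 ≤ η → Decoupled p k η → ∀ ε : ℝ, 0 < ε → ∀ l < k,
    ∃ C : ℝ, 0 ≤ C ∧ ∀ (n : ℕ) (F : System p k n) (a b : ℕ), 1 ≤ a → 1 ≤ b → Q ∣ b → R * b ≤ n →
      l * a ≤ b * (k - l + 1) →
        F.mixed (l * (l + 1)) (k * (k + 1) - l * (l + 1)) a b ≤
          C * (p : ℝ) ^ ((η + ε) * n - κ l * η * b) * F.total

/-- The gain available before any iteration. -/
def gainBase (l : ℕ) : ℝ := if l = 0 then 1 else 0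

/-- One step of the iteration of gains. -/
noncomputable def gainStep (k : ℕ) (κ : ℕ → ℝ) (l : ℕ) : ℝ :=
  if l = 0 then 1 else κ (k - l) / l + κ (l - 1) * ((k : ℝ) - l) / ((k : ℝ) - l + 1)

lemma mul_succ_le_mul_succ {l k : ℕ} (h : l ≤ k) : l * (l + 1) ≤ k * (k + 1) :=
  Nat.mul_le_mul h (by omega)

lemma cast_sub_mul_succ {l k : ℕ} (h : l ≤ k) :
    ((k * (k + 1) - l * (l + 1) : ℕ) : ℝ) = (k : ℝ) * (k + 1) - l * (l + 1) := by
  rw [Nat.cast_sub (mul_succ_le_mul_succ h)]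
  push_cast
  ring

lemma System.mixed_zero_le_of_decoupled {k n : ℕ} (F : System p k n) {η C : ℝ}
    (hC : ∀ n : ℕ, DecBound p k n (C * (p : ℝ) ^ (η * n))) {a b : ℕ} (hb : 1 ≤ b) (hbn : b ≤ n) :
    F.mixed 0 (k * (k + 1)) a b ≤ C * (p : ℝ) ^ (η * n - η * b) * F.total := by
  have := F.mixed_zero_le (a := a) hb hbn (hC (n - b))
  rwa [Nat.cast_sub hbn, mul_sub] at this

lemma isGain_gainBase {k : ℕ} (hk : 2 ≤ k) : IsGain p k gainBase := by
  refine ⟨1, k, le_rfl, by omega, fun η hη ⟨C, hC0, hC⟩ ε hε l hl => ⟨C, hC0, ?_⟩⟩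
  intro n F a b ha hb _ hbn hab
  have hp0 : (0 : ℝ) < p := System.pos_p
  have hp1 : (1 : ℝ) ≤ p := System.one_le_p
  have hbn' : b ≤ n := le_trans (Nat.le_mul_of_pos_left b (by omega)) hbn
  have hnn := F.total_nonneg
  rcases Nat.eq_zero_or_pos l with rfl | hl0
  · simp only [gainBase, if_true, zero_mul, Nat.sub_zero]
    refine (F.mixed_zero_le_of_decoupled hC hb hbn').trans ?_
    gcongr
    · nlinarith
    · linarith
  · have han : a ≤ n := by
      refine le_trans ?_ (hbn.trans' (by rw [mul_comm]))
      calc a ≤ l * a := Nat.le_mul_of_pos_left a hl0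
        _ ≤ b * (k - l + 1) := hab
        _ ≤ b * k := Nat.mul_le_mul_left b (by omega)
    set T := C * (p : ℝ) ^ ((η + ε) * n) * F.total with hT
    have hT0 : 0 ≤ T := by positivity
    have hle : ∀ c : ℕ, C * (p : ℝ) ^ (η * n - η * c) * F.total ≤ T := by
      intro c
      rw [hT]
      gcongr
      have : 0 ≤ η * c := by positivity
      nlinarith
    have h1 : F.mixed 0 (k * (k + 1)) a b ≤ T :=
      (F.mixed_zero_le_of_decoupled hC hb hbn').trans (hle b)
    have h2 : F.mixed (k * (k + 1)) 0 a b ≤ T := by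
      rw [F.mixed_swap]
      exact (F.mixed_zero_le_of_decoupled hC ha han).trans (hle a)
    have hk' : (0 : ℝ) < k := by exact_mod_cast (by omega : 0 < k)
    have hl' : (0 : ℝ) < l := by exact_mod_cast hl0
    have hlk : (l : ℝ) < k := by exact_mod_cast hl
    have hθ0 : (0 : ℝ) < (l : ℝ) * (l + 1) / (k * (k + 1)) := by positivity
    have hθ1 : (l : ℝ) * (l + 1) / (k * (k + 1)) < 1 := by
      rw [div_lt_one (by positivity)]
      nlinarith
    have hH := F.mixed_le_rpow_mul_rpow (e₁ := l * (l + 1)) (e₂ := k * (k + 1) - l * (l + 1))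
      (e₁' := k * (k + 1)) (e₂' := 0) (e₁'' := 0) (e₂'' := k * (k + 1)) hθ0 hθ1
      (by push_cast; field_simp; ring)
      (by rw [cast_sub_mul_succ hl.le]; push_cast; field_simp; ring) a b
    simp only [gainBase, if_neg hl0.ne', zero_mul, sub_zero]
    refine hH.trans ?_
    calc _ ≤ T ^ ((l : ℝ) * (l + 1) / (k * (k + 1))) *
          T ^ (1 - (l : ℝ) * (l + 1) / (k * (k + 1))) := by
          exact mul_le_mul (Real.rpow_le_rpow (F.mixed_nonneg _ _ _ _) h2 hθ0.le)
            (Real.rpow_le_rpow (F.mixed_nonneg _ _ _ _) h1 (by linarith))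
            (Real.rpow_nonneg (F.mixed_nonneg _ _ _ _) _) (Real.rpow_nonneg hT0 _)
      _ = T := by
          rw [← Real.rpow_add_of_nonneg hT0 hθ0.le (by linarith), add_sub_cancel, Real.rpow_one]

lemma IsGain.step {k : ℕ} (hk : 2 ≤ k) (hkp : k < p)
    (hlower : ∀ l, 1 ≤ l → l < k → ∀ ε : ℝ, 0 < ε → Decoupled p l ε) {κ : ℕ → ℝ}
    (h : IsGain p k κ) : IsGain p k (gainStep k κ) := by
  obtain ⟨Q, R, hQ, hR, h⟩ := h
  refine ⟨Q * k.factorial, R * k, Nat.mul_pos hQ k.factorial_pos, Nat.mul_pos hR (by omega), ?_⟩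
  intro η hη hdec ε hε l hl
  have hp0 : (0 : ℝ) < p := System.pos_p
  have hp1 : (1 : ℝ) ≤ p := System.one_le_p
  rcases Nat.eq_zero_or_pos l with rfl | hl0
  · obtain ⟨C, hC0, hC⟩ := hdec
    refine ⟨C, hC0, fun n F a b ha hb _ hbn _ => ?_⟩
    have hbn' : b ≤ n :=
      le_trans (Nat.le_mul_of_pos_left b (Nat.mul_pos hR (by omega : 0 < k))) hbn
    have hnn := F.total_nonneg
    simp only [gainStep, if_true, zero_mul, Nat.sub_zero]
    refine (F.mixed_zero_le_of_decoupled hC hb hbn').trans ?_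
    gcongr
    · nlinarith
    · linarith
  obtain ⟨C₀, hC₀, hlow⟩ := hlower l hl0 hl (ε / 2) (by positivity)
  obtain ⟨C₁, hC₁, h₁⟩ := h η hη hdec (ε / 2) (by positivity) (k - l) (by omega)
  obtain ⟨C₂, hC₂, h₂⟩ := h η hη hdec (ε / 2) (by positivity) (l - 1) (by omega)
  obtain ⟨d, rfl⟩ : ∃ d, k = l + d := ⟨k - l, by omega⟩
  have hd : 1 ≤ d := by omega
  simp only [Nat.add_sub_cancel_left] at h₁ ⊢
  set θ : ℝ := 1 / ((d : ℝ) + 1) with hθ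
  have hd' : (1 : ℝ) ≤ d := by exact_mod_cast hd
  have hθ0 : 0 < θ := by positivity
  have hθ1 : θ < 1 := by rw [hθ, div_lt_one (by positivity)]; linarith
  have hl' : (0 : ℝ) < l := by exact_mod_cast hl0
  refine ⟨C₀ * (C₁ ^ θ * C₂ ^ (1 - θ)), by positivity, ?_⟩
  intro n F a b ha hb hQb hbn hab
  have hnn := F.total_nonneg
  obtain ⟨a', ha', hQa'⟩ : ∃ a', l * a' = b * (d + 1) ∧ Q ∣ a' := by
    obtain ⟨f, hf⟩ := Nat.dvd_factorial hl0 hl.le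
    obtain ⟨c, rfl⟩ := hQb
    refine ⟨Q * f * c * (d + 1), by rw [hf]; ring, ?_⟩
    exact ⟨f * c * (d + 1), by ring⟩
  have haa' : a ≤ a' := Nat.le_of_mul_le_mul_left (hab.trans_eq ha'.symm) hl0
  have ha'b : a' ≤ (l + d) * b := by
    calc a' ≤ l * a' := Nat.le_mul_of_pos_left a' hl0
      _ = b * (d + 1) := ha'
      _ ≤ b * (l + d) := Nat.mul_le_mul_left b (by omega)
      _ = (l + d) * b := mul_comm _ _
  have hRa' : R * a' ≤ n := (Nat.mul_le_mul_left R ha'b).trans (by rwa [← mul_assoc])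
  have ha'n : a' ≤ n := (Nat.le_mul_of_pos_left a' hR).trans hRa'
  have hRb : R * b ≤ n := by
    refine le_trans ?_ hbn
    rw [mul_assoc]
    exact Nat.mul_le_mul_left R (Nat.le_mul_of_pos_left b (by omega))
  have hbn' : b ≤ n := (Nat.le_mul_of_pos_left b hR).trans hRb
  obtain ⟨m, rfl⟩ : ∃ m, a' = a + m := ⟨a' - a, by omega⟩
  have hA := F.mixed_le_of_decBound hkp ha hl0 hl.le hbn'
    (by rw [Nat.add_sub_cancel_left]; exact ha'.le) (hlow m)
    ((l + d) * (l + d + 1) - l * (l + 1))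
  have hB₁ := h₁ n F b (a + m) hb (by omega) hQa' hRa' (by
    have : l + d - d = l := by omega
    rw [this]
    nlinarith)
  have hB₂ := h₂ n F (a + m) b (by omega) hb
    ((dvd_mul_right Q _).trans hQb) hRb (by
      have e1 : l + d - (l - 1) + 1 = d + 2 := by omega
      rw [e1]
      calc (l - 1) * (a + m) ≤ l * (a + m) := Nat.mul_le_mul_right _ (by omega)
        _ = b * (d + 1) := ha'
        _ ≤ b * (d + 2) := Nat.mul_le_mul_left b (by omega))
  rw [F.mixed_swap] at hB₁
  have hcast₁ : (((l + d) * (l + d + 1) - d * (d + 1) : ℕ) : ℝ) =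
      ((l : ℝ) + d) * (l + d + 1) - d * (d + 1) := by
    rw [cast_sub_mul_succ (by omega)]; push_cast; ring
  have hcast₂ : (((l + d) * (l + d + 1) - l * (l + 1) : ℕ) : ℝ) =
      ((l : ℝ) + d) * (l + d + 1) - l * (l + 1) := by
    rw [cast_sub_mul_succ (by omega)]; push_cast; ring
  have hl1 : ((l - 1 : ℕ) : ℝ) = (l : ℝ) - 1 := by rw [Nat.cast_sub hl0]; simp
  have hcast₃ : (((l + d) * (l + d + 1) - (l - 1) * (l - 1 + 1) : ℕ) : ℝ) =
      ((l : ℝ) + d) * (l + d + 1) - (l - 1) * l := by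
    rw [cast_sub_mul_succ (by omega), hl1]; push_cast; ring
  have hH := F.mixed_le_rpow_mul_rpow (e₁ := l * (l + 1))
    (e₂ := (l + d) * (l + d + 1) - l * (l + 1)) (e₁' := (l + d) * (l + d + 1) - d * (d + 1))
    (e₂' := d * (d + 1)) (e₁'' := (l - 1) * (l - 1 + 1))
    (e₂'' := (l + d) * (l + d + 1) - (l - 1) * (l - 1 + 1)) hθ0 hθ1
    (by rw [hcast₁]; push_cast; rw [hl1, hθ]; field_simp; ring)
    (by rw [hcast₂, hcast₃]; push_cast; rw [hθ]; field_simp; ring) (a + m) b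
  have ha'R : (l : ℝ) * ((a + m : ℕ) : ℝ) = b * (d + 1) := by exact_mod_cast ha'
  calc _ ≤ _ := hA
    _ ≤ C₀ * (p : ℝ) ^ (ε / 2 * m) *
        ((C₁ * (p : ℝ) ^ ((η + ε / 2) * n - κ d * η * (a + m : ℕ)) * F.total) ^ θ *
          (C₂ * (p : ℝ) ^ ((η + ε / 2) * n - κ (l - 1) * η * b) * F.total) ^ (1 - θ)) := by
        refine mul_le_mul_of_nonneg_left (hH.trans ?_) (by positivity)
        refine mul_le_mul (Real.rpow_le_rpow (F.mixed_nonneg _ _ _ _) hB₁ hθ0.le)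
          (Real.rpow_le_rpow (F.mixed_nonneg _ _ _ _) hB₂ (by linarith))
          (Real.rpow_nonneg (F.mixed_nonneg _ _ _ _) _) (Real.rpow_nonneg (by positivity) _)
    _ = C₀ * (C₁ ^ θ * C₂ ^ (1 - θ)) * (p : ℝ) ^ (ε / 2 * m +
          (((η + ε / 2) * n - κ d * η * (a + m : ℕ)) * θ +
            ((η + ε / 2) * n - κ (l - 1) * η * b) * (1 - θ))) *
          (F.total ^ θ * F.total ^ (1 - θ)) := by
        rw [Real.mul_rpow (by positivity) hnn, Real.mul_rpow (by positivity) hnn,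
          Real.mul_rpow hC₁ (by positivity), Real.mul_rpow hC₂ (by positivity),
          ← Real.rpow_mul hp0.le, ← Real.rpow_mul hp0.le, Real.rpow_add hp0, Real.rpow_add hp0]
        ring
    _ ≤ _ := by
        rw [← Real.rpow_add_of_nonneg hnn hθ0.le (by linarith), add_sub_cancel, Real.rpow_one]
        refine mul_le_mul_of_nonneg_right (mul_le_mul_of_nonneg_left
          (Real.rpow_le_rpow_of_exponent_le hp1 ?_) (by positivity)) hnn
        have hmn : (m : ℝ) ≤ n := by exact_mod_cast (by omega : m ≤ n)
        have hgain : κ d * η * (a + m : ℕ) * θ = κ d / l * η * b := by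
          rw [hθ]
          field_simp
          linear_combination κ d * η * ha'R
        have hgain' : κ (l - 1) * η * b * (1 - θ) =
            κ (l - 1) * ((l + d : ℕ) - (l : ℝ)) / ((l + d : ℕ) - (l : ℝ) + 1) * η * b := by
          rw [hθ]
          push_cast
          rw [add_sub_cancel_left]
          field_simp
          ring
        have hm : ε / 2 * m ≤ ε / 2 * n := by gcongr
        rw [gainStep, if_neg hl0.ne', Nat.add_sub_cancel_left]
        linear_combination hm - hgain - hgain'

end Bilinear

section Iteration

variable {p : ℕ} [hp : Fact p.Prime]

lemma sum_gainStep {K : ℕ} (hK : 1 ≤ K) {κ : ℕ → ℝ} (h0 : κ 0 = 1) :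
    ∑ j ∈ range K, gainStep (K + 1) κ (j + 1) = ∑ j ∈ range K, κ (j + 1) + K / (K + 1 : ℝ) := by
  have h1 : ∀ j ∈ range K, gainStep (K + 1) κ (j + 1) =
      κ (K - j) / ((j : ℝ) + 1) + κ j * ((K : ℝ) - j) / ((K : ℝ) - j + 1) := by
    intro j _
    rw [gainStep, if_neg (Nat.succ_ne_zero j), Nat.add_sub_cancel, Nat.add_sub_add_right]
    push_cast
    ring_nf
  have h2 : ∑ j ∈ range K, κ (K - j) / ((j : ℝ) + 1) =
      ∑ j ∈ range K, κ (j + 1) / ((K : ℝ) - j) := by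
    rw [← Finset.sum_range_reflect]
    refine Finset.sum_congr rfl fun j hj => ?_
    rw [Finset.mem_range] at hj
    have e1 : K - (K - 1 - j) = j + 1 := by omega
    have e2 : ((K - 1 - j : ℕ) : ℝ) + 1 = (K : ℝ) - j := by
      rw [Nat.cast_sub (by omega), Nat.cast_sub (by omega)]
      push_cast
      ring
    rw [e1, e2]
  have h3 : ∑ j ∈ range K, κ j * ((K : ℝ) - j) / ((K : ℝ) - j + 1) =
      ∑ j ∈ range K, κ (j + 1) * ((K : ℝ) - j - 1) / ((K : ℝ) - j) + K / (K + 1 : ℝ) := by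
    have := Finset.sum_range_succ (fun j : ℕ => κ j * ((K : ℝ) - j) / ((K : ℝ) - j + 1)) K
    rw [Finset.sum_range_succ'] at this
    simp only [sub_self, mul_zero, zero_div, add_zero, Nat.cast_zero, sub_zero, h0, one_mul] at this
    rw [← this]
    congr 1
    refine Finset.sum_congr rfl fun j _ => ?_
    push_cast
    ring_nf
  rw [Finset.sum_congr rfl h1, Finset.sum_add_distrib, h2, h3, ← add_assoc,
    ← Finset.sum_add_distrib]
  congr 1
  refine Finset.sum_congr rfl fun j hj => ?_
  have : (0 : ℝ) < (K : ℝ) - j := by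
    rw [sub_pos]
    exact_mod_cast Finset.mem_range.mp hj
  field_simp
  ring

/-- Arbitrarily large gains are available. -/
lemma exists_isGain_ge {k : ℕ} (hk : 2 ≤ k) (hkp : k < p)
    (hlower : ∀ l, 1 ≤ l → l < k → ∀ ε : ℝ, 0 < ε → Decoupled p l ε) (B : ℝ) :
    ∃ κ : ℕ → ℝ, IsGain p k κ ∧ ∃ l, 1 ≤ l ∧ l < k ∧ B ≤ κ l := by
  obtain ⟨K, rfl⟩ : ∃ K, k = K + 1 := ⟨k - 1, by omega⟩
  have hK : 1 ≤ K := by omega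
  have hK' : (1 : ℝ) ≤ K := by exact_mod_cast hK
  have hiter : ∀ i : ℕ, ∃ κ : ℕ → ℝ, IsGain p (K + 1) κ ∧ κ 0 = 1 ∧
      ∑ j ∈ range K, κ (j + 1) = i * (K / (K + 1 : ℝ)) := by
    intro i
    induction i with
    | zero => exact ⟨gainBase, isGain_gainBase hk, by simp [gainBase], by simp [gainBase]⟩
    | succ i ih =>
      obtain ⟨κ, h1, h2, h3⟩ := ih
      refine ⟨gainStep (K + 1) κ, h1.step hk hkp hlower, by simp [gainStep], ?_⟩
      rw [sum_gainStep hK h2, h3]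
      push_cast
      ring
  obtain ⟨i, hi⟩ := exists_nat_gt (B * (K + 1))
  obtain ⟨κ, h1, -, h3⟩ := hiter i
  refine ⟨κ, h1, ?_⟩
  by_contra! hlt
  have h4 : ∑ j ∈ range K, κ (j + 1) ≤ ∑ j ∈ range K, B := by
    refine Finset.sum_le_sum fun j hj => (hlt (j + 1) (by omega) ?_).le
    have := Finset.mem_range.mp hj
    omega
  rw [h3, Finset.sum_const, Finset.card_range, nsmul_eq_mul, mul_div_assoc',
    div_le_iff₀ (by positivity)] at h4
  nlinarith

lemma two_pow_mul_rpow_neg_le {k : ℕ} (hk : 2 ≤ k) {x : ℝ} (hx : 32 ≤ x) :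
    2 ^ (k * (k + 1)) * x ^ (-((k : ℝ) * (k + 1) / 2 - 1)) ≤ 1 / 2 := by
  have hk' : (2 : ℝ) ≤ k := by exact_mod_cast hk
  have hx' : (2 : ℝ) ^ (5 : ℝ) ≤ x := by
    norm_num
    exact hx
  calc 2 ^ (k * (k + 1)) * x ^ (-((k : ℝ) * (k + 1) / 2 - 1))
      ≤ 2 ^ (k * (k + 1)) * ((2 : ℝ) ^ (5 : ℝ)) ^ (-((k : ℝ) * (k + 1) / 2 - 1)) := by
        refine mul_le_mul_of_nonneg_left ?_ (by positivity)
        exact Real.rpow_le_rpow_of_nonpos (by positivity) hx' (by nlinarith)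
    _ = (2 : ℝ) ^ (((k * (k + 1) : ℕ) : ℝ) + 5 * (-((k : ℝ) * (k + 1) / 2 - 1))) := by
        rw [Real.rpow_add two_pos, Real.rpow_natCast, Real.rpow_mul two_pos.le]
    _ ≤ (2 : ℝ) ^ (-1 : ℝ) := by
        refine Real.rpow_le_rpow_of_exponent_le one_le_two ?_
        push_cast
        nlinarith
    _ = 1 / 2 := by norm_num [Real.rpow_neg_one]

/-- The exponent in decoupling can be lowered by a fixed amount as long as it is bounded below. -/
lemma exists_improvement {k : ℕ} (hk : 2 ≤ k) (hkp : k < p) (hp32 : 32 ≤ p)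
    (hlower : ∀ l, 1 ≤ l → l < k → ∀ ε : ℝ, 0 < ε → Decoupled p l ε) {η₀ : ℝ} (hη₀ : 0 < η₀) :
    ∃ δ : ℝ, 0 < δ ∧ ∀ η, η₀ ≤ η → Decoupled p k η → Decoupled p k (max (η - δ) 0) := by
  obtain ⟨κ, ⟨Q, R, hQ, hR, hgain⟩, l, hl1, hlk, hκ⟩ :=
    exists_isGain_ge hk hkp hlower ((k * (k + 1) + 1) / η₀)
  have hp0 : (0 : ℝ) < p := System.pos_p
  have hp1 : (1 : ℝ) ≤ p := System.one_le_p
  have hR' : (0 : ℝ) < R := by exact_mod_cast hR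
  have hQ' : (0 : ℝ) < Q := by exact_mod_cast hQ
  refine ⟨1 / (2 * R), by positivity, fun η hη hdec => ?_⟩
  obtain ⟨C, hC0, hC⟩ := hgain η (hη₀.le.trans hη) hdec (1 / (2 * R)) (by positivity) l hlk
  set q := k * (k + 1) with hq
  set η' := max (η - 1 / (2 * R)) 0 with hη'
  have hη'0 : 0 ≤ η' := le_max_right _ _
  have hκη : (q : ℝ) + 1 ≤ κ l * η := by
    have h1 : (q : ℝ) + 1 ≤ κ l * η₀ := by
      rw [div_le_iff₀ hη₀] at hκ
      rw [hq]
      push_cast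
      exact hκ
    have h2 : 0 ≤ κ l := le_trans (by positivity) hκ
    exact h1.trans (mul_le_mul_of_nonneg_left hη h2)
  set N₀ := Q * R * k with hN₀
  set C' : ℝ := max ((p : ℝ) ^ (N₀ * q)) (C * (p : ℝ) ^ (2 * q + Q)) with hC'
  have hC'0 : 0 ≤ C' := le_trans (by positivity) (le_max_left _ _)
  have hpair : ∀ (n : ℕ) (F : System p k n), N₀ ≤ n →
      (p : ℝ) ^ (2 * q) * F.pairSum (l * (l + 1)) (q - l * (l + 1)) 1 1 ≤
        C' * (p : ℝ) ^ (η' * n) * F.total := by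
    intro n F hn
    have hnn := F.total_nonneg
    set b := Q * (n / (Q * R)) with hb
    have hQR : 0 < Q * R := Nat.mul_pos hQ hR
    have hbk : k ≤ b := by
      have : k ≤ n / (Q * R) := by
        rw [Nat.le_div_iff_mul_le hQR, mul_comm]
        exact hn
      exact this.trans (Nat.le_mul_of_pos_left _ hQ)
    have hRb : R * b ≤ n := by
      rw [hb, ← mul_assoc, mul_comm R Q]
      exact Nat.mul_div_le n (Q * R)
    have hbn : (n : ℝ) / R - Q ≤ b := by
      have h1 : n < (n / (Q * R) + 1) * (Q * R) := Nat.lt_mul_of_div_lt (Nat.lt_succ_self _) hQR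
      have h2 : n ≤ (b + Q) * R := by
        rw [hb]
        nlinarith
      have h3 : (n : ℝ) ≤ (b + Q) * R := by exact_mod_cast h2
      rw [sub_le_iff_le_add, div_le_iff₀ hR']
      exact h3
    have hl2 : 2 ≤ l * (l + 1) := by nlinarith
    have hq2 : l * (l + 1) + 2 ≤ q := by
      have : (l + 1) * (l + 2) ≤ q := Nat.mul_le_mul hlk (by omega)
      nlinarith
    have hmix := hC n F 1 b le_rfl (by omega) (dvd_mul_right _ _) hRb (by
      rw [mul_one]
      calc l ≤ b := by omega
        _ ≤ b * (k - l + 1) := Nat.le_mul_of_pos_right _ (by omega))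
    have hle : F.pairSum (l * (l + 1)) (q - l * (l + 1)) 1 b ≤
        F.mixed (l * (l + 1)) (q - l * (l + 1)) 1 b := by
      rw [System.mixed]
      refine le_mul_of_one_le_left (F.pairSum_nonneg _ _ _ _) (Real.one_le_rpow hp1 ?_)
      have e1 : (2 : ℝ) ≤ ((l * (l + 1) : ℕ) : ℝ) := by exact_mod_cast hl2
      have e2 : (2 : ℝ) ≤ ((q - l * (l + 1) : ℕ) : ℝ) := by
        exact_mod_cast (by omega : 2 ≤ q - l * (l + 1))
      refine add_nonneg (mul_nonneg (by positivity) (by linarith))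
        (mul_nonneg (by positivity) (by linarith))
    have htriv := F.pairSum_le_trivial (e₁ := l * (l + 1)) (e₂ := q - l * (l + 1)) (a := 1)
      (b := 1) (m := b - 1) le_rfl (by omega)
    rw [show 1 + (b - 1) = b by omega] at htriv
    calc (p : ℝ) ^ (2 * q) * F.pairSum (l * (l + 1)) (q - l * (l + 1)) 1 1
        ≤ (p : ℝ) ^ (2 * q) * ((p : ℝ) ^ (b * q) *
            (C * (p : ℝ) ^ ((η + 1 / (2 * R)) * n - κ l * η * b) * F.total)) := by
          refine mul_le_mul_of_nonneg_left (htriv.trans ?_) (by positivity)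
          refine mul_le_mul ?_ (hle.trans hmix) (F.pairSum_nonneg _ _ _ _) (by positivity)
          exact pow_le_pow_right₀ hp1 (Nat.mul_le_mul (by omega) (by omega))
      _ = C * (p : ℝ) ^ (((2 * q : ℕ) : ℝ) + (((b * q : ℕ) : ℝ) +
            ((η + 1 / (2 * R)) * n - κ l * η * b))) * F.total := by
          rw [Real.rpow_add hp0, Real.rpow_add hp0, Real.rpow_natCast, Real.rpow_natCast]
          ring
      _ ≤ C * (p : ℝ) ^ (((2 * q + Q : ℕ) : ℝ) + η' * n) * F.total := by
          refine mul_le_mul_of_nonneg_right (mul_le_mul_of_nonneg_left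
            (Real.rpow_le_rpow_of_exponent_le hp1 ?_) hC0) hnn
          have h1 : ((q : ℝ) + 1) * b ≤ κ l * η * b := by gcongr
          have h2 : (η - 1 / (2 * R)) * n ≤ η' * n := by
            gcongr
            exact le_max_left _ _
          have h3 : 1 / (2 * (R : ℝ)) * n + 1 / (2 * (R : ℝ)) * n = n / R := by
            field_simp
            ring
          push_cast
          linarith
      _ = C * (p : ℝ) ^ (2 * q + Q) * (p : ℝ) ^ (η' * n) * F.total := by
          rw [Real.rpow_add hp0, Real.rpow_natCast]
          ring
      _ ≤ _ := by
          gcongr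
          exact le_max_right _ _
  refine ⟨2 * C', by positivity, fun n => ?_⟩
  induction n with
  | zero =>
    refine (decBound_trivial (by omega) 0).mono ?_
    have h1 : (1 : ℝ) ≤ C' := le_trans (one_le_pow₀ hp1) (le_max_left _ _)
    simp
    linarith
  | succ n ih =>
    have hstep : C' * (p : ℝ) ^ (η' * n) ≤ C' * (p : ℝ) ^ (η' * ((n + 1 : ℕ) : ℝ)) := by
      gcongr
      omega
    rcases le_or_gt N₀ (n + 1) with hn | hn
    · refine decBound_of_system fun F => ?_
      have hnn := F.total_nonneg
      refine (F.sum_norm_pow_le (e₁ := l * (l + 1)) (e₂ := q - l * (l + 1))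
        (Nat.add_sub_cancel' (mul_succ_le_mul_succ hlk.le)) (by omega) ih).trans ?_
      have h1 := hpair _ F hn
      have h2 := mul_le_mul_of_nonneg_right (two_pow_mul_rpow_neg_le (x := (p : ℝ)) hk (by exact_mod_cast hp32))
        (by positivity : 0 ≤ 2 * C' * (p : ℝ) ^ (η' * n) * F.total)
      have h3 := mul_le_mul_of_nonneg_right hstep hnn
      calc _ = 2 ^ (k * (k + 1)) * (p : ℝ) ^ (-((k : ℝ) * (k + 1) / 2 - 1)) *
            (2 * C' * (p : ℝ) ^ (η' * n) * F.total) + (p : ℝ) ^ (2 * q) *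
              F.pairSum (l * (l + 1)) (q - l * (l + 1)) 1 1 := by ring
        _ ≤ _ := by linarith
    · refine (decBound_trivial (by omega) _).mono ?_
      have h1 : (p : ℝ) ^ ((n + 1) * (k * (k + 1))) ≤ C' :=
        le_trans (pow_le_pow_right₀ hp1 (Nat.mul_le_mul_right _ hn.le)) (le_max_left _ _)
      have h2 : (1 : ℝ) ≤ (p : ℝ) ^ (η' * ((n + 1 : ℕ) : ℝ)) :=
        Real.one_le_rpow hp1 (by positivity)
      nlinarith

/-- Decoupling for curves resembling the moment curve, with arbitrarily small exponent. -/
theorem decoupled_of_pos {k : ℕ} (hk : 1 ≤ k) (hkp : k < p) (hp32 : 32 ≤ p) {ε : ℝ} (hε : 0 < ε) :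
    Decoupled p k ε := by
  induction k using Nat.strong_induction_on generalizing ε with
  | _ k ih =>
  have hp1 : (1 : ℝ) ≤ p := System.one_le_p
  rcases hk.eq_or_lt with rfl | hk
  · refine ⟨1, zero_le_one, fun n => (decBound_one n).mono ?_⟩
    rw [one_mul]
    exact Real.one_le_rpow hp1 (by positivity)
  · obtain ⟨δ, hδ, himp⟩ := exists_improvement hk hkp hp32
      (fun l hl hlk ε hε => ih l hlk hl (hlk.trans hkp) hε) hε
    have hiter : ∀ i : ℕ, Decoupled p k (max (((k * (k + 1) : ℕ) : ℝ) - i * δ) ε) := by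
      intro i
      induction i with
      | zero =>
        refine Decoupled.mono ⟨1, zero_le_one, fun n => (decBound_trivial (by omega) n).mono ?_⟩
          (le_max_left _ _)
        rw [one_mul, Nat.cast_zero, zero_mul, sub_zero, ← Nat.cast_mul, Real.rpow_natCast, mul_comm]
      | succ i ih =>
        refine (himp _ (le_max_right _ _) ih).mono ?_
        push_cast
        rcases le_total (((k : ℝ) * (k + 1)) - i * δ) ε with h | h
        · rw [max_eq_right h]
          exact max_le ((by linarith : ε - δ ≤ ε).trans (le_max_right _ _))
            (hε.le.trans (le_max_right _ _))
        · rw [max_eq_left h]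
          exact max_le (le_trans (by linarith) (le_max_left _ _)) (hε.le.trans (le_max_right _ _))
    obtain ⟨i, hi⟩ := exists_nat_gt (((k * (k + 1) : ℕ) : ℝ) / δ)
    rw [div_lt_iff₀ hδ] at hi
    refine (hiter i).mono (max_le ?_ le_rfl)
    linarith

end Iteration

section MeanValue

variable {p : ℕ} [hp : Fact p.Prime]

/-- The moment curve. -/
noncomputable def momentCurve (p : ℕ) [Fact p.Prime] (k : ℕ) (j : Fin k) : ℤ_[p][X] :=
  X ^ ((j : ℕ) + 1)

lemma isMomentLike_momentCurve (k : ℕ) : IsMomentLike p (momentCurve p k) :=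
  fun j => ⟨0, by simp [momentCurve]⟩

/-- The Vinogradov exponential sum over `0 ≤ i < p ^ n`. -/
noncomputable def weylSum (p : ℕ) [Fact p.Prime] (k n : ℕ) (c : Freq p k (k * n)) : ℂ :=
  expSum (momentCurve p k) (k * n) (fun i => (i : ℤ_[p])) (fun _ => 1) (range (p ^ n)) c

lemma norm_weylSum_le (k n : ℕ) (c : Freq p k (k * n)) : ‖weylSum p k n c‖ ≤ (p : ℝ) ^ n := by
  rw [weylSum, expSum]
  refine (norm_sum_le _ _).trans (le_of_eq ?_)
  simp [norm_phase]

/-- The critical moment of the Vinogradov exponential sum. -/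
lemma sum_norm_weylSum_pow_le {k n : ℕ} {D : ℝ} (hD0 : 0 ≤ D) (hD : DecBound p k n D) :
    ∑ c, ‖weylSum p k n c‖ ^ (k * (k + 1)) ≤
      D * (p : ℝ) ^ ((n : ℝ) * ((k : ℝ) * (k + 1) / 2)) * Fintype.card (Freq p k (k * n)) := by
  have hp0 : (0 : ℝ) < p := System.pos_p
  refine (hD _ (isMomentLike_momentCurve k) (range (p ^ n)) (fun i => (i : ℤ_[p]))
    (fun _ => 1)).trans ?_
  have hcell : ∀ J ∈ range (p ^ n),
      (cell p (range (p ^ n)) (fun i => (i : ℤ_[p])) n J).card ≤ 1 := by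
    intro J hJ
    refine Finset.card_le_one.mpr fun i hi j hj => ?_
    have aux : ∀ i ∈ cell p (range (p ^ n)) (fun i => (i : ℤ_[p])) n J, i = J := fun i hi =>
      (inClass_natCast.mp (mem_cell.mp hi).2).eq_of_lt_of_lt
        (Finset.mem_range.mp (mem_cell.mp hi).1) (Finset.mem_range.mp hJ)
    rw [aux i hi, aux j hj]
  have hsum : ∑ J ∈ range (p ^ n), ∑ c, ‖expSum (momentCurve p k) (k * n)
      (fun i => (i : ℤ_[p])) (fun _ => 1) (cell p (range (p ^ n)) (fun i => (i : ℤ_[p])) n J) c‖ ^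
        (k * (k + 1)) ≤ ∑ J ∈ range (p ^ n), ∑ c : Freq p k (k * n), 1 := by
    refine Finset.sum_le_sum fun J hJ => Finset.sum_le_sum fun c _ => ?_
    refine pow_le_one₀ (norm_nonneg _) ?_
    rw [expSum]
    refine (norm_sum_le _ _).trans ?_
    simpa [norm_phase] using hcell J hJ
  refine (mul_le_mul_of_nonneg_left hsum (by positivity)).trans (le_of_eq ?_)
  rw [show (n : ℝ) * ((k : ℝ) * (k + 1) / 2) = (n : ℝ) * ((k : ℝ) * (k + 1) / 2 - 1) + n by ring,
    Real.rpow_add hp0, Real.rpow_natCast]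
  simp
  ring

lemma phase_momentCurve (k M i : ℕ) (c : Freq p k M) :
    phase (momentCurve p k) M (i : ℤ_[p]) c =
      ZMod.stdAddChar (∑ j, c j * (i : ZMod (p ^ M)) ^ ((j : ℕ) + 1)) := by
  simp [phase, momentCurve]

lemma weylSum_pow (k n u : ℕ) (c : Freq p k (k * n)) :
    weylSum p k n c ^ u = ∑ a ∈ Fintype.piFinset fun _ : Fin u => range (p ^ n),
      ZMod.stdAddChar (∑ j, c j * ∑ i, (a i : ZMod (p ^ (k * n))) ^ ((j : ℕ) + 1)) := by
  rw [weylSum, expSum]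
  simp only [one_mul, phase_momentCurve]
  rw [← Fin.prod_const, Finset.prod_univ_sum]
  refine Finset.sum_congr rfl fun a _ => ?_
  rw [← stdAddChar_sum, Finset.sum_comm]
  simp only [Finset.mul_sum]

/-- The number of solutions of the Vinogradov system is a moment of the exponential sum. -/
lemma Jcount_mul_card_le {k n u : ℕ} {X : ℝ} (hX : X < (p : ℝ) ^ n) :
    (Jcount u k X : ℝ) * Fintype.card (Freq p k (k * n)) ≤ ∑ c, ‖weylSum p k n c‖ ^ (2 * u) := by
  classical
  set T := Fintype.piFinset fun _ : Fin u => range (p ^ n) with hT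
  let d : (Fin u → ℕ) × (Fin u → ℕ) → Fin k → ZMod (p ^ (k * n)) := fun t j =>
    ∑ i, (t.1 i : ZMod (p ^ (k * n))) ^ ((j : ℕ) + 1) -
      ∑ i, (t.2 i : ZMod (p ^ (k * n))) ^ ((j : ℕ) + 1)
  have hmoment : ((∑ c, ‖weylSum p k n c‖ ^ (2 * u) : ℝ) : ℂ) =
      ((((T ×ˢ T).filter fun t => d t = 0).card * Fintype.card (Freq p k (k * n)) : ℝ) : ℂ) := by
    have h1 : ∀ c, ((‖weylSum p k n c‖ ^ (2 * u) : ℝ) : ℂ) =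
        ∑ t ∈ T ×ˢ T, ZMod.stdAddChar (∑ j, c j * d t j) := by
      intro c
      rw [mul_comm 2 u, pow_mul, ← norm_pow]
      push_cast
      rw [← Complex.mul_conj', weylSum_pow, map_sum, Finset.sum_mul_sum, Finset.sum_product]
      refine Finset.sum_congr rfl fun a _ => Finset.sum_congr rfl fun b _ => ?_
      rw [← AddChar.map_neg_eq_conj, ← AddChar.map_add_eq_mul]
      simp only [d, mul_sub, Finset.sum_sub_distrib]
      rw [sub_eq_add_neg]
    rw [Complex.ofReal_sum, Finset.sum_congr rfl fun c _ => h1 c, Finset.sum_comm]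
    rw [Finset.sum_congr rfl fun t _ => sum_stdAddChar_pairing (d t), ← Finset.sum_filter,
      Finset.sum_const, nsmul_eq_mul]
    push_cast
    rfl
  rw [Complex.ofReal_inj] at hmoment
  rw [hmoment]
  refine mul_le_mul_of_nonneg_right ?_ (by positivity)
  rw [Nat.cast_le, Jcount, ← Set.ncard_coe_finset]
  refine Set.ncard_le_ncard_of_injOn
    (fun xy => (fun i => (xy.1 i).toNat, fun i => (xy.2 i).toNat)) ?_ ?_ (Finset.finite_toSet _)
  · rintro ⟨x, y⟩ ⟨hx, hy, hxy⟩
    have hmem : ∀ z : Fin u → ℤ, (∀ i, 1 ≤ z i ∧ (z i : ℝ) ≤ X) →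
        (fun i => (z i).toNat) ∈ T := by
      intro z hz
      rw [hT, Fintype.mem_piFinset]
      intro i
      rw [Finset.mem_range]
      have h1 : ((z i : ℤ) : ℝ) < ((p ^ n : ℕ) : ℝ) := by
        push_cast
        exact (hz i).2.trans_lt hX
      have h2 : z i < ((p ^ n : ℕ) : ℤ) := by exact_mod_cast h1
      have := (hz i).1
      omega
    have hcast : ∀ z : Fin u → ℤ, (∀ i, 1 ≤ z i ∧ (z i : ℝ) ≤ X) → ∀ i,
        (((z i).toNat : ℕ) : ZMod (p ^ (k * n))) = ((z i : ℤ) : ZMod (p ^ (k * n))) := by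
      intro z hz i
      have : (((z i).toNat : ℕ) : ℤ) = z i := Int.toNat_of_nonneg (by linarith [(hz i).1])
      rw [← Int.cast_natCast, this]
    rw [Finset.mem_coe, Finset.mem_filter, Finset.mem_product]
    refine ⟨⟨hmem x hx, hmem y hy⟩, funext fun j => ?_⟩
    have h := hxy ((j : ℕ) + 1) (Finset.mem_Icc.mpr ⟨by omega, j.2⟩)
    have h' := congrArg (Int.cast : ℤ → ZMod (p ^ (k * n))) h
    push_cast at h'
    simp only [d, hcast x hx, hcast y hy, Pi.zero_apply]
    rw [← Finset.sum_sub_distrib]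
    exact h'
  · rintro ⟨x, y⟩ ⟨hx, hy, -⟩ ⟨x', y'⟩ ⟨hx', hy', -⟩ heq
    simp only [Prod.mk.injEq] at heq ⊢
    constructor
    · funext i
      have := congrFun heq.1 i
      have h1 : 1 ≤ x i := (hx i).1
      have h2 : 1 ≤ x' i := (hx' i).1
      omega
    · funext i
      have := congrFun heq.2 i
      have h1 : 1 ≤ y i := (hy i).1
      have h2 : 1 ≤ y' i := (hy' i).1
      omega

end MeanValue

section Asymptotics

lemma pow_le_pow_mul_one_add {t A : ℝ} (ht : 0 ≤ t) (hA : 0 < A) {e q : ℕ} (heq : e ≤ q) :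
    t ^ e ≤ A ^ e * (1 + (t / A) ^ q) := by
  have h1 : t ^ e = A ^ e * (t / A) ^ e := by rw [← mul_pow, mul_div_cancel₀ _ hA.ne']
  rw [h1]
  refine mul_le_mul_of_nonneg_left ?_ (by positivity)
  have hnn : 0 ≤ t / A := by positivity
  rcases le_total (t / A) 1 with h | h
  · have := pow_le_one₀ hnn h (n := e)
    have : 0 ≤ (t / A) ^ q := by positivity
    linarith
  · have := pow_le_pow_right₀ h heq
    linarith

/-- Moments of the Vinogradov exponential sum, away from the critical exponent. -/
lemma sum_norm_weylSum_pow_two_mul_le {p : ℕ} [Fact p.Prime] {k n u : ℕ} {C ε E : ℝ} (hC : 1 ≤ C)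
    (hε : 0 ≤ ε) (hD : DecBound p k n (C * (p : ℝ) ^ (ε * n))) (hE₁ : (u : ℝ) ≤ E)
    (hE₂ : 2 * (u : ℝ) - k * (k + 1) / 2 ≤ E) :
    ∑ c, ‖weylSum p k n c‖ ^ (2 * u) ≤
      2 * C * (p : ℝ) ^ ((E + ε) * n) * Fintype.card (Freq p k (k * n)) := by
  have hp0 : (0 : ℝ) < p := System.pos_p
  have hp1 : (1 : ℝ) ≤ p := System.one_le_p
  set V : ℝ := (Fintype.card (Freq p k (k * n)) : ℝ) with hV
  have hV0 : 0 ≤ V := by positivity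
  have hcrit := sum_norm_weylSum_pow_le (by positivity) hD
  set q := k * (k + 1) with hq
  have hqR : (q : ℝ) = (k : ℝ) * (k + 1) := by rw [hq]; push_cast; ring
  rw [← hqR] at hcrit hE₂
  rcases le_total q (2 * u) with h | h
  · calc ∑ c, ‖weylSum p k n c‖ ^ (2 * u)
        ≤ ∑ c, ((p : ℝ) ^ n) ^ (2 * u - q) * ‖weylSum p k n c‖ ^ q := by
          refine Finset.sum_le_sum fun c _ => ?_
          rw [← Nat.sub_add_cancel h, pow_add, Nat.add_sub_cancel]
          gcongr
          exact norm_weylSum_le k n c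
      _ ≤ ((p : ℝ) ^ n) ^ (2 * u - q) *
            (C * (p : ℝ) ^ (ε * n) * (p : ℝ) ^ ((n : ℝ) * ((q : ℝ) / 2)) * V) := by
          rw [← Finset.mul_sum]
          gcongr
      _ = C * (p : ℝ) ^ ((n : ℝ) * (2 * u - q) + ε * n + (n : ℝ) * ((q : ℝ) / 2)) * V := by
          rw [Real.rpow_add hp0, Real.rpow_add hp0, ← pow_mul, ← Real.rpow_natCast (p : ℝ) (n * _)]
          push_cast [Nat.cast_sub h]
          ring
      _ ≤ C * (p : ℝ) ^ ((E + ε) * n) * V := by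
          gcongr
          have : (2 * (u : ℝ) - q / 2) * n ≤ E * n := by gcongr
          linarith
      _ ≤ 2 * C * (p : ℝ) ^ ((E + ε) * n) * V := by
          gcongr
          linarith
  · set A : ℝ := (p : ℝ) ^ ((n : ℝ) / 2) with hA
    have hA0 : 0 < A := by positivity
    have hApow : ∀ e : ℕ, A ^ e = (p : ℝ) ^ ((n : ℝ) / 2 * e) := fun e => by
      rw [hA, ← Real.rpow_natCast, ← Real.rpow_mul hp0.le]
    calc ∑ c, ‖weylSum p k n c‖ ^ (2 * u)
        ≤ ∑ c, A ^ (2 * u) * (1 + (‖weylSum p k n c‖ / A) ^ q) :=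
          Finset.sum_le_sum fun c _ => pow_le_pow_mul_one_add (norm_nonneg _) hA0 h
      _ = A ^ (2 * u) * (V + (∑ c, ‖weylSum p k n c‖ ^ q) / A ^ q) := by
          rw [← Finset.mul_sum, Finset.sum_add_distrib, Finset.sum_div]
          simp [div_pow, hV]
      _ ≤ A ^ (2 * u) * (V +
            (C * (p : ℝ) ^ (ε * n) * (p : ℝ) ^ ((n : ℝ) * ((q : ℝ) / 2)) * V) / A ^ q) := by
          gcongr
      _ = (p : ℝ) ^ ((u : ℝ) * n) * V * (1 + C * (p : ℝ) ^ (ε * n)) := by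
          have e1 : A ^ q = (p : ℝ) ^ ((n : ℝ) * ((q : ℝ) / 2)) := by
            rw [hApow]; ring_nf
          have e2 : A ^ (2 * u) = (p : ℝ) ^ ((u : ℝ) * n) := by
            rw [hApow]; push_cast; ring_nf
          rw [e1, e2]
          have : (p : ℝ) ^ ((n : ℝ) * ((q : ℝ) / 2)) ≠ 0 := by positivity
          field_simp
      _ ≤ (p : ℝ) ^ (E * n) * V * (C * (p : ℝ) ^ (ε * n) + C * (p : ℝ) ^ (ε * n)) := by
          have h1 : (1 : ℝ) ≤ (p : ℝ) ^ (ε * n) := Real.one_le_rpow hp1 (by positivity)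
          have h2 : 1 ≤ C * (p : ℝ) ^ (ε * n) := by nlinarith
          gcongr
      _ = _ := by
          rw [add_mul, Real.rpow_add hp0]
          ring

/-- The main conjecture in Vinogradov's mean value theorem. -/
theorem exists_Jcount_le {k u : ℕ} (hk : 1 ≤ k) {E ε : ℝ} (hE₁ : (u : ℝ) ≤ E)
    (hE₂ : 2 * (u : ℝ) - k * (k + 1) / 2 ≤ E) (hε : 0 < ε) :
    ∃ C : ℝ, 1 ≤ C ∧ ∀ X : ℝ, 1 ≤ X → (Jcount u k X : ℝ) ≤ C * X ^ (E + ε) := by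
  obtain ⟨p, hpk, hprime⟩ := Nat.exists_infinite_primes (k + 32)
  have : Fact p.Prime := ⟨hprime⟩
  have hp0 : (0 : ℝ) < p := System.pos_p
  have hp1 : (1 : ℝ) < p := by exact_mod_cast hprime.one_lt
  have hE0 : 0 ≤ E := le_trans (by positivity) hE₁
  obtain ⟨C, -, hC⟩ := decoupled_of_pos (p := p) hk (by omega) (by omega) hε
  have hC1 : 1 ≤ max C 1 := le_max_right _ _
  refine ⟨2 * max C 1 * (p : ℝ) ^ (E + ε), ?_, fun X hX => ?_⟩
  · have : 1 ≤ (p : ℝ) ^ (E + ε) := Real.one_le_rpow hp1.le (by positivity)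
    nlinarith
  obtain ⟨m, hm, hX'⟩ := exists_nat_pow_near hX hp1
  have hV : (0 : ℝ) < Fintype.card (Freq p k (k * (m + 1))) := by
    exact_mod_cast Fintype.card_pos
  have hmoment := (Jcount_mul_card_le (p := p) (u := u) (k := k) hX').trans
    (sum_norm_weylSum_pow_two_mul_le hC1 hε.le ((hC (m + 1)).mono (by gcongr; exact le_max_left _ _))
      hE₁ hE₂)
  refine (le_of_mul_le_mul_right hmoment hV).trans ?_
  have h1 : (p : ℝ) ^ ((E + ε) * ((m + 1 : ℕ) : ℝ)) = (p : ℝ) ^ (E + ε) * ((p : ℝ) ^ m) ^ (E + ε) := by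
    rw [← Real.rpow_natCast (p : ℝ) m, ← Real.rpow_mul hp0.le, ← Real.rpow_add hp0]
    push_cast
    ring_nf
  rw [h1, mul_assoc (2 * max C 1)]
  gcongr

open Filter in
lemma limsup_log_Jcount_le {k u : ℕ} (hk : 1 ≤ k) {E : ℝ} (hE₁ : (u : ℝ) ≤ E)
    (hE₂ : 2 * (u : ℝ) - k * (k + 1) / 2 ≤ E) :
    limsup (fun X : ℝ => Real.log (Jcount u k X : ℝ) / Real.log X) atTop ≤ E := by
  have hcob : IsCoboundedUnder (· ≤ ·) atTop
      (fun X : ℝ => Real.log (Jcount u k X : ℝ) / Real.log X) := by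
    refine IsBoundedUnder.isCoboundedUnder_le ⟨0, ?_⟩
    rw [eventually_map]
    filter_upwards [eventually_ge_atTop 1] with X hX
    exact div_nonneg (Real.log_natCast_nonneg _) (Real.log_nonneg hX)
  refine le_of_forall_pos_le_add fun ε hε => ?_
  have hE0 : 0 ≤ E := le_trans (by positivity) hE₁
  obtain ⟨C, hC1, hC⟩ := exists_Jcount_le hk hE₁ hE₂ (half_pos hε)
  refine limsup_le_of_le hcob ?_
  filter_upwards [eventually_gt_atTop 1,
    Real.tendsto_log_atTop.eventually_ge_atTop (2 * Real.log C / ε)] with X hX1 hX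
  have hlog : 0 < Real.log X := Real.log_pos hX1
  have hlogC : 0 ≤ Real.log C := Real.log_nonneg hC1
  have hX0 : 0 < X := by linarith
  have hJ : Real.log (Jcount u k X : ℝ) ≤ Real.log C + (E + ε / 2) * Real.log X := by
    rcases Nat.eq_zero_or_pos (Jcount u k X) with h0 | h0
    · rw [h0, Nat.cast_zero, Real.log_zero]
      positivity
    · refine (Real.log_le_log (by exact_mod_cast h0) (hC X hX1.le)).trans (le_of_eq ?_)
      rw [Real.log_mul (by positivity) (by positivity), Real.log_rpow hX0]
  rw [div_le_iff₀ hlog]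
  rw [div_le_iff₀ hε] at hX
  linarith

end Asymptotics

section Exponents

lemma kappa_le_mul {k r t : ℕ} (ht : 2 ≤ t) (hr : 1 ≤ r) (hrt : k ≤ r + t) :
    kappa k r t ≤ (r : ℝ) * (t + 1) := by
  obtain ⟨m, hm⟩ : ∃ m, r + t = k + m := ⟨r + t - k, by omega⟩
  have hm' : (r : ℝ) + t = k + m := by exact_mod_cast hm
  have ht' : (2 : ℝ) ≤ t := by exact_mod_cast ht
  have hr' : (1 : ℝ) ≤ r := by exact_mod_cast hr
  rw [kappa, show (t : ℝ) + r - k = m by linarith]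
  have hc : 0 ≤ (2 * (r : ℝ) - 2) / (t - 1) := div_nonneg (by linarith) (by linarith)
  rcases Nat.eq_zero_or_pos m with rfl | h0
  · simp
  · have h1 : (1 : ℝ) ≤ m := by exact_mod_cast h0
    have : 0 ≤ 1 / 2 * (m : ℝ) * (m - 1 + (2 * (r : ℝ) - 2) / (t - 1)) :=
      mul_nonneg (by positivity) (by linarith)
    linarith

lemma kappa_le_critical {k r t : ℕ} (ht : 2 ≤ t) (htk : t ≤ k) (hrk : r ≤ k) (hr : 1 ≤ r)
    (hrt : k ≤ r + t) : kappa k r t ≤ (k : ℝ) * (k + 1) / 2 := by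
  obtain ⟨m, hm⟩ : ∃ m, r + t = k + m := ⟨r + t - k, by omega⟩
  have hm' : (k : ℝ) = r + t - m := by
    have : (r : ℝ) + t = k + m := by exact_mod_cast hm
    linarith
  have ht' : (2 : ℝ) ≤ t := by exact_mod_cast ht
  have hr' : (1 : ℝ) ≤ r := by exact_mod_cast hr
  have hmr : (m : ℝ) ≤ r := by exact_mod_cast (by omega : m ≤ r)
  have hmt : (m : ℝ) ≤ t := by exact_mod_cast (by omega : m ≤ t)
  have hm0 : (0 : ℝ) ≤ m := by positivity
  set c : ℝ := ((r : ℝ) - 1) / (t - 1) with hc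
  have ht1 : (0 : ℝ) < t - 1 := by linarith
  have hct : c * (t - 1) = r - 1 := div_mul_cancel₀ _ ht1.ne'
  have h2c : (2 * (r : ℝ) - 2) / (t - 1) = 2 * c := by rw [hc]; ring
  rw [kappa, h2c, hm']
  suffices h : 0 ≤ (m : ℝ) ^ 2 - m * (t + r + 1) + (t ^ 2 + r ^ 2 + t - r) / 2 + m * c by linarith
  rcases lt_or_ge r t with hlt | hge
  · have he : (r : ℝ) + 1 ≤ t := by exact_mod_cast hlt
    have hc1 : c ≤ 1 := by rw [hc, div_le_one ht1]; linarith
    have h1 : 0 ≤ ((r : ℝ) - m) * (t + 1 - m - c) := mul_nonneg (by linarith) (by linarith)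
    have h2 : (r : ℝ) * (1 - c) ≤ ((t : ℝ) - r) * (t - r + 1) / 2 := by
      have e1 : (1 - c) * ((t : ℝ) - 1) = t - r := by linear_combination -hct
      refine le_of_mul_le_mul_right ?_ ht1
      have e2 : (r : ℝ) * (1 - c) * (t - 1) = r * (t - r) := by rw [mul_assoc, e1]
      rw [e2]
      nlinarith [mul_nonneg (mul_nonneg (by linarith : (0 : ℝ) ≤ t - r)
        (by linarith : (0 : ℝ) ≤ t - r - 1)) (by linarith : (0 : ℝ) ≤ t + 1)]
    nlinarith
  · have hd : (t : ℝ) ≤ r := by exact_mod_cast hge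
    have hc1 : 1 ≤ c := by rw [hc, one_le_div ht1]; linarith
    have h3 : 0 ≤ ((r : ℝ) - t) * (r - t - 1) := by
      rcases hge.eq_or_lt with h | h
      · rw [h]; simp
      · have : (t : ℝ) + 1 ≤ r := by exact_mod_cast h
        exact mul_nonneg (by linarith) (by linarith)
    have h4 : 0 ≤ ((r : ℝ) - t) * (t - m) := mul_nonneg (by linarith) (by linarith)
    have h5 : 0 ≤ (m : ℝ) * (c - 1) := mul_nonneg hm0 (by linarith)
    nlinarith [sq_nonneg ((t : ℝ) - m)]

end Exponents

end Vinogradov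

/-- Lemma 7.2 (in the form concluding the proof of Theorem 1.3): with s = rt,
limsup_{X → ∞} log J_{s+r,k}(X) / log X ≤ 2(s+r) - κ. -/
theorem limsup_J_le (k r t : ℕ) (hk : 2 ≤ k)
    (ht1 : max 2 (((k : ℝ) - 1) / 2) ≤ (t : ℝ)) (ht2 : t ≤ k)
    (hr1 : 1 ≤ r) (hr2 : r ≤ k) (hrt : k ≤ r + t) :
    Filter.limsup
        (fun X : ℝ => Real.log ((Jcount (r * (t + 1)) k X : ℝ)) / Real.log X)
        Filter.atTop
      ≤ 2 * ((r * (t + 1) : ℕ) : ℝ) - kappa k r t := by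
  have ht : 2 ≤ t := by exact_mod_cast (le_max_left _ _).trans ht1
  refine Vinogradov.limsup_log_Jcount_le (by omega) ?_ ?_
  · have := Vinogradov.kappa_le_mul ht hr1 hrt
    push_cast
    linarith
  · have := Vinogradov.kappa_le_critical ht ht2 hr2 hr1 hrt
    linarith
end

section
/- Let k ≥ 3 and s be natural numbers, and let c₀ > 0 and ε > 0. There exists a constant C = C(s,k,ε,c₀) such that the following holds whenever X is sufficiently large in terms of s, k, ε, c₀. Let Q be a real number with 1 < Q ≤ X^{(k−2)/(k−1)}, and let 𝒬 ⊆ (2^{−k}Q, Q] be a set of natural numbers with card(𝒬) ≥ c₀·Q·(log Q)^{−k} such that every q ∈ 𝒬 is coprime to k. Then Θ_{s,k}(𝒬) ≤ C·(X/Q)^{2s − (k²−k+2)/2 + ε}·((X/Q)^{η(s,k)−1} + (X/Q)^{η(s,k−1)}). -/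
/-- η(s,k): the least positive η such that, for each ε > 0,
J_{s,k}(X) ≤ C X^{2s - k(k+1)/2 + η + ε} for all sufficiently large X. -/
noncomputable def etaExp (s k : ℕ) : ℝ :=
  sInf {η : ℝ | 0 < η ∧ ∀ ε : ℝ, 0 < ε → ∃ C X₀ : ℝ, 0 < C ∧ ∀ X : ℝ, X₀ ≤ X →
    (Jcount s k X : ℝ) ≤ C * X ^ (2*(s:ℝ) - (k:ℝ)*((k:ℝ)+1)/2 + η + ε)}

/-- I_{s,m}(X;q,b): the number of integral solutions of the system (8.1), i.e. of
∑_i ((q x_i + b)^k - (q y_i + b)^k) = 0 and ∑_i (x_i^j - y_i^j) = 0 (1 ≤ j ≤ m-1),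
with 0 ≤ x_i, y_i ≤ X/q. -/
noncomputable def Icount (s k m : ℕ) (X : ℝ) (q : ℕ) (b : ℤ) : ℕ :=
  Set.ncard {xy : (Fin s → ℤ) × (Fin s → ℤ) |
    (∀ i, 0 ≤ xy.1 i ∧ (xy.1 i : ℝ) ≤ X / q) ∧
    (∀ i, 0 ≤ xy.2 i ∧ (xy.2 i : ℝ) ≤ X / q) ∧
    (∑ i, (((q:ℤ) * xy.1 i + b)^k - ((q:ℤ) * xy.2 i + b)^k) = 0) ∧
    ∀ j ∈ Finset.Icc 1 (m-1), ∑ i, ((xy.1 i)^j - (xy.2 i)^j) = 0}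

/-- Θ_{s,k}(𝒬) = ∑_{q ∈ 𝒬} max_{(b,q)=1} I_{s,k-1}(X;q,b). -/
noncomputable def ThetaSum (s k : ℕ) (X : ℝ) (Q : Finset ℕ) : ℕ :=
  ∑ q ∈ Q, sSup {v : ℕ | ∃ b : ℤ, IsCoprime b (q:ℤ) ∧ v = Icount s k (k-1) X q b}

/-- The divisor bound: `d(n) ≪ n ^ δ` for every `δ > 0`. -/
theorem exists_card_divisors_le_rpow (δ : ℝ) (hδ : 0 < δ) :
    ∃ C : ℝ, 0 < C ∧ ∀ n : ℕ, n ≠ 0 → (n.divisors.card : ℝ) ≤ C * (n : ℝ) ^ δ := by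
  have hl : 0 < δ * Real.log 2 := mul_pos hδ (Real.log_pos one_lt_two)
  set K : ℝ := 1 + 1 / (δ * Real.log 2) with hK
  have hK1 : 1 ≤ K := by
    have := one_div_pos.2 hl
    linarith
  obtain ⟨N, hN⟩ := exists_nat_ge ((2 : ℝ) ^ (1 / δ))
  refine ⟨K ^ N, by positivity, fun n hn => ?_⟩
  have hprime : ∀ p ∈ n.primeFactors, ((n.factorization p + 1 : ℕ) : ℝ) ≤
      (if p < N then K else 1) * ((p : ℝ) ^ n.factorization p) ^ δ := by
    intro p hp
    have hp2 : (2 : ℝ) ≤ p := by exact_mod_cast (Nat.prime_of_mem_primeFactors hp).two_le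
    set a := n.factorization p
    have hcomm : ((p : ℝ) ^ a) ^ δ = ((p : ℝ) ^ δ) ^ a := by
      rw [← Real.rpow_natCast, ← Real.rpow_natCast, ← Real.rpow_mul (by linarith),
        ← Real.rpow_mul (by linarith), mul_comm]
    split_ifs with hpN
    · have hexp : 1 + a * (δ * Real.log 2) ≤ ((p : ℝ) ^ a) ^ δ := by
        rw [hcomm]
        calc 1 + a * (δ * Real.log 2) ≤ Real.exp (a * (δ * Real.log 2)) := by
              linarith [Real.add_one_le_exp (a * (δ * Real.log 2))]
          _ = ((2 : ℝ) ^ δ) ^ a := by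
              rw [Real.exp_nat_mul, Real.rpow_def_of_pos two_pos, mul_comm δ]
          _ ≤ ((p : ℝ) ^ δ) ^ a := by gcongr
      refine le_trans ?_ (mul_le_mul_of_nonneg_left hexp (by linarith))
      have hexpand : K * (1 + a * (δ * Real.log 2)) =
          1 + a + (1 / (δ * Real.log 2) + a * (δ * Real.log 2)) := by
        rw [hK]
        field_simp
        ring
      rw [hexpand]
      have : 0 ≤ 1 / (δ * Real.log 2) + a * (δ * Real.log 2) := by positivity
      push_cast
      linarith
    · have h2 : (2 : ℝ) ≤ (p : ℝ) ^ δ := by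
        have hle : (2 : ℝ) ^ (1 / δ) ≤ p := hN.trans (by exact_mod_cast not_lt.1 hpN)
        calc (2 : ℝ) = ((2 : ℝ) ^ (1 / δ)) ^ δ := by
              rw [← Real.rpow_mul two_pos.le, one_div_mul_cancel hδ.ne', Real.rpow_one]
          _ ≤ (p : ℝ) ^ δ := by gcongr
      rw [one_mul, hcomm]
      calc ((a + 1 : ℕ) : ℝ) ≤ (2 : ℝ) ^ a := by exact_mod_cast a.lt_two_pow_self
        _ ≤ ((p : ℝ) ^ δ) ^ a := by gcongr
  calc (n.divisors.card : ℝ) = ∏ p ∈ n.primeFactors, ((n.factorization p + 1 : ℕ) : ℝ) := by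
        rw [Nat.card_divisors hn, Nat.cast_prod]
    _ ≤ ∏ p ∈ n.primeFactors, (if p < N then K else 1) * ((p : ℝ) ^ n.factorization p) ^ δ :=
        Finset.prod_le_prod (fun _ _ => by positivity) hprime
    _ = (∏ p ∈ n.primeFactors, if p < N then K else 1) * (n : ℝ) ^ δ := by
        rw [Finset.prod_mul_distrib, Real.finsetProd_rpow _ _ (fun _ _ => by positivity)]
        congr 2
        exact_mod_cast Nat.prod_factorization_pow_eq_self hn
    _ ≤ K ^ N * (n : ℝ) ^ δ := by
        gcongr
        rw [Finset.prod_ite, Finset.prod_const_one, mul_one, Finset.prod_const]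
        refine pow_le_pow_right₀ hK1 ?_
        calc _ ≤ (Finset.range N).card :=
              Finset.card_le_card fun p hp => Finset.mem_range.2 (Finset.mem_filter.1 hp).2
          _ = N := Finset.card_range N

/-- The number of solutions of `Φ z = Φ w + v` is largest for `v = 0`. -/
theorem card_filter_eq_add_le {α G : Type*} [AddCommGroup G] [DecidableEq G]
    (A : Finset α) (Φ : α → G) (v : G) :
    ((A ×ˢ A).filter fun z => Φ z.1 = Φ z.2 + v).card ≤
      ((A ×ˢ A).filter fun z => Φ z.1 = Φ z.2).card := by
  set r : G → ℕ := fun g => (A.filter fun z => Φ z = g).card with hr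
  have hcount : ∀ u : G, ((A ×ˢ A).filter fun z => Φ z.1 = Φ z.2 + u).card =
      ∑ g ∈ A.image Φ, r g * r (g + u) := by
    intro u
    have hfib : ∀ g ∈ A.image Φ, r g * r (g + u) =
        ∑ w ∈ A.filter (fun w => Φ w = g), r (Φ w + u) := by
      intro g _
      rw [Finset.sum_congr rfl fun w hw => by rw [(Finset.mem_filter.1 hw).2], Finset.sum_const,
        smul_eq_mul]
    rw [Finset.sum_congr rfl hfib,
      Finset.sum_fiberwise_of_maps_to (fun w hw => Finset.mem_image_of_mem Φ hw),
      Finset.card_filter, Finset.sum_product_right]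
    simp only [hr, Finset.card_filter]
  have hshift : ∑ g ∈ A.image Φ, r (g + v) ^ 2 ≤ ∑ g ∈ A.image Φ, r g ^ 2 := by
    refine (Finset.sum_map (A.image Φ) (addRightEmbedding v) fun g => r g ^ 2).symm.le.trans ?_
    refine Finset.sum_le_sum_of_ne_zero fun g _ hg => ?_
    have hne : (A.filter fun z => Φ z = g).Nonempty := by
      rw [← Finset.card_pos]
      exact Nat.pos_of_ne_zero fun h0 => hg (by simp [hr, h0])
    obtain ⟨z, hz⟩ := hne
    exact Finset.mem_image.2 ⟨z, (Finset.mem_filter.1 hz).1, (Finset.mem_filter.1 hz).2⟩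
  have hzero := hcount 0
  simp only [add_zero] at hzero
  rw [hcount v, hzero]
  have hcs : 2 * ∑ g ∈ A.image Φ, r g * r (g + v) ≤
      ∑ g ∈ A.image Φ, r g ^ 2 + ∑ g ∈ A.image Φ, r (g + v) ^ 2 := by
    rw [Finset.mul_sum, ← Finset.sum_add_distrib]
    refine Finset.sum_le_sum fun g _ => ?_
    zify
    nlinarith [sq_nonneg ((r g : ℤ) - r (g + v))]
  have hsq : ∑ g ∈ A.image Φ, r g * r g = ∑ g ∈ A.image Φ, r g ^ 2 :=
    Finset.sum_congr rfl fun g _ => (sq _).symm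
  omega

/-- Binomial expansion of a difference of power sums at affinely substituted arguments. -/
theorem sum_affine_pow_sub {s : ℕ} (x y : Fin s → ℤ) (a c : ℤ) (n : ℕ) :
    ∑ i, ((a * x i + c) ^ n - (a * y i + c) ^ n) =
      ∑ j ∈ Finset.range (n + 1), a ^ j * c ^ (n - j) * n.choose j * ∑ i, (x i ^ j - y i ^ j) := by
  simp_rw [Finset.mul_sum]
  rw [Finset.sum_comm]
  refine Finset.sum_congr rfl fun i _ => ?_
  rw [add_pow, add_pow, ← Finset.sum_sub_distrib]
  refine Finset.sum_congr rfl fun j _ => ?_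
  rw [mul_pow, mul_pow]
  ring

/-- If the power sums of degree less than `n` agree, an affine substitution affects only the top
two terms of the expansion in degree `n + 1`. -/
theorem sum_affine_pow_succ_sub {s n : ℕ} {x y : Fin s → ℤ}
    (h : ∀ j ∈ Finset.Icc 1 (n - 1), ∑ i, (x i ^ j - y i ^ j) = 0) (a c : ℤ) :
    ∑ i, ((a * x i + c) ^ (n + 1) - (a * y i + c) ^ (n + 1)) =
      a ^ n * (c * (n + 1) * ∑ i, (x i ^ n - y i ^ n) +
        a * ∑ i, (x i ^ (n + 1) - y i ^ (n + 1))) := by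
  rw [sum_affine_pow_sub, Finset.sum_range_succ, Finset.sum_range_succ, Finset.sum_eq_zero]
  · simp [pow_succ]
    ring
  · intro j hj
    rcases Nat.eq_zero_or_pos j with rfl | hj0
    · simp
    · rw [h j (Finset.mem_Icc.2 ⟨hj0, by have := Finset.mem_range.1 hj; omega⟩), mul_zero]

/-- If the power sums of degree less than `n` agree, the difference in degree at most `n` is
translation invariant. -/
theorem sum_translate_pow_sub {s n : ℕ} {x y : Fin s → ℤ}
    (h : ∀ j ∈ Finset.Icc 1 (n - 1), ∑ i, (x i ^ j - y i ^ j) = 0) (c : ℤ) {m : ℕ} (hm : m ≤ n) :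
    ∑ i, ((x i + c) ^ m - (y i + c) ^ m) = ∑ i, (x i ^ m - y i ^ m) := by
  have hexp := sum_affine_pow_sub x y 1 c m
  simp only [one_mul] at hexp
  rw [hexp, Finset.sum_range_succ, Finset.sum_eq_zero]
  · simp
  · intro j hj
    rcases Nat.eq_zero_or_pos j with rfl | hj0
    · simp
    · rw [h j (Finset.mem_Icc.2 ⟨hj0, by have := Finset.mem_range.1 hj; omega⟩), mul_zero]

/-- The power sums of degrees `1, …, k` of two integral vectors coincide. -/
def PowerSumsAgree {s : ℕ} (k : ℕ) (x y : Fin s → ℤ) : Prop :=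
  ∀ j ∈ Finset.Icc 1 k, ∑ i, (x i ^ j - y i ^ j) = 0

instance {s k : ℕ} {x y : Fin s → ℤ} : Decidable (PowerSumsAgree k x y) :=
  Finset.decidableDforallFinset

/-- The solutions of the Vinogradov system of degree `k` with variables in `[1, R]`. -/
noncomputable def vinogradovSolutions (s k R : ℕ) : Finset ((Fin s → ℤ) × (Fin s → ℤ)) :=
  ((Fintype.piFinset fun _ => Finset.Icc 1 (R : ℤ)) ×ˢ
    (Fintype.piFinset fun _ => Finset.Icc 1 (R : ℤ))).filter
    fun xy => PowerSumsAgree k xy.1 xy.2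

theorem Jcount_natCast (s k R : ℕ) : Jcount s k R = (vinogradovSolutions s k R).card := by
  rw [Jcount, ← Set.ncard_coe_finset]
  congr 1
  ext xy
  simp only [vinogradovSolutions, Set.mem_ofPred_eq, Finset.coe_filter, Finset.mem_product,
    Fintype.mem_piFinset, and_assoc]
  simp only [PowerSumsAgree, Finset.mem_Icc]
  norm_cast

theorem abs_sum_pow_sub_le {s k R : ℕ} {x y : Fin s → ℤ} (hx : ∀ i, 0 ≤ x i ∧ x i ≤ R)
    (hy : ∀ i, 0 ≤ y i ∧ y i ≤ R) : |∑ i, (x i ^ k - y i ^ k)| ≤ s * (R : ℤ) ^ k := by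
  refine (Finset.abs_sum_le_sum_abs _ _).trans ?_
  refine (Finset.sum_le_card_nsmul _ _ ((R : ℤ) ^ k) fun i _ => ?_).trans (by simp)
  have hx' := pow_le_pow_left₀ (hx i).1 (hx i).2 k
  have hy' := pow_le_pow_left₀ (hy i).1 (hy i).2 k
  have hx0 := pow_nonneg (hx i).1 k
  have hy0 := pow_nonneg (hy i).1 k
  rw [abs_le]
  constructor <;> linarith

/-- The solutions counted by `Icount` for which the difference of the power sums of degree `n` is
`q * h` are bounded, after averaging over translations and an application of the Cauchy inequality,
by solutions of the Vinogradov system of degree `n`. -/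
theorem sq_mul_card_le_sum_card {s n q T : ℕ} (hn : 1 ≤ n) (u h : ℤ)
    (S : Finset ((Fin s → ℤ) × (Fin s → ℤ)))
    (hx : ∀ xy ∈ S, ∀ i, 0 ≤ xy.1 i ∧ xy.1 i ≤ T) (hy : ∀ xy ∈ S, ∀ i, 0 ≤ xy.2 i ∧ xy.2 i ≤ T)
    (hlow : ∀ xy ∈ S, ∀ j ∈ Finset.Icc 1 (n - 1), ∑ i, (xy.1 i ^ j - xy.2 i ^ j) = 0)
    (hmid : ∀ xy ∈ S, ∑ i, (xy.1 i ^ n - xy.2 i ^ n) = q * h)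
    (htop : ∀ xy ∈ S, ∑ i, (xy.1 i ^ (n + 1) - xy.2 i ^ (n + 1)) = u) :
    T ^ 2 * S.card ≤ ∑ xy ∈ vinogradovSolutions s n (3 * T),
      ((Finset.range T ×ˢ Finset.range T).filter fun t =>
        ((n : ℤ) + 1) * q * h * ((t.1 : ℤ) - t.2) =
          ∑ i, (xy.1 i ^ (n + 1) - xy.2 i ^ (n + 1))).card := by
  classical
  set B : Finset (Fin s → ℤ) := Fintype.piFinset fun _ => Finset.Icc 1 ((3 * T : ℕ) : ℤ) with hB
  set A : Finset ((Fin s → ℤ) × ℕ) := B ×ˢ Finset.range T with hA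
  set Φ : (Fin s → ℤ) × ℕ → (ℕ → ℤ) × ℤ := fun z =>
    (fun j => if j ∈ Finset.Icc 1 n then ∑ i, z.1 i ^ j else 0,
      ∑ i, z.1 i ^ (n + 1) - ((n : ℤ) + 1) * q * h * z.2) with hΦ
  set v : (ℕ → ℤ) × ℤ := (fun j => if j = n then q * h else 0,
    T * (n + 1) * (q * h) + u) with hv
  have hinj : T ^ 2 * S.card ≤ ((A ×ˢ A).filter fun z => Φ z.1 = Φ z.2 + v).card := by
    have hcard : T ^ 2 * S.card = (S ×ˢ (Finset.range T ×ˢ Finset.range T)).card := by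
      simp only [Finset.card_product, Finset.card_range]
      ring
    rw [hcard]
    refine Finset.card_le_card_of_injOn
      (fun w => ((fun i => w.1.1 i + (T + w.2.1 - w.2.2), w.2.1),
        (fun i => w.1.2 i + (T + w.2.1 - w.2.2), w.2.2))) ?_ ?_
    · rintro ⟨⟨x, y⟩, t, t'⟩ hw
      simp only [Finset.coe_product, Set.mem_prod, Finset.mem_coe, Finset.mem_range] at hw
      obtain ⟨hS, ht, ht'⟩ := hw
      have hxS := hx _ hS
      have hyS := hy _ hS
      have hlowS := hlow _ hS
      have hmidS := hmid _ hS
      have htopS := htop _ hS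
      simp only at hxS hyS hlowS hmidS htopS
      simp only [Finset.coe_filter, Set.mem_ofPred_eq, Finset.mem_product, hA, hB,
        Fintype.mem_piFinset, Finset.mem_Icc, Finset.mem_range]
      refine ⟨⟨⟨fun i => ?_, ht⟩, fun i => ?_, ht'⟩, ?_⟩
      · have := hxS i
        push_cast
        omega
      · have := hyS i
        push_cast
        omega
      · simp only [hΦ, hv, Prod.mk_add_mk, Prod.mk.injEq]
        refine ⟨funext fun j => ?_, ?_⟩
        · simp only [Pi.add_apply]
          by_cases hj : j ∈ Finset.Icc 1 n
          · have hjn := Finset.mem_Icc.1 hj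
            have htr := sum_translate_pow_sub hlowS ((T : ℤ) + t - t') hjn.2
            rw [Finset.sum_sub_distrib] at htr
            rw [if_pos hj, if_pos hj, ← sub_eq_iff_eq_add', htr]
            split_ifs with hjeq
            · rw [hjeq, hmidS]
            · exact hlowS j (Finset.mem_Icc.2 ⟨hjn.1, by omega⟩)
          · have hjn : j ≠ n := fun hjn => hj (Finset.mem_Icc.2 ⟨hjn ▸ hn, hjn.le⟩)
            simp [hj, hjn]
        · have htr := sum_affine_pow_succ_sub hlowS 1 ((T : ℤ) + t - t')
          simp only [one_mul, one_pow] at htr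
          rw [Finset.sum_sub_distrib, hmidS, htopS] at htr
          linear_combination htr
    · rintro ⟨⟨x, y⟩, t, t'⟩ _ ⟨⟨x₂, y₂⟩, t₂, t₂'⟩ _ heq
      simp only [Prod.mk.injEq] at heq
      obtain ⟨⟨h₁, rfl⟩, h₂, rfl⟩ := heq
      have e₁ : x = x₂ := funext fun i => by simpa using congrFun h₁ i
      have e₂ : y = y₂ := funext fun i => by simpa using congrFun h₂ i
      rw [e₁, e₂]
  refine (hinj.trans (card_filter_eq_add_le A Φ v)).trans ?_
  rw [← Finset.card_sigma]
  refine Finset.card_le_card_of_injOn (fun z => ⟨(z.1.1, z.2.1), (z.1.2, z.2.2)⟩) ?_ ?_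
  · rintro ⟨⟨x, t⟩, y, t'⟩ hz
    simp only [Finset.coe_filter, Set.mem_ofPred_eq, Finset.mem_product, hA, hΦ, Prod.mk.injEq] at hz
    obtain ⟨⟨⟨hxB, ht⟩, hyB, ht'⟩, hlo, hhi⟩ := hz
    simp only [Finset.coe_sigma, Set.mem_sigma_iff, Finset.mem_coe, vinogradovSolutions,
      Finset.mem_filter, Finset.mem_product]
    refine ⟨⟨⟨hxB, hyB⟩, fun j hj => ?_⟩, ⟨ht, ht'⟩, ?_⟩
    · have := congrFun hlo j
      simp only [hj, if_true] at this
      rw [Finset.sum_sub_distrib, this, sub_self]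
    · rw [Finset.sum_sub_distrib]
      linear_combination -hhi
  · rintro ⟨⟨x, t⟩, y, t'⟩ _ ⟨⟨x₂, t₂⟩, y₂, t₂'⟩ _ heq
    simp only [Sigma.mk.injEq, Prod.mk.injEq, heq_eq_eq] at heq
    obtain ⟨⟨rfl, rfl⟩, rfl, rfl⟩ := heq
    rfl

theorem sq_mul_Icount_le {s n q T H : ℕ} {X : ℝ} {b : ℤ} (hn : 2 ≤ n) (hq : 0 < q)
    (hqb : IsCoprime b (q : ℤ)) (hqn : q.Coprime (n + 1)) (hXT : X / q ≤ T)
    (hH : s * T ^ n < q * (H + 1)) :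
    T ^ 2 * Icount s (n + 1) n X q b ≤ ∑ h ∈ Finset.Icc (-(H : ℤ)) H,
      ∑ xy ∈ vinogradovSolutions s n (3 * T),
      ((Finset.range T ×ˢ Finset.range T).filter fun t =>
        ((n : ℤ) + 1) * q * h * ((t.1 : ℤ) - t.2) =
          ∑ i, (xy.1 i ^ (n + 1) - xy.2 i ^ (n + 1))).card := by
  have hq0 : (q : ℤ) ≠ 0 := by exact_mod_cast hq.ne'
  set S : Finset ((Fin s → ℤ) × (Fin s → ℤ)) :=
    ((Fintype.piFinset fun _ => Finset.Icc 0 (T : ℤ)) ×ˢ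
      (Fintype.piFinset fun _ => Finset.Icc 0 (T : ℤ))).filter fun xy =>
      (∑ i, (((q : ℤ) * xy.1 i + b) ^ (n + 1) - ((q : ℤ) * xy.2 i + b) ^ (n + 1)) = 0) ∧
      PowerSumsAgree (n - 1) xy.1 xy.2 with hS
  have hIS : Icount s (n + 1) n X q b ≤ S.card := by
    rw [Icount, ← Set.ncard_coe_finset]
    refine Set.ncard_le_ncard ?_ (Finset.finite_toSet _)
    rintro ⟨x, y⟩ ⟨hx, hy, heq, hlow⟩
    simp only [hS, Finset.coe_filter, Set.mem_ofPred_eq, Finset.mem_product, Fintype.mem_piFinset]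
    simp only [Finset.mem_Icc (a := (0 : ℤ))]
    exact ⟨⟨fun i => ⟨(hx i).1, by exact_mod_cast (hx i).2.trans hXT⟩,
      fun i => ⟨(hy i).1, by exact_mod_cast (hy i).2.trans hXT⟩⟩, heq, hlow⟩
  have hrel : ∀ xy ∈ S, b * (n + 1) * ∑ i, (xy.1 i ^ n - xy.2 i ^ n) +
      q * ∑ i, (xy.1 i ^ (n + 1) - xy.2 i ^ (n + 1)) = 0 := by
    intro xy hxy
    obtain ⟨_, heq, hlow⟩ := Finset.mem_filter.1 hxy
    rw [sum_affine_pow_succ_sub hlow] at heq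
    exact (mul_eq_zero.1 heq).resolve_left (pow_ne_zero _ hq0)
  have hdvd : ∀ xy ∈ S, (q : ℤ) ∣ ∑ i, (xy.1 i ^ n - xy.2 i ^ n) := by
    intro xy hxy
    have hcop : IsCoprime (q : ℤ) (b * (n + 1)) := by
      refine IsCoprime.mul_right hqb.symm ?_
      exact_mod_cast Nat.isCoprime_iff_coprime.2 hqn
    refine hcop.dvd_of_dvd_mul_left ⟨-∑ i, (xy.1 i ^ (n + 1) - xy.2 i ^ (n + 1)), ?_⟩
    linear_combination hrel xy hxy
  have hbox : ∀ xy ∈ S, (∀ i, 0 ≤ xy.1 i ∧ xy.1 i ≤ T) ∧ (∀ i, 0 ≤ xy.2 i ∧ xy.2 i ≤ T) := by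
    intro xy hxy
    simpa only [Finset.mem_product, Fintype.mem_piFinset, Finset.mem_Icc] using
      (Finset.mem_filter.1 hxy).1
  have hmaps : ∀ xy ∈ S, (∑ i, (xy.1 i ^ n - xy.2 i ^ n)) / q ∈ Finset.Icc (-(H : ℤ)) H := by
    intro xy hxy
    obtain ⟨h, hh⟩ := hdvd xy hxy
    rw [hh, Int.mul_ediv_cancel_left _ hq0, Finset.mem_Icc, ← abs_le]
    have habs : |(q : ℤ) * h| ≤ s * T ^ n := by
      rw [← hh]
      exact abs_sum_pow_sub_le (hbox xy hxy).1 (hbox xy hxy).2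
    have hH' : (s : ℤ) * T ^ n < q * (H + 1) := by exact_mod_cast hH
    rw [abs_mul, Nat.abs_cast] at habs
    have := lt_of_mul_lt_mul_left (habs.trans_lt hH') (Int.natCast_nonneg q)
    omega
  refine (Nat.mul_le_mul_left _ hIS).trans ?_
  rw [Finset.card_eq_sum_card_fiberwise hmaps, Finset.mul_sum]
  refine Finset.sum_le_sum fun h _ => ?_
  have hmid : ∀ xy ∈ S.filter (fun xy => (∑ i, (xy.1 i ^ n - xy.2 i ^ n)) / (q : ℤ) = h),
      ∑ i, (xy.1 i ^ n - xy.2 i ^ n) = q * h := by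
    intro xy hxy
    obtain ⟨hxyS, hh⟩ := Finset.mem_filter.1 hxy
    rw [← hh, Int.mul_ediv_cancel' (hdvd xy hxyS)]
  refine sq_mul_card_le_sum_card (by omega) (-(b * (n + 1) * h)) h _
    (fun xy hxy => (hbox xy (Finset.mem_filter.1 hxy).1).1)
    (fun xy hxy => (hbox xy (Finset.mem_filter.1 hxy).1).2)
    (fun xy hxy => (Finset.mem_filter.1 (Finset.mem_filter.1 hxy).1).2.2) hmid fun xy hxy => ?_
  have hxyS := hrel xy (Finset.mem_filter.1 hxy).1
  rw [hmid xy hxy] at hxyS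
  refine mul_left_cancel₀ hq0 ?_
  linear_combination hxyS

/-- Bound for the number of representations of zero in the form `a * q * h * (t - u)`. -/
theorem sum_card_filter_mul_eq_zero_le {a T H : ℕ} (ha : a ≠ 0) (𝒬 : Finset ℕ)
    (h𝒬 : ∀ q ∈ 𝒬, 0 < q) :
    ∑ q ∈ 𝒬, ∑ h ∈ Finset.Icc (-(H : ℤ)) H,
      ((Finset.range T ×ˢ Finset.range T).filter fun t =>
        (a : ℤ) * q * h * ((t.1 : ℤ) - t.2) = 0).card ≤ 𝒬.card * (T ^ 2 + (2 * H + 1) * T) := by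
  rw [← smul_eq_mul]
  refine Finset.sum_le_card_nsmul _ _ _ fun q hq => ?_
  have hq0 : (a : ℤ) * q ≠ 0 := by
    exact_mod_cast mul_ne_zero ha (h𝒬 q hq).ne'
  have hterm : ∀ h ∈ Finset.Icc (-(H : ℤ)) H,
      ((Finset.range T ×ˢ Finset.range T).filter fun t =>
        (a : ℤ) * q * h * ((t.1 : ℤ) - t.2) = 0).card ≤ (if h = 0 then T ^ 2 else 0) + T := by
    intro h _
    split_ifs with hh
    · refine (Finset.card_filter_le _ _).trans ?_
      rw [Finset.card_product, Finset.card_range]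
      nlinarith
    · rw [zero_add]
      refine (Finset.card_le_card_of_injOn (t := Finset.range T) Prod.fst ?_ ?_).trans
        (Finset.card_range T).le
      · intro t ht
        exact (Finset.mem_product.1 (Finset.mem_filter.1 ht).1).1
      · rintro ⟨t, t'⟩ ht ⟨u, u'⟩ hu rfl
        have ht' := (Finset.mem_filter.1 ht).2
        have hu' := (Finset.mem_filter.1 hu).2
        have e₁ := (mul_eq_zero.1 ht').resolve_left (mul_ne_zero hq0 hh)
        have e₂ := (mul_eq_zero.1 hu').resolve_left (mul_ne_zero hq0 hh)
        simp only at e₁ e₂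
        rw [Prod.mk.injEq]
        omega
  refine (Finset.sum_le_sum hterm).trans ?_
  rw [Finset.sum_add_distrib, Finset.sum_ite_eq' _ (0 : ℤ), if_pos (by simp), Finset.sum_const,
    Int.card_Icc, smul_eq_mul]
  have : ((H : ℤ) + 1 - -(H : ℤ)).toNat = 2 * H + 1 := by omega
  rw [this]

/-- Bound for the number of representations of `m ≠ 0` in the form `a * q * h * (t - u)`. -/
theorem sum_card_filter_mul_eq_le {a T H : ℕ} {m : ℤ} (hm : m ≠ 0) (𝒬 : Finset ℕ) :
    ∑ q ∈ 𝒬, ∑ h ∈ Finset.Icc (-(H : ℤ)) H,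
      ((Finset.range T ×ˢ Finset.range T).filter fun t =>
        (a : ℤ) * q * h * ((t.1 : ℤ) - t.2) = m).card ≤ 2 * m.natAbs.divisors.card ^ 2 * T := by
  set D := m.natAbs.divisors with hD
  set E : Finset ℤ := D.image (fun d : ℕ => (d : ℤ)) ∪ D.image (fun d : ℕ => -(d : ℤ)) with hE
  have hEcard : E.card ≤ 2 * D.card := by
    refine (Finset.card_union_le _ _).trans ?_
    have h₁ := Finset.card_image_le (s := D) (f := fun d : ℕ => (d : ℤ))
    have h₂ := Finset.card_image_le (s := D) (f := fun d : ℕ => -(d : ℤ))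
    omega
  have hcount : ∀ (q : ℕ) (h : ℤ), ((Finset.range T ×ˢ Finset.range T).filter fun t =>
      (a : ℤ) * q * h * ((t.1 : ℤ) - t.2) = m).card ≤ if q ∈ D ∧ h ∈ E then T else 0 := by
    intro q h
    rcases Finset.eq_empty_or_nonempty ((Finset.range T ×ˢ Finset.range T).filter fun t =>
      (a : ℤ) * q * h * ((t.1 : ℤ) - t.2) = m) with hemp | ⟨t₀, ht₀⟩
    · rw [hemp]
      simp
    · have heq := (Finset.mem_filter.1 ht₀).2
      have hqD : q ∈ D := by
        refine Nat.mem_divisors.2 ⟨Int.natCast_dvd.1 ?_, Int.natAbs_ne_zero.2 hm⟩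
        exact ⟨a * h * ((t₀.1 : ℤ) - t₀.2), by rw [← heq]; ring⟩
      have hhD : h.natAbs ∈ D := by
        refine Nat.mem_divisors.2 ⟨Int.natAbs_dvd_natAbs.2 ?_, Int.natAbs_ne_zero.2 hm⟩
        exact ⟨a * q * ((t₀.1 : ℤ) - t₀.2), by rw [← heq]; ring⟩
      have hhE : h ∈ E := by
        rw [hE, Finset.mem_union, Finset.mem_image, Finset.mem_image]
        rcases Int.natAbs_eq h with hh | hh
        · exact Or.inl ⟨_, hhD, hh.symm⟩
        · exact Or.inr ⟨_, hhD, hh.symm⟩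
      rw [if_pos ⟨hqD, hhE⟩]
      refine (Finset.card_le_card_of_injOn (t := Finset.range T) Prod.fst ?_ ?_).trans
        (Finset.card_range T).le
      · intro t ht
        exact (Finset.mem_product.1 (Finset.mem_filter.1 ht).1).1
      · rintro ⟨t, t'⟩ ht ⟨u, u'⟩ hu rfl
        have ht' := (Finset.mem_filter.1 ht).2
        have hu' := (Finset.mem_filter.1 hu).2
        have hne : (a : ℤ) * q * h ≠ 0 := fun h0 => hm (by rw [← heq, h0, zero_mul])
        have := mul_left_cancel₀ hne (ht'.trans hu'.symm)
        simp only at this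
        rw [Prod.mk.injEq]
        omega
  calc _ ≤ ∑ q ∈ 𝒬, ∑ h ∈ Finset.Icc (-(H : ℤ)) H, if q ∈ D ∧ h ∈ E then T else 0 :=
        Finset.sum_le_sum fun q _ => Finset.sum_le_sum fun h _ => hcount q h
    _ = (((𝒬 ×ˢ Finset.Icc (-(H : ℤ)) H).filter fun z => z.1 ∈ D ∧ z.2 ∈ E).card) * T := by
        rw [← Finset.sum_product', ← Finset.sum_filter, Finset.sum_const, smul_eq_mul]
    _ ≤ (D ×ˢ E).card * T := by
        gcongr
        intro z hz
        exact Finset.mem_product.2 (Finset.mem_filter.1 hz).2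
    _ ≤ 2 * D.card ^ 2 * T := by
        rw [Finset.card_product]
        exact Nat.mul_le_mul_right _ (by nlinarith)

theorem sq_mul_ThetaSum_le {s n T H D : ℕ} {X : ℝ} (hn : 2 ≤ n) (hT : 0 < T) (𝒬 : Finset ℕ)
    (hpos : ∀ q ∈ 𝒬, 0 < q) (hcop : ∀ q ∈ 𝒬, q.Coprime (n + 1)) (hXT : ∀ q ∈ 𝒬, X / q ≤ T)
    (hH : ∀ q ∈ 𝒬, s * T ^ n < q * (H + 1))
    (hD : ∀ m : ℕ, m ≠ 0 → m ≤ s * (3 * T) ^ (n + 1) → m.divisors.card ≤ D) :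
    T ^ 2 * ThetaSum s (n + 1) X 𝒬 ≤
      Jcount s (n + 1) (3 * T : ℕ) * (𝒬.card * (T ^ 2 + (2 * H + 1) * T)) +
        Jcount s n (3 * T : ℕ) * (2 * D ^ 2 * T) := by
  set V := vinogradovSolutions s n (3 * T) with hV
  set Δ : (Fin s → ℤ) × (Fin s → ℤ) → ℤ :=
    fun xy => ∑ i, (xy.1 i ^ (n + 1) - xy.2 i ^ (n + 1)) with hΔ
  set N : ℕ → ℤ → (Fin s → ℤ) × (Fin s → ℤ) → ℕ := fun q h xy =>
    ((Finset.range T ×ˢ Finset.range T).filter fun t =>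
      ((n + 1 : ℕ) : ℤ) * q * h * ((t.1 : ℤ) - t.2) = Δ xy).card with hN
  have hq : ∀ q ∈ 𝒬, T ^ 2 * sSup {v : ℕ | ∃ b : ℤ, IsCoprime b (q : ℤ) ∧
      v = Icount s (n + 1) n X q b} ≤ ∑ h ∈ Finset.Icc (-(H : ℤ)) H, ∑ xy ∈ V, N q h xy := by
    intro q hq
    refine (Nat.mul_le_mul_left _ (csSup_le' ?_)).trans (Nat.mul_div_le _ (T ^ 2))
    rintro _ ⟨b, hb, rfl⟩
    rw [Nat.le_div_iff_mul_le (by positivity), mul_comm]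
    have := sq_mul_Icount_le hn (hpos q hq) hb (hcop q hq) (hXT q hq) (hH q hq)
    simpa only [hN, hΔ, hV, Nat.cast_add, Nat.cast_one] using this
  have hV0 : (V.filter fun xy => Δ xy = 0).card ≤ Jcount s (n + 1) (3 * T : ℕ) := by
    rw [Jcount_natCast]
    refine Finset.card_le_card fun xy hxy => ?_
    obtain ⟨hxyV, h0⟩ := Finset.mem_filter.1 hxy
    obtain ⟨hbox, hagree⟩ := Finset.mem_filter.1 hxyV
    refine Finset.mem_filter.2 ⟨hbox, fun j hj => ?_⟩
    obtain ⟨hj1, hj2⟩ := Finset.mem_Icc.1 hj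
    rcases hj2.lt_or_eq with hlt | rfl
    · exact hagree j (Finset.mem_Icc.2 ⟨hj1, by omega⟩)
    · exact h0
  have hterm : ∀ xy ∈ V, ∑ q ∈ 𝒬, ∑ h ∈ Finset.Icc (-(H : ℤ)) H, N q h xy ≤
      (if Δ xy = 0 then 𝒬.card * (T ^ 2 + (2 * H + 1) * T) else 0) + 2 * D ^ 2 * T := by
    intro xy hxy
    split_ifs with h0
    · simp only [hN, h0]
      exact (sum_card_filter_mul_eq_zero_le n.succ_ne_zero 𝒬 hpos).trans (Nat.le_add_right _ _)
    · rw [zero_add]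
      refine (sum_card_filter_mul_eq_le h0 𝒬).trans ?_
      have hbox := (Finset.mem_filter.1 hxy).1
      simp only [Finset.mem_product, Fintype.mem_piFinset, Finset.mem_Icc] at hbox
      have habs : |Δ xy| ≤ s * ((3 * T : ℕ) : ℤ) ^ (n + 1) :=
        abs_sum_pow_sub_le (fun i => ⟨by linarith [(hbox.1 i).1], (hbox.1 i).2⟩)
          (fun i => ⟨by linarith [(hbox.2 i).1], (hbox.2 i).2⟩)
      have := hD (Δ xy).natAbs (Int.natAbs_ne_zero.2 h0) (by
        zify
        exact_mod_cast habs)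
      gcongr
  calc T ^ 2 * ThetaSum s (n + 1) X 𝒬
      ≤ ∑ q ∈ 𝒬, ∑ h ∈ Finset.Icc (-(H : ℤ)) H, ∑ xy ∈ V, N q h xy := by
        rw [ThetaSum, Finset.mul_sum]
        exact Finset.sum_le_sum hq
    _ = ∑ xy ∈ V, ∑ q ∈ 𝒬, ∑ h ∈ Finset.Icc (-(H : ℤ)) H, N q h xy := by
        rw [Finset.sum_comm]
        refine Eq.trans ?_ Finset.sum_comm
        rw [Finset.sum_comm]
        exact Finset.sum_congr rfl fun q _ => Finset.sum_comm
    _ ≤ ∑ xy ∈ V, ((if Δ xy = 0 then 𝒬.card * (T ^ 2 + (2 * H + 1) * T) else 0) +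
          2 * D ^ 2 * T) := Finset.sum_le_sum hterm
    _ = (V.filter fun xy => Δ xy = 0).card * (𝒬.card * (T ^ 2 + (2 * H + 1) * T)) +
          V.card * (2 * D ^ 2 * T) := by
        rw [Finset.sum_add_distrib, ← Finset.sum_filter, Finset.sum_const, Finset.sum_const,
          smul_eq_mul, smul_eq_mul]
    _ ≤ _ := by
        rw [Jcount_natCast s n]
        gcongr

theorem Jcount_eq_Jcount_floor (s k : ℕ) {X : ℝ} (hX : 0 ≤ X) :
    Jcount s k X = Jcount s k (⌊X⌋₊ : ℝ) := by
  have hle : ∀ x : ℤ, (x : ℝ) ≤ X ↔ (x : ℝ) ≤ (⌊X⌋₊ : ℝ) := fun x => by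
    rw [natCast_floor_eq_intCast_floor hX, Int.cast_le, Int.le_floor]
  simp only [Jcount, hle]

theorem Jcount_le_pow (s k : ℕ) {X : ℝ} (hX : 0 ≤ X) : (Jcount s k X : ℝ) ≤ X ^ (2 * s) := by
  rw [Jcount_eq_Jcount_floor s k hX, Jcount_natCast]
  calc ((vinogradovSolutions s k ⌊X⌋₊).card : ℝ) ≤ ((⌊X⌋₊ ^ s * ⌊X⌋₊ ^ s : ℕ) : ℝ) := by
        gcongr
        refine (Finset.card_filter_le _ _).trans ?_
        simp
    _ = (⌊X⌋₊ : ℝ) ^ (2 * s) := by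
        push_cast
        ring
    _ ≤ X ^ (2 * s) := by
        gcongr
        exact Nat.floor_le hX

/-- The exponent `etaExp s k` is admissible up to an arbitrarily small loss. -/
theorem exists_Jcount_le_rpow_etaExp (s k : ℕ) (δ : ℝ) (hδ : 0 < δ) :
    ∃ C X₀ : ℝ, 0 < C ∧ ∀ X : ℝ, X₀ ≤ X →
      (Jcount s k X : ℝ) ≤ C * X ^ (2 * (s : ℝ) - (k : ℝ) * ((k : ℝ) + 1) / 2 + etaExp s k + δ) := by
  set A : Set ℝ := {η : ℝ | 0 < η ∧ ∀ ε : ℝ, 0 < ε → ∃ C X₀ : ℝ, 0 < C ∧ ∀ X : ℝ, X₀ ≤ X →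
    (Jcount s k X : ℝ) ≤ C * X ^ (2 * (s : ℝ) - (k : ℝ) * ((k : ℝ) + 1) / 2 + η + ε)} with hA
  have hne : A.Nonempty := by
    refine ⟨(k : ℝ) * ((k : ℝ) + 1) / 2 + 1, by positivity, fun ε hε => ⟨1, 1, one_pos, ?_⟩⟩
    intro X hX
    rw [one_mul]
    refine (Jcount_le_pow s k (by linarith)).trans ?_
    rw [← Real.rpow_natCast]
    refine Real.rpow_le_rpow_of_exponent_le hX ?_
    push_cast
    linarith
  obtain ⟨η, hη, hlt⟩ := Real.lt_sInf_add_pos hne (half_pos hδ)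
  obtain ⟨C, X₀, hC, hbound⟩ := hη.2 (δ / 2) (half_pos hδ)
  refine ⟨C, max X₀ 1, hC, fun X hX => (hbound X ((le_max_left _ _).trans hX)).trans ?_⟩
  gcongr C * ?_
  refine Real.rpow_le_rpow_of_exponent_le ((le_max_right _ _).trans hX) ?_
  have : sInf A = etaExp s k := rfl
  linarith

theorem rpow_le_mul_rpow_of_le_mul {P R M : ℝ} (hP : 0 < P) (hPR : P ≤ R) (hRM : R ≤ M * P)
    (e : ℝ) : R ^ e ≤ M ^ |e| * P ^ e := by
  have hlam : 1 ≤ R / P := (one_le_div hP).2 hPR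
  calc R ^ e = (R / P) ^ e * P ^ e := by
        rw [← Real.mul_rpow (by positivity) hP.le, div_mul_cancel₀ _ hP.ne']
    _ ≤ (R / P) ^ |e| * P ^ e := by
        exact mul_le_mul_of_nonneg_right
          (Real.rpow_le_rpow_of_exponent_le hlam (le_abs_self e)) (by positivity)
    _ ≤ M ^ |e| * P ^ e := by
        gcongr
        exact (div_le_iff₀ hP).2 hRM

/-- The arithmetic deducing a bound for `θ` from the mean value estimate for `T ^ 2 * θ`. -/
theorem le_add_of_sq_mul_le {n : ℕ} (hn : 1 ≤ n) {P T M Q c H σ J₁ J₂ D θ : ℝ} (hP : 0 < P)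
    (hPT : P ≤ T) (hTM : T ≤ M * P) (hT : 1 ≤ T) (hH : 0 ≤ H) (hσ : 0 ≤ σ)
    (hcQ : c ≤ Q) (hHQ : H * Q ≤ σ * T ^ n) (hQP : Q ≤ P ^ (n - 1)) (hJ₁ : 0 ≤ J₁) (hJ₂ : 0 ≤ J₂)
    (h : T ^ 2 * θ ≤ J₁ * (c * (T ^ 2 + (2 * H + 1) * T)) + J₂ * (2 * D ^ 2 * T)) :
    θ ≤ J₁ * ((2 + 2 * σ) * M ^ (n - 1) * P ^ (n - 1)) + J₂ * (2 * D ^ 2) / P := by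
  have hT0 : 0 < T := by linarith
  have hQT : Q ≤ T ^ (n - 1) := hQP.trans (by gcongr)
  have hpow : T ^ n = T ^ (n - 1) * T := by rw [← pow_succ, Nat.sub_add_cancel hn]
  have hcount : c * (T ^ 2 + (2 * H + 1) * T) ≤ T ^ 2 * ((2 + 2 * σ) * T ^ (n - 1)) := by
    calc c * (T ^ 2 + (2 * H + 1) * T) ≤ Q * (T ^ 2 + (2 * H + 1) * T) := by gcongr
      _ = Q * (T ^ 2 + T) + 2 * (H * Q) * T := by ring
      _ ≤ T ^ (n - 1) * (T ^ 2 + T ^ 2) + 2 * (σ * T ^ n) * T := by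
          gcongr
          nlinarith
      _ = T ^ 2 * ((2 + 2 * σ) * T ^ (n - 1)) := by
          rw [hpow]
          ring
  have hθ : θ ≤ J₁ * ((2 + 2 * σ) * T ^ (n - 1)) + J₂ * (2 * D ^ 2) / T := by
    refine le_of_mul_le_mul_left (h.trans ?_) (by positivity : 0 < T ^ 2)
    have hlast : T ^ 2 * (J₂ * (2 * D ^ 2) / T) = J₂ * (2 * D ^ 2 * T) := by
      field_simp
    rw [mul_add (T ^ 2), hlast]
    have := mul_le_mul_of_nonneg_left hcount hJ₁
    linarith
  have hTpow : T ^ (n - 1) ≤ M ^ (n - 1) * P ^ (n - 1) := by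
    rw [← mul_pow]
    gcongr
  refine hθ.trans ?_
  rw [mul_assoc (2 + 2 * σ)]
  gcongr

set_option maxHeartbeats 1000000 in
/-- Lemma 8.2: for 1 < Q ≤ X^{(k-2)/(k-1)} and a set 𝒬 ⊆ (2^{-k}Q, Q] of naturals
coprime to k with card(𝒬) ≫ Q (log Q)^{-k}, one has
Θ_{s,k}(𝒬) ≤ C (X/Q)^{2s-(k²-k+2)/2+ε} ((X/Q)^{η(s,k)-1} + (X/Q)^{η(s,k-1)}). -/
theorem lemma8_2 (k s : ℕ) (hk : 3 ≤ k) (c₀ ε : ℝ) (hc₀ : 0 < c₀) (hε : 0 < ε) :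
    ∃ C : ℝ, 0 < C ∧ ∃ X₀ : ℝ, ∀ X : ℝ, X₀ ≤ X →
    ∀ Q : ℝ, 1 < Q → Q ≤ X ^ (((k:ℝ) - 2)/((k:ℝ) - 1)) →
    ∀ 𝒬 : Finset ℕ,
      (∀ q ∈ 𝒬, (2:ℝ) ^ (-(k:ℝ)) * Q < (q:ℝ) ∧ (q:ℝ) ≤ Q ∧ Nat.Coprime q k) →
      c₀ * Q * (Real.log Q) ^ (-(k:ℝ)) ≤ (𝒬.card : ℝ) →
      (ThetaSum s k X 𝒬 : ℝ) ≤
        C * (X/Q) ^ (2*(s:ℝ) - ((k:ℝ)^2 - (k:ℝ) + 2)/2 + ε) *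
          ((X/Q) ^ (etaExp s k - 1) + (X/Q) ^ (etaExp s (k-1))) := by
  obtain ⟨n, rfl⟩ : ∃ n, k = n + 1 := ⟨k - 1, by omega⟩
  have hn : 2 ≤ n := by omega
  rw [Nat.add_sub_cancel]
  have hcast : ((n + 1 : ℕ) : ℝ) = n + 1 := by push_cast; rfl
  have hn0 : (0 : ℝ) < n := by exact_mod_cast (by omega : 0 < n)
  obtain ⟨C₁, X₁, hC₁, hJ₁⟩ := exists_Jcount_le_rpow_etaExp s (n + 1) (ε / 2) (half_pos hε)
  obtain ⟨C₂, X₂, hC₂, hJ₂⟩ := exists_Jcount_le_rpow_etaExp s n (ε / 2) (half_pos hε)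
  set δ : ℝ := ε / (4 * ((n : ℝ) + 1)) with hδ
  obtain ⟨C₃, hC₃, hdiv⟩ := exists_card_divisors_le_rpow δ (by positivity)
  set e₁ : ℝ := 2 * (s : ℝ) - ((n + 1 : ℕ) : ℝ) * (((n + 1 : ℕ) : ℝ) + 1) / 2 +
    etaExp s (n + 1) + ε / 2 with he₁
  set e₂ : ℝ := 2 * (s : ℝ) - (n : ℝ) * ((n : ℝ) + 1) / 2 + etaExp s n + ε / 2 with he₂
  set E : ℝ := 2 * (s : ℝ) - (((n + 1 : ℕ) : ℝ) ^ 2 - ((n + 1 : ℕ) : ℝ) + 2) / 2 + ε with hE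
  set M : ℝ := 3 * 2 ^ (n + 2) with hM
  set K₁ : ℝ := C₁ * M ^ |e₁| * ((2 + 2 ^ (n + 2) * s) * M ^ (n - 1)) with hK₁
  set K₂ : ℝ := C₂ * M ^ |e₂| * (2 * (C₃ * (s * M ^ (n + 1)) ^ δ) ^ 2) with hK₂
  have hK₁0 : 0 < K₁ := by positivity
  have hK₂0 : 0 ≤ K₂ := by positivity
  have hM0 : 0 < M := by positivity
  clear_value e₁ e₂ E M K₁ K₂
  set Y : ℝ := max (max X₁ X₂) 1 with hY
  refine ⟨K₁ + K₂, by positivity, Y ^ n, fun X hX Q hQ1 hQX 𝒬 h𝒬 _ => ?_⟩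
  have hY1 : 1 ≤ Y := le_max_right _ _
  have hX1 : 1 ≤ X := (one_le_pow₀ hY1).trans hX
  have hX0 : 0 < X := by linarith
  have hQ0 : 0 < Q := by linarith
  set P : ℝ := X / Q with hP
  have hXP : X ^ (1 / (n : ℝ)) ≤ P := by
    rw [hP, le_div_iff₀ hQ0]
    calc X ^ (1 / (n : ℝ)) * Q ≤
          X ^ (1 / (n : ℝ)) * X ^ ((((n + 1 : ℕ) : ℝ) - 2) / (((n + 1 : ℕ) : ℝ) - 1)) := by gcongr
      _ = X := by
          rw [← Real.rpow_add hX0]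
          have : 1 / (n : ℝ) + (((n + 1 : ℕ) : ℝ) - 2) / (((n + 1 : ℕ) : ℝ) - 1) = 1 := by
            rw [hcast, add_sub_cancel_right]
            field_simp
            ring
          rw [this, Real.rpow_one]
  have hYP : Y ≤ P := by
    refine le_trans ?_ hXP
    calc Y = (Y ^ n) ^ (1 / (n : ℝ)) := by
          rw [one_div, Real.pow_rpow_inv_natCast (by linarith) (by omega)]
      _ ≤ X ^ (1 / (n : ℝ)) := by gcongr
  have hP1 : 1 ≤ P := hY1.trans hYP
  have hP0 : 0 < P := by linarith
  have hQP : Q ≤ P ^ (n - 1) := by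
    refine hQX.trans (le_trans (le_of_eq ?_) (pow_le_pow_left₀ (by positivity) hXP (n - 1)))
    rw [← Real.rpow_natCast, ← Real.rpow_mul hX0.le, hcast, Nat.cast_sub (by omega : 1 ≤ n)]
    congr 1
    rw [add_sub_cancel_right]
    push_cast
    ring
  set T : ℕ := ⌈2 ^ (n + 1) * P⌉₊ with hT
  have hTge : 2 ^ (n + 1) * P ≤ T := Nat.le_ceil _
  have h2pow : (1 : ℝ) ≤ 2 ^ (n + 1) := one_le_pow₀ one_le_two
  have hPT : P ≤ T := by nlinarith
  have hT1 : (1 : ℝ) ≤ T := hP1.trans hPT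
  have hT0 : (0 : ℝ) < T := by linarith
  have hTle : (T : ℝ) ≤ 2 ^ (n + 2) * P := by
    have hlt : (T : ℝ) < 2 ^ (n + 1) * P + 1 := Nat.ceil_lt_add_one (by positivity)
    have hone : 1 ≤ 2 ^ (n + 1) * P := by nlinarith
    have : (2 : ℝ) ^ (n + 2) * P = 2 ^ (n + 1) * P + 2 ^ (n + 1) * P := by ring
    linarith
  have hMP : M * P = 3 * (2 ^ (n + 2) * P) := by rw [hM, mul_assoc]
  have hTM : (T : ℝ) ≤ M * P := by linarith
  have hR : (((3 * T : ℕ) : ℝ)) = 3 * T := by push_cast; rfl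
  have hPR : P ≤ ((3 * T : ℕ) : ℝ) := by rw [hR]; linarith
  have hRM : ((3 * T : ℕ) : ℝ) ≤ M * P := by
    rw [hR]
    linarith
  have hq : ∀ q ∈ 𝒬, Q < 2 ^ (n + 1) * q := by
    intro q hq
    have h := (h𝒬 q hq).1
    rw [Real.rpow_neg two_pos.le, Real.rpow_natCast, inv_mul_lt_iff₀ (by positivity)] at h
    exact h
  have hqpos : ∀ q ∈ 𝒬, 0 < q := by
    intro q hq'
    have h : (0 : ℝ) < 2 ^ (n + 1) * q := hQ0.trans (hq q hq')
    exact_mod_cast pos_of_mul_pos_right h (by positivity)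
  set H : ℕ := ⌊s * (T : ℝ) ^ n * 2 ^ (n + 1) / Q⌋₊ with hH
  have hHle : H * Q ≤ s * (T : ℝ) ^ n * 2 ^ (n + 1) := by
    rw [← le_div_iff₀ hQ0]
    exact Nat.floor_le (by positivity)
  set D : ℕ := ⌊C₃ * (s * (M * P) ^ (n + 1)) ^ δ⌋₊ with hD
  have hDle : (D : ℝ) ≤ C₃ * (s * (M * P) ^ (n + 1)) ^ δ := Nat.floor_le (by positivity)
  have hcard : (𝒬.card : ℝ) ≤ Q := by
    have hsub : 𝒬 ⊆ Finset.Icc 1 ⌊Q⌋₊ := fun q hq' =>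
      Finset.mem_Icc.2 ⟨hqpos q hq', Nat.le_floor (h𝒬 q hq').2.1⟩
    have hc := Finset.card_le_card hsub
    rw [Nat.card_Icc, Nat.add_sub_cancel] at hc
    exact (Nat.cast_le.2 hc).trans (Nat.floor_le hQ0.le)
  have hmain := sq_mul_ThetaSum_le (s := s) (T := T) (H := H) (D := D) (X := X) hn
    (by exact_mod_cast hT0) 𝒬 hqpos (fun q hq' => (h𝒬 q hq').2.2)
    (fun q hq' => by
      have hq0 : (0 : ℝ) < q := by exact_mod_cast hqpos q hq'
      refine le_trans ?_ hTge
      rw [hP, div_le_iff₀ hq0]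
      have hXQ : X = X / Q * Q := (div_mul_cancel₀ _ hQ0.ne').symm
      calc X = X / Q * Q := hXQ
        _ ≤ X / Q * (2 ^ (n + 1) * q) := by gcongr; exact (hq q hq').le
        _ = 2 ^ (n + 1) * (X / Q) * q := by ring)
    (fun q hq' => by
      have hfl : s * (T : ℝ) ^ n * 2 ^ (n + 1) < (H + 1) * Q :=
        (div_lt_iff₀ hQ0).1 (Nat.lt_floor_add_one _)
      have hlt : (2 : ℝ) ^ (n + 1) * (s * (T : ℝ) ^ n) < 2 ^ (n + 1) * (q * (H + 1)) := by
        have : ((H : ℝ) + 1) * Q ≤ (H + 1) * (2 ^ (n + 1) * q) := by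
          gcongr
          exact (hq q hq').le
        linarith
      exact_mod_cast lt_of_mul_lt_mul_left hlt (by positivity))
    (fun m hm hmle => by
      refine Nat.le_floor ((hdiv m hm).trans ?_)
      gcongr
      calc (m : ℝ) ≤ ((s * (3 * T) ^ (n + 1) : ℕ) : ℝ) := by exact_mod_cast hmle
        _ = s * ((3 * T : ℕ) : ℝ) ^ (n + 1) := by push_cast; ring
        _ ≤ s * (M * P) ^ (n + 1) := by gcongr)
  have hJ₁' : (Jcount s (n + 1) (3 * T : ℕ) : ℝ) ≤ C₁ * M ^ |e₁| * P ^ e₁ := by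
    refine (hJ₁ _ (((le_max_left _ _).trans (le_max_left _ _)).trans (hYP.trans hPR))).trans ?_
    rw [mul_assoc]
    exact mul_le_mul_of_nonneg_left (rpow_le_mul_rpow_of_le_mul hP0 hPR hRM e₁) hC₁.le
  have hJ₂' : (Jcount s n (3 * T : ℕ) : ℝ) ≤ C₂ * M ^ |e₂| * P ^ e₂ := by
    refine (hJ₂ _ (((le_max_right _ _).trans (le_max_left _ _)).trans (hYP.trans hPR))).trans ?_
    rw [mul_assoc]
    exact mul_le_mul_of_nonneg_left (rpow_le_mul_rpow_of_le_mul hP0 hPR hRM e₂) hC₂.le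
  have hθ := le_add_of_sq_mul_le (n := n) (σ := s * 2 ^ (n + 1)) (D := D)
    (θ := ThetaSum s (n + 1) X 𝒬) (J₁ := Jcount s (n + 1) (3 * T : ℕ))
    (J₂ := Jcount s n (3 * T : ℕ)) (by omega) hP0 hPT hTM hT1 (Nat.cast_nonneg H)
    (by positivity) hcard (hHle.trans_eq (by ring)) hQP (Nat.cast_nonneg _)
    (Nat.cast_nonneg _) (by exact_mod_cast hmain)
  have hfirst : (Jcount s (n + 1) (3 * T : ℕ) : ℝ) *
      ((2 + 2 * (s * 2 ^ (n + 1))) * M ^ (n - 1) * P ^ (n - 1)) ≤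
        K₁ * (P ^ E * P ^ (etaExp s (n + 1) - 1)) := by
    calc _ ≤ C₁ * M ^ |e₁| * P ^ e₁ *
          ((2 + 2 * (s * 2 ^ (n + 1))) * M ^ (n - 1) * P ^ (n - 1)) := by gcongr
      _ = K₁ * (P ^ e₁ * P ^ (n - 1)) := by
          rw [hK₁]
          ring
      _ ≤ K₁ * (P ^ E * P ^ (etaExp s (n + 1) - 1)) := by
          rw [← Real.rpow_natCast, ← Real.rpow_add hP0, ← Real.rpow_add hP0]
          gcongr K₁ * ?_
          refine Real.rpow_le_rpow_of_exponent_le hP1 ?_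
          rw [he₁, hE, hcast, Nat.cast_sub (by omega : 1 ≤ n)]
          push_cast
          linarith
  have hsecond : (Jcount s n (3 * T : ℕ) : ℝ) * (2 * (D : ℝ) ^ 2) / P ≤
      K₂ * (P ^ E * P ^ (etaExp s n)) := by
    have hpow : ((s : ℝ) * (M * P) ^ (n + 1)) ^ δ = (s * M ^ (n + 1)) ^ δ * P ^ (ε / 4) := by
      rw [mul_pow, ← mul_assoc, Real.mul_rpow (by positivity) (by positivity),
        ← Real.rpow_natCast P, ← Real.rpow_mul hP0.le]
      congr 2
      rw [hδ, hcast]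
      field_simp
    calc _ ≤ C₂ * M ^ |e₂| * P ^ e₂ * (2 * (C₃ * (s * (M * P) ^ (n + 1)) ^ δ) ^ 2) / P := by gcongr
      _ = K₂ * (P ^ e₂ * (P ^ (ε / 4) * P ^ (ε / 4)) * P⁻¹) := by
          rw [hK₂, hpow]
          ring
      _ = K₂ * (P ^ E * P ^ (etaExp s n)) := by
          rw [← Real.rpow_neg_one P, ← Real.rpow_add hP0, ← Real.rpow_add hP0,
            ← Real.rpow_add hP0, ← Real.rpow_add hP0]
          congr 2
          rw [he₂, hE, hcast]
          ring
  have hA : 0 ≤ P ^ E * P ^ (etaExp s (n + 1) - 1) := by positivity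
  have hB : 0 ≤ P ^ E * P ^ (etaExp s n) := by positivity
  calc (ThetaSum s (n + 1) X 𝒬 : ℝ)
      ≤ K₁ * (P ^ E * P ^ (etaExp s (n + 1) - 1)) + K₂ * (P ^ E * P ^ (etaExp s n)) :=
        hθ.trans (add_le_add hfirst hsecond)
    _ ≤ (K₁ + K₂) * P ^ E * (P ^ (etaExp s (n + 1) - 1) + P ^ (etaExp s n)) := by
        nlinarith [mul_nonneg hK₁0.le hB, mul_nonneg hK₂0 hA]
end
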